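/- Every planar simple graph with maximum degree at most 8 on n ≥ 3 vertices admits a planar octilinear drawing whose total number of bends is at most 4n − 10. -/

import Mathlib

/-!
The drawing is built from bottom to top, with each vertex on a level of its own. The combinatorial
input is a *sweep* (`Run`): an order of the vertices together with the left-to-right sequence of edges
crossing each level, such that the edges entering the next vertex are consecutive. Given a sweep, an
edge is drawn as a long vertical segment, joined to both its endvertices by short stubs. At a vertex
with `i` entering and `o` leaving edges one entering and one leaving edge are drawn straight, and the
other edges use the remaining ports with one bend each. This gives `(i - 1) + (o - 1)` bends
(truncated subtraction), and one more if `i + o = 8` and all edges enter or all leave (`cst`,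
`Layout`, `exists_layout`, `Run.exists_drawing`).

*Graphs without separating vertices.* For every edge `st` there is an `st`-order, in which each vertex
other than `s` and `t` has an earlier and a later neighbour (`TwoConn.exists_bipolar`, by adding ears).
Such an order of a planar graph is a sweep (`Bipolar.run`). As every inner vertex `v` costs
`deg v - 2`, and `s` and `t` cost at most `deg`, the total cost is at most `2m - 2n + 4 ≤ 4n - 8`
by the edge bound `m ≤ 3n - 6` (`edge_bound`). Two more bends are saved by choosing `s` of degree at
most `5` and drawing the edge `st` separately with two bends, leaving `s` to the west, passing around
the drawing and reaching `t` from the north (`OctiDrawing.addEdge`, `TwoConn.exists_drawing`): then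
`s` and `t` cost `deg - 2` each, so that the total is `2m - 2n + 2 ≤ 4n - 10`.

*Graphs with a separating vertex `x`.* The sweep of one part, starting at `x`, is inserted right after
`x` into the sweep of the other part, which costs two additional bends (`Run.glue`, `HasSweep.glue`).
By induction every planar graph with at least two vertices can be swept from any of its vertices at
cost `4n - 8` (`hasSweep`), and a single gluing step yields
`(4n₁ - 8) + (4n₂ - 8) + 2 = 4n - 10` with `n₁ + n₂ = n + 1`.

*Using planarity.* The segments of a planar polyline drawing can be swept by a line in a general
direction (`NonCrossing.exists_run`). Such a sweep defines a rotation system in which every even set of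
edges separates the faces into two classes (`Run.exists_rot`, `Cert`, `GraphPlanar.cert`); no
topology is needed. By linear algebra over `ZMod 2` there are then at least `m - n + 2` faces
(`euler`). For bipolar heights every face has a top, every vertex other than `s` and `t` has a turn
from edges going up to edges going down in its rotation, and there are `m` tops and turns in total.
Hence all of them are unique (`bipolar_unique`), and following the faces across a level yields the
sweep.
-/

/-!
Common definitions: polylines, octilinear drawings, planarity, triconnectivity.
-/

/-- A polyline: a sequence of `len + 1` points `pt 0, pt 1, …, pt len`,
consisting of `len ≥ 1` segments. (Values of `pt` beyond `len` are irrelevant.) -/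
structure Polyline where
  len : ℕ
  len_pos : 1 ≤ len
  pt : ℕ → ℝ × ℝ

namespace Polyline

/-- The number of bends of a polyline (its interior points `pt 1, …, pt (len-1)`). -/
def bends (P : Polyline) : ℕ := P.len - 1

/-- Piecewise-linear parametrization of the polyline on the interval `[0, len]`. -/
noncomputable def param (P : Polyline) (s : ℝ) : ℝ × ℝ :=
  P.pt ⌊s⌋.toNat + (s - (⌊s⌋.toNat : ℝ)) • (P.pt (⌊s⌋.toNat + 1) - P.pt ⌊s⌋.toNat)

/-- The image (trace) of the polyline in the plane. -/
noncomputable def image (P : Polyline) : Set (ℝ × ℝ) :=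
  P.param '' Set.Icc 0 (P.len : ℝ)

/-- The polyline is a simple curve. -/
def Simple (P : Polyline) : Prop :=
  Set.InjOn P.param (Set.Icc 0 (P.len : ℝ))

/-- Every segment is nondegenerate, and no two consecutive segments are collinear. -/
def Proper (P : Polyline) : Prop :=
  (∀ i < P.len, P.pt i ≠ P.pt (i + 1)) ∧
  (∀ i, i + 1 < P.len → ¬ Collinear ℝ ({P.pt i, P.pt (i + 1), P.pt (i + 2)} : Set (ℝ × ℝ)))

/-- The segment from `a` to `b` is horizontal, vertical, or diagonal at `45°`. -/
def OctiSeg (a b : ℝ × ℝ) : Prop :=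
  b.2 - a.2 = 0 ∨ b.1 - a.1 = 0 ∨ b.2 - a.2 = b.1 - a.1 ∨ b.2 - a.2 = -(b.1 - a.1)

/-- The polyline is octilinear: proper, with all segments in octilinear directions. -/
def Octilinear (P : Polyline) : Prop :=
  P.Proper ∧ ∀ i < P.len, OctiSeg (P.pt i) (P.pt (i + 1))

end Polyline

/-- Embedding of the integer grid into the real plane. -/
def toR (p : ℤ × ℤ) : ℝ × ℝ := ((p.1 : ℝ), (p.2 : ℝ))

/-- A polyline drawing of a simple graph `G` in the plane:
an injective placement of the vertices and, for each edge, a polyline whose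
endpoints are the points of the edge's endvertices, with nondegenerate segments
and no two consecutive segments collinear. -/
structure PolyDrawing {V : Type*} (G : SimpleGraph V) where
  pos : V → ℝ × ℝ
  inj : Function.Injective pos
  poly : Sym2 V → Polyline
  ends : ∀ u v, G.Adj u v →
    ({(poly s(u, v)).pt 0, (poly s(u, v)).pt (poly s(u, v)).len} : Set (ℝ × ℝ)) =
      {pos u, pos v}
  proper : ∀ e ∈ G.edgeSet, (poly e).Proper

/-- A polyline drawing is planar: every edge-polyline is a simple curve meeting the
vertex points exactly in its two endpoints, and polylines of distinct edges intersect
only in images of common endvertices. -/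
def PolyDrawing.IsPlanar {V : Type*} {G : SimpleGraph V} (D : PolyDrawing G) : Prop :=
  (∀ e ∈ G.edgeSet, (D.poly e).Simple) ∧
  (∀ u v, G.Adj u v →
    (D.poly s(u, v)).image ∩ Set.range D.pos = {D.pos u, D.pos v}) ∧
  (∀ e ∈ G.edgeSet, ∀ e' ∈ G.edgeSet, e ≠ e' →
    (D.poly e).image ∩ (D.poly e').image ⊆ D.pos '' {w | w ∈ e ∧ w ∈ e'})

/-- A simple graph is planar if it admits a planar polyline drawing in `ℝ²`. -/
def GraphPlanar {V : Type*} (G : SimpleGraph V) : Prop :=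
  ∃ D : PolyDrawing G, D.IsPlanar

/-- An octilinear drawing of a simple graph `G`: vertices are placed injectively on the
integer grid and each edge is drawn as an octilinear polyline between its endvertices. -/
structure OctiDrawing {V : Type*} (G : SimpleGraph V) where
  pos : V → ℤ × ℤ
  inj : Function.Injective pos
  poly : Sym2 V → Polyline
  ends : ∀ u v, G.Adj u v →
    ({(poly s(u, v)).pt 0, (poly s(u, v)).pt (poly s(u, v)).len} : Set (ℝ × ℝ)) =
      {toR (pos u), toR (pos v)}
  octi : ∀ e ∈ G.edgeSet, (poly e).Octilinear

/-- An octilinear drawing is planar: every edge-polyline is a simple curve meeting the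
vertex points exactly in its two endpoints, and polylines of distinct edges intersect
only in images of common endvertices. -/
def OctiDrawing.IsPlanar {V : Type*} {G : SimpleGraph V} (D : OctiDrawing G) : Prop :=
  (∀ e ∈ G.edgeSet, (D.poly e).Simple) ∧
  (∀ u v, G.Adj u v →
    (D.poly s(u, v)).image ∩ Set.range (fun w => toR (D.pos w)) =
      {toR (D.pos u), toR (D.pos v)}) ∧
  (∀ e ∈ G.edgeSet, ∀ e' ∈ G.edgeSet, e ≠ e' →
    (D.poly e).image ∩ (D.poly e').image ⊆
      (fun w => toR (D.pos w)) '' {w | w ∈ e ∧ w ∈ e'})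

/-- The total number of bends of an octilinear drawing. -/
noncomputable def OctiDrawing.totalBends {V : Type*} [Fintype V] {G : SimpleGraph V}
    (D : OctiDrawing G) : ℕ :=
  ∑ e ∈ G.edgeSet.toFinite.toFinset, (D.poly e).bends

/-- The union of the images of the polylines of a set `S` of edges. -/
noncomputable def edgesImage {V : Type*} {G : SimpleGraph V} (D : OctiDrawing G)
    (S : Set (Sym2 V)) : Set (ℝ × ℝ) :=
  ⋃ e ∈ S, (D.poly e).image

/-- The interior (in the drawing `D`) of the closed curve formed by the edges in `S`:
the union of the bounded connected components of the complement of the curve. -/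
noncomputable def interiorOf {V : Type*} {G : SimpleGraph V} (D : OctiDrawing G)
    (S : Set (Sym2 V)) : Set (ℝ × ℝ) :=
  {z | z ∉ edgesImage D S ∧ Bornology.IsBounded (connectedComponentIn (edgesImage D S)ᶜ z)}

/-- A graph is triconnected if it has at least `4` vertices and deleting
any at most `2` vertices leaves it connected. -/
def Triconnected {V : Type*} [Fintype V] (G : SimpleGraph V) : Prop :=
  4 ≤ Fintype.card V ∧ ∀ S : Set V, S.ncard ≤ 2 → (G.induce Sᶜ).Connected

/-- The maximum degree of `G` is at most `k`. -/
def MaxDegLE {V : Type*} (G : SimpleGraph V) (k : ℕ) : Prop :=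
  ∀ v, (G.neighborSet v).ncard ≤ k

/-! ### Polylines and lists of points -/

namespace Polyline

/-- On the `i`-th parameter interval the parametrization is affine, endpoints included. -/
lemma param_eq (P : Polyline) (i : ℕ) (s : ℝ) (h0 : (i : ℝ) ≤ s) (h1 : s ≤ i + 1) :
    P.param s = P.pt i + (s - i) • (P.pt (i + 1) - P.pt i) := by
  rcases h1.lt_or_eq with h | h
  · have : ⌊s⌋ = (i : ℤ) := by
      rw [Int.floor_eq_iff]; exact ⟨by exact_mod_cast h0, by exact_mod_cast h⟩
    simp [param, this]
  · have : ⌊s⌋ = ((i + 1 : ℕ) : ℤ) := by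
      rw [Int.floor_eq_iff]; subst h; push_cast; exact ⟨le_refl _, by linarith⟩
    subst h
    simp [param, this]

lemma exists_index (P : Polyline) (s : ℝ) (hs : s ∈ Set.Icc (0 : ℝ) P.len) :
    ∃ i < P.len, (i : ℝ) ≤ s ∧ s ≤ i + 1 := by
  have hp := P.len_pos
  rcases hs.2.lt_or_eq with h | h
  · refine ⟨⌊s⌋₊, ?_, Nat.floor_le hs.1, (Nat.lt_floor_add_one s).le⟩
    exact (Nat.floor_lt hs.1).2 h
  · refine ⟨P.len - 1, by omega, ?_, ?_⟩
    · rw [h]; exact_mod_cast Nat.sub_le _ _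
    · rw [h, Nat.cast_sub hp]; simp

lemma mem_segment_iff (P : Polyline) (i : ℕ) (z : ℝ × ℝ) :
    z ∈ segment ℝ (P.pt i) (P.pt (i + 1)) ↔ ∃ s : ℝ, (i : ℝ) ≤ s ∧ s ≤ i + 1 ∧ P.param s = z := by
  rw [segment_eq_image']
  constructor
  · rintro ⟨t, ht, rfl⟩
    refine ⟨i + t, by linarith [ht.1], by linarith [ht.2], ?_⟩
    rw [P.param_eq i _ (by linarith [ht.1]) (by linarith [ht.2])]
    simp
  · rintro ⟨s, h0, h1, rfl⟩
    exact ⟨s - i, ⟨by linarith, by linarith⟩, (P.param_eq i s h0 h1).symm⟩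

lemma mem_image_iff (P : Polyline) (z : ℝ × ℝ) :
    z ∈ P.image ↔ ∃ i < P.len, z ∈ segment ℝ (P.pt i) (P.pt (i + 1)) := by
  constructor
  · rintro ⟨s, hs, rfl⟩
    obtain ⟨i, hi, h0, h1⟩ := P.exists_index s hs
    exact ⟨i, hi, (P.mem_segment_iff i _).2 ⟨s, h0, h1, rfl⟩⟩
  · rintro ⟨i, hi, h⟩
    obtain ⟨s, h0, h1, rfl⟩ := (P.mem_segment_iff i _).1 h
    refine ⟨s, ⟨le_trans (by positivity) h0, h1.trans ?_⟩, rfl⟩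
    exact_mod_cast hi

lemma param_natCast (P : Polyline) (i : ℕ) : P.param i = P.pt i := by
  rw [P.param_eq i i le_rfl (by linarith)]; simp

/-- Two segments of a simple polyline meet at most in a shared endpoint. -/
lemma Simple.segment_inter {P : Polyline} (hP : P.Simple) {i j : ℕ} (hij : i < j) (hj : j < P.len)
    {z : ℝ × ℝ} (hi' : z ∈ segment ℝ (P.pt i) (P.pt (i + 1)))
    (hj' : z ∈ segment ℝ (P.pt j) (P.pt (j + 1))) : j = i + 1 ∧ z = P.pt j := by
  obtain ⟨s, h0, h1, rfl⟩ := (P.mem_segment_iff i _).1 hi'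
  obtain ⟨t, g0, g1, hst⟩ := (P.mem_segment_iff j _).1 hj'
  have hj2 : (j : ℝ) + 1 ≤ P.len := by exact_mod_cast hj
  have hij2 : (i : ℝ) + 1 ≤ j := by exact_mod_cast hij
  have i0 : (0 : ℝ) ≤ i := by positivity
  have hts : t = s := hP ⟨by linarith, by linarith⟩ ⟨by linarith, by linarith⟩ hst
  subst hts
  have hj3 : (j : ℝ) = i + 1 := by linarith
  refine ⟨by exact_mod_cast hj3, ?_⟩
  have : t = j := by linarith
  rw [this, param_natCast]

lemma Simple.of_segments {P : Polyline} (hne : ∀ i < P.len, P.pt i ≠ P.pt (i + 1))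
    (h : ∀ i j, i < j → j < P.len → ∀ z, z ∈ segment ℝ (P.pt i) (P.pt (i + 1)) →
      z ∈ segment ℝ (P.pt j) (P.pt (j + 1)) → j = i + 1 ∧ z = P.pt j) : P.Simple := by
  have aff : ∀ i < P.len, ∀ s t : ℝ, (i : ℝ) ≤ s → s ≤ i + 1 → (i : ℝ) ≤ t → t ≤ i + 1 →
      P.param s = P.param t → s = t := by
    intro i hi s t h1 h2 h3 h4 hst
    rw [P.param_eq i s h1 h2, P.param_eq i t h3 h4] at hst
    have h5 := sub_ne_zero.2 (hne i hi).symm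
    have h6 := smul_left_injective ℝ h5 (add_left_cancel hst)
    linarith
  have key : ∀ i j, i < j → j < P.len → ∀ s t : ℝ, (i : ℝ) ≤ s → s ≤ i + 1 → (j : ℝ) ≤ t →
      t ≤ j + 1 → P.param s = P.param t → s = t := by
    intro i j hij hj s t h1 h2 h3 h4 hst
    obtain ⟨e1, e2⟩ := h i j hij hj _ ((P.mem_segment_iff i _).2 ⟨s, h1, h2, rfl⟩)
      ((P.mem_segment_iff j _).2 ⟨t, h3, h4, hst.symm⟩)
    have e3 : s = j := aff i (by omega) s j h1 h2 (by rw [e1]; push_cast; linarith)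
      (by rw [e1]; push_cast; linarith) (by rw [e2, param_natCast])
    have e4 : t = j := aff j hj t j h3 h4 le_rfl (by linarith) (by rw [← hst, e2, param_natCast])
    rw [e3, e4]
  intro s hs t ht hst
  obtain ⟨i, hi, h1, h2⟩ := P.exists_index s hs
  obtain ⟨j, hj, h3, h4⟩ := P.exists_index t ht
  rcases lt_trichotomy i j with hij | hij | hij
  · exact key i j hij hj s t h1 h2 h3 h4 hst
  · subst hij; exact aff i hi s t h1 h2 h3 h4 hst
  · exact (key j i hij hi t s h3 h4 h1 h2 hst.symm).symm

end Polyline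

/-- The union of the segments between consecutive points of a list. -/
def pathImage : List (ℝ × ℝ) → Set (ℝ × ℝ)
  | [] => ∅
  | [a] => {a}
  | a :: b :: l => segment ℝ a b ∪ pathImage (b :: l)

/-- The list of points traces a simple curve. -/
def ListSimple : List (ℝ × ℝ) → Prop
  | [] => True
  | [_] => True
  | a :: b :: l => a ≠ b ∧ segment ℝ a b ∩ pathImage (b :: l) ⊆ {b} ∧ ListSimple (b :: l)

/-- The polyline through the points of a list. -/
noncomputable def polyOf (l : List (ℝ × ℝ)) (h : 2 ≤ l.length) : Polyline :=
  ⟨l.length - 1, by omega, fun i => l.getD i 0⟩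

lemma mem_pathImage_iff : ∀ (l : List (ℝ × ℝ)) (_ : 2 ≤ l.length) (z : ℝ × ℝ),
    z ∈ pathImage l ↔ ∃ i < l.length - 1, z ∈ segment ℝ (l.getD i 0) (l.getD (i + 1) 0)
  | [], h, _ => by simp at h
  | [_], h, _ => by simp at h
  | [a, b], _, z => by
      have hb : b ∈ segment ℝ a b := right_mem_segment ℝ a b
      simp only [pathImage, Set.union_singleton, Set.mem_insert_iff]
      constructor
      · rintro (rfl | h)
        · exact ⟨0, by simp, by simpa using hb⟩
        · exact ⟨0, by simp, by simpa using h⟩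
      · rintro ⟨i, hi, h⟩
        simp at hi
        subst hi
        right; simpa using h
  | a :: b :: c :: l, _, z => by
      have ih := mem_pathImage_iff (b :: c :: l) (by simp) z
      rw [pathImage, Set.mem_union, ih]
      constructor
      · rintro (h | ⟨i, hi, h⟩)
        · exact ⟨0, by simp, by simpa using h⟩
        · exact ⟨i + 1, by simp at hi ⊢; omega, by simpa using h⟩
      · rintro ⟨i, hi, h⟩
        cases i with
        | zero => left; simpa using h
        | succ i => right; exact ⟨i, by simp at hi ⊢; omega, by simpa using h⟩

lemma image_polyOf (l : List (ℝ × ℝ)) (h : 2 ≤ l.length) : (polyOf l h).image = pathImage l := by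
  ext z
  rw [mem_pathImage_iff l h, Polyline.mem_image_iff]
  rfl

lemma ListSimple.ne : ∀ (l : List (ℝ × ℝ)), ListSimple l → ∀ i, i + 1 < l.length →
    l.getD i 0 ≠ l.getD (i + 1) 0
  | [], _, i, hi => by simp at hi
  | [_], _, i, hi => by simp at hi
  | a :: b :: l, h, i, hi => by
      cases i with
      | zero => simpa using h.1
      | succ i =>
        have := ListSimple.ne (b :: l) h.2.2 i (by simp at hi ⊢; omega)
        simpa using this

lemma ListSimple.seg : ∀ (l : List (ℝ × ℝ)), ListSimple l → ∀ i j, i < j → j + 1 < l.length →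
    ∀ z, z ∈ segment ℝ (l.getD i 0) (l.getD (i + 1) 0) →
    z ∈ segment ℝ (l.getD j 0) (l.getD (j + 1) 0) → j = i + 1 ∧ z = l.getD j 0
  | [], _, i, j, _, hi, _, _, _ => by simp at hi
  | [_], _, i, j, _, hi, _, _, _ => by simp at hi
  | a :: b :: l, h, i, j, hij, hj, z, h1, h2 => by
      obtain ⟨j, rfl⟩ : ∃ k, j = k + 1 := ⟨j - 1, by omega⟩
      have hlen : 2 ≤ (b :: l).length := by simp at hj ⊢; omega
      cases i with
      | succ i =>
        have := ListSimple.seg (b :: l) h.2.2 i j (by omega) (by simp at hj ⊢; omega) z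
          (by simpa using h1) (by simpa using h2)
        exact ⟨by omega, by simpa using this.2⟩
      | zero =>
        have hz : z = b := by
          refine h.2.1 ⟨by simpa using h1, ?_⟩
          rw [mem_pathImage_iff _ hlen]
          exact ⟨j, by simp at hj ⊢; omega, by simpa using h2⟩
        cases j with
        | zero => exact ⟨rfl, by simpa using hz⟩
        | succ j =>
          exfalso
          have h3 := ListSimple.seg (b :: l) h.2.2 0 (j + 1) (by omega) (by simp at hj ⊢; omega) b
            (by simpa using left_mem_segment ℝ _ _) (by rw [← hz]; simpa using h2)
          have h4 := ListSimple.ne (b :: l) h.2.2 0 (by simp at hj ⊢; omega)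
          apply h4
          have h5 : j + 1 = 1 := h3.1
          have h6 := h3.2
          rw [h5] at h6
          simpa using h6

lemma simple_polyOf (l : List (ℝ × ℝ)) (h : 2 ≤ l.length) (hs : ListSimple l) :
    (polyOf l h).Simple := by
  apply Polyline.Simple.of_segments
  · intro i hi
    exact ListSimple.ne l hs i (by simp [polyOf] at hi; omega)
  · intro i j hij hj z h1 h2
    exact ListSimple.seg l hs i j hij (by simp [polyOf] at hj; omega) z h1 h2

lemma getLast_mem_pathImage : ∀ (l : List (ℝ × ℝ)) (a : ℝ × ℝ), a ∈ pathImage (l ++ [a])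
  | [], a => by simp [pathImage]
  | [b], a => by simp [pathImage]
  | b :: c :: l, a => by
      have := getLast_mem_pathImage (c :: l) a
      simp only [List.cons_append, pathImage] at this ⊢
      exact Or.inr this

/-- Appending two paths inserts the connecting segment. -/
lemma pathImage_append : ∀ (l m : List (ℝ × ℝ)) (a b : ℝ × ℝ),
    pathImage (l ++ a :: b :: m) = pathImage (l ++ [a]) ∪ segment ℝ a b ∪ pathImage (b :: m)
  | [], m, a, b => by
      have : a ∈ segment ℝ a b := left_mem_segment ℝ a b
      ext z; simp only [List.nil_append, pathImage, Set.mem_union, Set.mem_singleton_iff]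
      constructor
      · tauto
      · rintro ((rfl | h) | h) <;> tauto
  | [c], m, a, b => by
      have : a ∈ segment ℝ a b := left_mem_segment ℝ a b
      ext z
      simp only [List.cons_append, List.nil_append, pathImage, Set.mem_union, Set.mem_singleton_iff]
      constructor
      · tauto
      · rintro (((h | rfl) | h) | h) <;> tauto
  | c :: d :: l, m, a, b => by
      have := pathImage_append (d :: l) m a b
      simp only [List.cons_append, pathImage] at this ⊢
      rw [this]; simp only [Set.union_assoc]

lemma pathImage_reverse : ∀ l : List (ℝ × ℝ), pathImage l.reverse = pathImage l
  | [] => rfl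
  | [_] => rfl
  | a :: b :: l => by
      have h := pathImage_append l.reverse [] b a
      have ih := pathImage_reverse (b :: l)
      simp only [List.reverse_cons, List.append_assoc, List.cons_append, List.nil_append] at *
      rw [h, ih, segment_symm]
      have : a ∈ segment ℝ a b := left_mem_segment ℝ a b
      have h2 : b ∈ pathImage (b :: l) := by
        rw [← ih]; exact getLast_mem_pathImage _ _
      ext z; simp only [pathImage, Set.mem_union, Set.mem_singleton_iff]
      constructor
      · rintro ((h | h) | rfl) <;> tauto
      · tauto

/-- Concatenation of simple paths that are disjoint except along the connecting segment. -/
lemma ListSimple.append : ∀ (l m : List (ℝ × ℝ)) (a b : ℝ × ℝ), ListSimple (l ++ [a]) →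
    ListSimple (b :: m) → a ≠ b → pathImage (l ++ [a]) ∩ segment ℝ a b ⊆ {a} →
    segment ℝ a b ∩ pathImage (b :: m) ⊆ {b} →
    Disjoint (pathImage (l ++ [a])) (pathImage (b :: m)) → ListSimple (l ++ a :: b :: m)
  | [], m, a, b, _, h2, hab, _, h4, _ => ⟨hab, h4, h2⟩
  | [c], m, a, b, h1, h2, hab, h3, h4, h5 => by
      have hca : c ≠ a := h1.1
      refine ⟨hca, ?_, ⟨hab, h4, h2⟩⟩
      rintro z ⟨hz1, hz2⟩
      have hz3 : z ∈ pathImage ([c] ++ [a]) := Or.inl hz1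
      rcases hz2 with h | h
      · exact h3 ⟨hz3, h⟩
      · exact (Set.disjoint_left.1 h5 hz3 h).elim
  | c :: d :: l, m, a, b, h1, h2, hab, h3, h4, h5 => by
      have hsub : pathImage (d :: l ++ [a]) ⊆ pathImage (c :: d :: l ++ [a]) := by
        intro z hz; exact Or.inr hz
      have ih := ListSimple.append (d :: l) m a b h1.2.2 h2 hab
        (fun z hz => h3 ⟨hsub hz.1, hz.2⟩) h4 (h5.mono_left hsub)
      refine ⟨h1.1, ?_, ih⟩
      rintro z ⟨hz1, hz2⟩
      have hz3 : z ∈ pathImage (c :: d :: l ++ [a]) := Or.inl hz1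
      have e := pathImage_append (d :: l) m a b
      simp only [List.cons_append] at e
      rw [List.append_eq, e] at hz2
      rcases hz2 with (h | h) | h
      · exact h1.2.1 ⟨hz1, h⟩
      · have : z = a := h3 ⟨hz3, h⟩
        subst this
        refine h1.2.1 ⟨hz1, ?_⟩
        exact getLast_mem_pathImage (d :: l) _
      · exact (Set.disjoint_left.1 h5 hz3 h).elim

lemma ListSimple.reverse : ∀ l : List (ℝ × ℝ), ListSimple l → ListSimple l.reverse
  | [], _ => trivial
  | [_], _ => trivial
  | a :: b :: l, h => by
      have ih := ListSimple.reverse (b :: l) h.2.2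
      have hr := pathImage_reverse (b :: l)
      simp only [List.reverse_cons, List.append_assoc, List.cons_append, List.nil_append] at *
      refine ListSimple.append l.reverse [] b a ih trivial h.1.symm ?_ ?_ ?_
      · rw [hr, segment_symm]; intro z hz; exact h.2.1 ⟨hz.2, hz.1⟩
      · intro z hz; simpa [pathImage] using hz.2
      · rw [hr, Set.disjoint_right]
        intro z hz hz2
        simp only [pathImage, Set.mem_singleton_iff] at hz
        subst hz
        exact h.1 (h.2.1 ⟨left_mem_segment ℝ _ _, hz2⟩)

lemma not_collinear_of_det (a b c : ℝ × ℝ)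
    (h : (b.1 - a.1) * (c.2 - b.2) ≠ (b.2 - a.2) * (c.1 - b.1)) :
    ¬ Collinear ℝ ({a, b, c} : Set (ℝ × ℝ)) := by
  intro hc
  obtain ⟨v, hv⟩ := (collinear_iff_of_mem (p₀ := b) (by simp)).1 hc
  obtain ⟨r, hr⟩ := hv a (by simp)
  obtain ⟨t, ht⟩ := hv c (by simp)
  apply h
  have h1 := congrArg Prod.fst hr
  have h2 := congrArg Prod.snd hr
  have h3 := congrArg Prod.fst ht
  have h4 := congrArg Prod.snd ht
  simp at h1 h2 h3 h4
  rw [h1, h2, h3, h4]; ring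

/-! ### From layouts to octilinear drawings -/

/-- Order-theoretic data from which an octilinear drawing is built. The vertex `v` is placed at
abscissa `x v` on the level `h v`; the edge `{v, a}` consists of a vertical segment at abscissa
`X v a` and of two stubs joining this segment to its endvertices; the stub at `v` leaves `v` with
slope `k v a` (measured away from `v`), the values `±2` standing for stubs which leave `v`
vertically and then turn horizontally. -/
structure Layout {V : Type*} (G : SimpleGraph V) (α : Type*) [LinearOrder α] where
  x : V → α
  h : V → ℤ
  X : V → V → α
  k : V → V → ℤ
  h_inj : Function.Injective h
  X_symm : ∀ u v, X u v = X v u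
  /-- An edge passing the level of `v` lies to one side of `v` and of all edges at `v`. -/
  pass : ∀ u w v, G.Adj u w → h u < h v → h v < h w →
    (X u w < x v ∧ ∀ b, G.Adj v b → X u w < X v b) ∨
    (x v < X u w ∧ ∀ b, G.Adj v b → X v b < X u w)
  /-- Two edges at `v` share their abscissa only if one enters and one leaves `v` straight. -/
  sep : ∀ v a b, G.Adj v a → G.Adj v b → a ≠ b → X v a = X v b →
    X v a = x v ∧ ((h a < h v ∧ h v < h b) ∨ (h b < h v ∧ h v < h a))
  /-- Slopes of edges on the same side of `v` are ordered so that nearer edges do not obstruct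
  the stubs of farther ones. -/
  near : ∀ v a b, G.Adj v a → G.Adj v b → a ≠ b →
    ((x v < X v a ∧ X v a < X v b) ∨ (X v b < X v a ∧ X v a < x v)) →
    (h v < h a → k v b < k v a) ∧ (h a < h v → k v a < k v b)
  kcase : ∀ v a, G.Adj v a → X v a ≠ x v →
    (-1 ≤ k v a ∧ k v a ≤ 1) ∨
    (k v a = 2 ∧ x v < X v a ∧ ∀ b, G.Adj v b → h b < h v) ∨
    (k v a = -2 ∧ x v < X v a ∧ ∀ b, G.Adj v b → h v < h b)

namespace Layout

variable {V : Type*} {G : SimpleGraph V} (Λ : Layout G ℝ) (D : ℝ)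

/-- The height of the vertex `v`: levels are `4 * D` apart. -/
noncomputable def y (v : V) : ℝ := 4 * D * Λ.h v

/-- The point of the vertex `v`. -/
noncomputable def P (v : V) : ℝ × ℝ := (Λ.x v, Λ.y D v)

/-- The height at which the stub at `v` of the edge `{v, a}` meets the vertical segment. -/
noncomputable def E (v a : V) : ℝ :=
  if Λ.X v a = Λ.x v then Λ.y D v else if Λ.k v a = 2 then Λ.y D v + D
  else if Λ.k v a = -2 then Λ.y D v - D else Λ.y D v + Λ.k v a * |Λ.X v a - Λ.x v|

/-- The points of the stub at `v` of the edge `{v, a}`, except for its last one. -/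
noncomputable def pre (v a : V) : List (ℝ × ℝ) :=
  if Λ.X v a = Λ.x v then [] else if Λ.k v a = 2 then [Λ.P D v, (Λ.x v, Λ.y D v + D)]
  else if Λ.k v a = -2 then [Λ.P D v, (Λ.x v, Λ.y D v - D)] else [Λ.P D v]

/-- The point at which the stub at `v` of the edge `{v, a}` meets the vertical segment. -/
noncomputable def tip (v a : V) : ℝ × ℝ := (Λ.X v a, Λ.E D v a)

/-- The stub at `v` of the edge `{v, a}`. -/
noncomputable def stub (v a : V) : List (ℝ × ℝ) := Λ.pre D v a ++ [Λ.tip D v a]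

end Layout

lemma mem_seg_iff (a b z : ℝ × ℝ) : z ∈ segment ℝ a b ↔
    ∃ t : ℝ, 0 ≤ t ∧ t ≤ 1 ∧ z.1 = a.1 + t * (b.1 - a.1) ∧ z.2 = a.2 + t * (b.2 - a.2) := by
  rw [segment_eq_image']
  constructor
  · rintro ⟨t, ht, rfl⟩
    exact ⟨t, ht.1, ht.2, by simp, by simp⟩
  · rintro ⟨t, h0, h1, h2, h3⟩
    exact ⟨t, ⟨h0, h1⟩, by ext <;> simp [h2, h3]⟩

lemma mem_vseg {X y1 y2 : ℝ} {z : ℝ × ℝ} (h : y1 ≤ y2) (hz : z ∈ segment ℝ (X, y1) (X, y2)) :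
    z.1 = X ∧ y1 ≤ z.2 ∧ z.2 ≤ y2 := by
  obtain ⟨t, h0, h1, h2, h3⟩ := (mem_seg_iff _ _ _).1 hz
  simp at h2 h3
  exact ⟨h2, by nlinarith, by nlinarith⟩

lemma mem_hseg {y x1 x2 : ℝ} {z : ℝ × ℝ} (h : x1 ≤ x2) (hz : z ∈ segment ℝ (x1, y) (x2, y)) :
    z.2 = y ∧ x1 ≤ z.1 ∧ z.1 ≤ x2 := by
  obtain ⟨t, h0, h1, h2, h3⟩ := (mem_seg_iff _ _ _).1 hz
  simp at h2 h3
  exact ⟨h3, by nlinarith, by nlinarith⟩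

lemma mem_slope {x X y k : ℝ} {z : ℝ × ℝ}
    (hz : z ∈ segment ℝ (x, y) (X, y + k * |X - x|)) :
    ((x ≤ z.1 ∧ z.1 ≤ X) ∨ (X ≤ z.1 ∧ z.1 ≤ x)) ∧ z.2 = y + k * |z.1 - x| := by
  obtain ⟨t, h0, h1, h2, h3⟩ := (mem_seg_iff _ _ _).1 hz
  simp only at h2 h3
  have h4 : z.1 - x = t * (X - x) := by linarith
  refine ⟨?_, ?_⟩
  · rcases le_total x X with h | h
    · left; constructor <;> nlinarith
    · right; constructor <;> nlinarith
  · rw [h4, abs_mul, abs_of_nonneg h0, h3]; ring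

namespace Layout

variable {V : Type*} {G : SimpleGraph V} (Λ : Layout G ℝ) (D : ℝ)

lemma ygap (hD : 0 < D) {u v : V} (h : Λ.h u < Λ.h v) : Λ.y D u + 4 * D ≤ Λ.y D v := by
  have : (Λ.h u : ℝ) + 1 ≤ Λ.h v := by exact_mod_cast h
  unfold y; nlinarith

lemma mem_stub {v a : V} (hva : G.Adj v a) (hD : 0 < D) {z : ℝ × ℝ}
    (hz : z ∈ pathImage (Λ.stub D v a)) :
    (Λ.X v a = Λ.x v ∧ z = Λ.P D v) ∨
    (Λ.X v a ≠ Λ.x v ∧ Λ.k v a ≠ 2 ∧ Λ.k v a ≠ -2 ∧ -1 ≤ Λ.k v a ∧ Λ.k v a ≤ 1 ∧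
      ((Λ.x v ≤ z.1 ∧ z.1 ≤ Λ.X v a) ∨ (Λ.X v a ≤ z.1 ∧ z.1 ≤ Λ.x v)) ∧
      z.2 = Λ.y D v + Λ.k v a * |z.1 - Λ.x v|) ∨
    (Λ.k v a = 2 ∧ Λ.x v < Λ.X v a ∧ (∀ b, G.Adj v b → Λ.h b < Λ.h v) ∧
      ((z.1 = Λ.x v ∧ Λ.y D v ≤ z.2 ∧ z.2 ≤ Λ.y D v + D) ∨
       (z.2 = Λ.y D v + D ∧ Λ.x v ≤ z.1 ∧ z.1 ≤ Λ.X v a))) ∨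
    (Λ.k v a = -2 ∧ Λ.x v < Λ.X v a ∧ (∀ b, G.Adj v b → Λ.h v < Λ.h b) ∧
      ((z.1 = Λ.x v ∧ Λ.y D v - D ≤ z.2 ∧ z.2 ≤ Λ.y D v) ∨
       (z.2 = Λ.y D v - D ∧ Λ.x v ≤ z.1 ∧ z.1 ≤ Λ.X v a))) := by
  unfold stub pre tip E at hz
  by_cases hX : Λ.X v a = Λ.x v
  · left; refine ⟨hX, ?_⟩
    simpa [hX, pathImage, P] using hz
  · right
    rcases Λ.kcase v a hva hX with ⟨h1, h2⟩ | ⟨h1, h2, h3⟩ | ⟨h1, h2, h3⟩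
    · left
      have n1 : Λ.k v a ≠ 2 := by omega
      have n2 : Λ.k v a ≠ -2 := by omega
      simp only [hX, n1, n2, if_false, List.singleton_append, pathImage, P] at hz
      refine ⟨hX, n1, n2, h1, h2, ?_⟩
      rcases hz with hz | hz
      · exact mem_slope hz
      · rw [Set.mem_singleton_iff.1 hz]
        exact mem_slope (right_mem_segment ℝ _ _)
    · right; left
      refine ⟨h1, h2, h3, ?_⟩
      simp only [hX, h1, if_false, if_true, List.cons_append, List.nil_append, pathImage, P] at hz
      rcases hz with hz | hz | hz
      · left; exact mem_vseg (by linarith) hz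
      · right; exact mem_hseg h2.le hz
      · right; rw [Set.mem_singleton_iff.1 hz]; exact ⟨rfl, h2.le, le_rfl⟩
    · right; right
      refine ⟨h1, h2, h3, ?_⟩
      have n2 : Λ.k v a ≠ 2 := by omega
      rw [if_neg hX, if_neg hX, if_neg n2, if_neg n2, if_pos h1, if_pos h1] at hz
      simp only [List.cons_append, List.nil_append, pathImage, P] at hz
      rcases hz with hz | hz | hz
      · left; rw [segment_symm] at hz; exact mem_vseg (by linarith) hz
      · right; exact mem_hseg h2.le hz
      · right; rw [Set.mem_singleton_iff.1 hz]; exact ⟨rfl, h2.le, le_rfl⟩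
lemma P_mem_stub (v a : V) : Λ.P D v ∈ pathImage (Λ.stub D v a) := by
  unfold stub pre tip E P
  split_ifs <;> simp_all [pathImage, left_mem_segment]

lemma tip_mem_stub (v a : V) : Λ.tip D v a ∈ pathImage (Λ.stub D v a) :=
  getLast_mem_pathImage _ _

lemma stub_y (hD : 0 < D) (hDX : ∀ v a, G.Adj v a → |Λ.X v a - Λ.x v| < D)
    {v a : V} (hva : G.Adj v a) {z : ℝ × ℝ} (hz : z ∈ pathImage (Λ.stub D v a)) :
    Λ.y D v - D ≤ z.2 ∧ z.2 ≤ Λ.y D v + D := by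
  rcases Λ.mem_stub D hva hD hz with ⟨h1, h2⟩ | ⟨h1, _, _, h2, h3, h4, h5⟩ |
    ⟨h1, h2, h3, h4 | h4⟩ | ⟨h1, h2, h3, h4 | h4⟩
  · rw [h2]; simp only [P]; constructor <;> linarith
  · have h6 := hDX v a hva
    rw [abs_lt] at h6
    have h7 : |z.1 - Λ.x v| ≤ D := by
      rw [abs_le]; rcases h4 with h | h <;> constructor <;> linarith
    have h8 := abs_nonneg (z.1 - Λ.x v)
    have h2' : (-1 : ℝ) ≤ Λ.k v a := by exact_mod_cast h2
    have h3' : (Λ.k v a : ℝ) ≤ 1 := by exact_mod_cast h3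
    rw [h5]; constructor <;> nlinarith
  all_goals constructor <;> linarith

lemma stub_x {v a : V} (hva : G.Adj v a) (hD : 0 < D) {z : ℝ × ℝ}
    (hz : z ∈ pathImage (Λ.stub D v a)) :
    (Λ.x v ≤ z.1 ∧ z.1 ≤ Λ.X v a) ∨ (Λ.X v a ≤ z.1 ∧ z.1 ≤ Λ.x v) := by
  rcases Λ.mem_stub D hva hD hz with ⟨h1, h2⟩ | ⟨h1, _, _, h2, h3, h4, h5⟩ |
    ⟨h1, h2, h3, h4 | h4⟩ | ⟨h1, h2, h3, h4 | h4⟩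
  · rw [h2, h1]; simp [P]
  · exact h4
  all_goals left; constructor <;> linarith

lemma tip_y (hD : 0 < D) (hDX : ∀ v a, G.Adj v a → |Λ.X v a - Λ.x v| < D)
    {v a : V} (hva : G.Adj v a) :
    Λ.y D v - D ≤ Λ.E D v a ∧ Λ.E D v a ≤ Λ.y D v + D :=
  Λ.stub_y D hD hDX hva (Λ.tip_mem_stub D v a)

lemma stub_tip (hD : 0 < D)
    {v a : V} (hva : G.Adj v a) {z : ℝ × ℝ} (hz : z ∈ pathImage (Λ.stub D v a))
    (hzX : z.1 = Λ.X v a) : z = Λ.tip D v a := by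
  refine Prod.ext hzX ?_
  show z.2 = Λ.E D v a
  unfold E
  rcases Λ.mem_stub D hva hD hz with ⟨h1, h2⟩ | ⟨h1, n1, n2, h2, h3, h4, h5⟩ |
    ⟨h1, h2, h3, h4 | h4⟩ | ⟨h1, h2, h3, h4 | h4⟩
  · rw [if_pos h1, h2]; rfl
  · rw [if_neg h1, if_neg n1, if_neg n2, h5, hzX]
  · linarith
  · rw [if_neg h2.ne', if_pos h1, h4.1]
  · linarith
  · rw [if_neg h2.ne', if_neg (by omega), if_pos h1, h4.1]

/-- A slope of the stub on a definite side of `v`. -/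
lemma stub_k {v a b : V} (hva : G.Adj v a) (hvb : G.Adj v b) (hab : a ≠ b)
    (hs : (Λ.x v < Λ.X v a ∧ Λ.x v < Λ.X v b) ∨ (Λ.X v a < Λ.x v ∧ Λ.X v b < Λ.x v)) :
    Λ.k v a ≠ Λ.k v b := by
  have hne : ∀ c, Λ.h v ≠ Λ.h c ∨ v = c := fun c => by
    by_cases h : v = c
    · exact Or.inr h
    · exact Or.inl (fun h' => h (Λ.h_inj h'))
  rcases lt_trichotomy (Λ.X v a) (Λ.X v b) with h | h | h
  · rcases hs with hs | hs
    · have := Λ.near v a b hva hvb hab (Or.inl ⟨hs.1, h⟩)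
      rcases hne a with h1 | h1
      · rcases lt_or_gt_of_ne h1 with h2 | h2
        · exact (this.1 h2).ne'
        · exact (this.2 h2).ne
      · exact absurd h1 hva.ne
    · have := Λ.near v b a hvb hva hab.symm (Or.inr ⟨h, hs.2⟩)
      rcases hne b with h1 | h1
      · rcases lt_or_gt_of_ne h1 with h2 | h2
        · exact (this.1 h2).ne
        · exact (this.2 h2).ne'
      · exact absurd h1 hvb.ne
  · have := (Λ.sep v a b hva hvb hab h).1
    rcases hs with hs | hs <;> linarith [hs.1]
  · rcases hs with hs | hs
    · have := Λ.near v b a hvb hva hab.symm (Or.inl ⟨hs.2, h⟩)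
      rcases hne b with h1 | h1
      · rcases lt_or_gt_of_ne h1 with h2 | h2
        · exact (this.1 h2).ne
        · exact (this.2 h2).ne'
      · exact absurd h1 hvb.ne
    · have := Λ.near v a b hva hvb hab (Or.inr ⟨h, hs.1⟩)
      rcases hne a with h1 | h1
      · rcases lt_or_gt_of_ne h1 with h2 | h2
        · exact (this.1 h2).ne'
        · exact (this.2 h2).ne
      · exact absurd h1 hva.ne

/-- A stub does not meet the part of the vertical segment of another edge at the same vertex that
lies beyond the tip of that edge's stub. -/
lemma stub_vert (hD : 0 < D) (hDX : ∀ v a, G.Adj v a → |Λ.X v a - Λ.x v| < D)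
    {v a b : V} (hva : G.Adj v a) (hvb : G.Adj v b) (hab : a ≠ b) {z : ℝ × ℝ}
    (hz : z ∈ pathImage (Λ.stub D v a)) (hzb : z.1 = Λ.X v b)
    (h1 : Λ.h v < Λ.h b → Λ.E D v b ≤ z.2) (h2 : Λ.h b < Λ.h v → z.2 ≤ Λ.E D v b) :
    z = Λ.P D v := by
  have hhb : Λ.h v < Λ.h b ∨ Λ.h b < Λ.h v :=
    lt_or_gt_of_ne (fun h' => hvb.ne (Λ.h_inj h'))
  by_cases hX : Λ.X v b = Λ.x v
  · have hE : Λ.E D v b = Λ.y D v := by unfold E; rw [if_pos hX]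
    rw [hE] at h1 h2
    have hz1 : z.1 = Λ.x v := hzb.trans hX
    refine Prod.ext hz1 ?_
    show z.2 = Λ.y D v
    rcases Λ.mem_stub D hva hD hz with ⟨g1, g2⟩ | ⟨g1, n1, n2, g2, g3, g4, g5⟩ |
      ⟨g1, g2, g3, g4⟩ | ⟨g1, g2, g3, g4⟩
    · rw [g2]; rfl
    · rw [g5, hz1]; simp
    · have := h2 (g3 b hvb)
      rcases g4 with g4 | g4 <;> linarith
    · have := h1 (g3 b hvb)
      rcases g4 with g4 | g4 <;> linarith
  · exfalso
    -- the edge to `b` lies on the same side as the edge to `a` and is nearer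
    have hside : (Λ.x v < Λ.X v b ∧ Λ.X v b < Λ.X v a) ∨
        (Λ.X v a < Λ.X v b ∧ Λ.X v b < Λ.x v) := by
      have hXab : Λ.X v a ≠ Λ.X v b := by
        intro h
        exact hX (h ▸ (Λ.sep v a b hva hvb hab h).1)
      rcases Λ.stub_x D hva hD hz with h | h
      · left; exact ⟨lt_of_le_of_ne (by linarith) (Ne.symm hX),
          lt_of_le_of_ne (by linarith) hXab.symm⟩
      · right; exact ⟨lt_of_le_of_ne (by linarith) hXab,
          lt_of_le_of_ne (by linarith) hX⟩
    have hn := Λ.near v b a hvb hva hab.symm hside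
    have hd : 0 < |Λ.X v b - Λ.x v| := abs_pos.2 (sub_ne_zero.2 hX)
    have hdD := hDX v b hvb
    have hE : Λ.E D v b = if Λ.k v b = 2 then Λ.y D v + D
      else if Λ.k v b = -2 then Λ.y D v - D
      else Λ.y D v + Λ.k v b * |Λ.X v b - Λ.x v| := by unfold E; rw [if_neg hX]
    rcases Λ.mem_stub D hva hD hz with ⟨g1, g2⟩ | ⟨g1, n1, n2, g2, g3, g4, g5⟩ |
      ⟨g1, g2, g3, g4⟩ | ⟨g1, g2, g3, g4⟩
    · rcases hside with h | h <;> linarith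
    · rw [hzb] at g5
      rcases Λ.kcase v b hvb hX with ⟨c1, c2⟩ | ⟨c1, c2, c3⟩ | ⟨c1, c2, c3⟩
      · rw [if_neg (by omega), if_neg (by omega)] at hE
        rcases hhb with h | h
        · have e1 := h1 h
          have e2 : (Λ.k v a : ℝ) < Λ.k v b := by exact_mod_cast hn.1 h
          nlinarith
        · have e1 := h2 h
          have e2 : (Λ.k v b : ℝ) < Λ.k v a := by exact_mod_cast hn.2 h
          nlinarith
      · have := hn.2 (c3 b hvb); omega
      · have := hn.1 (c3 b hvb); omega
    · have hb := g3 b hvb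
      have e1 := h2 hb
      have e2 := hn.2 hb
      have hz2 : z.2 = Λ.y D v + D := by
        rcases g4 with g4 | g4
        · exact absurd (hzb.symm.trans g4.1) hX
        · exact g4.1
      rcases Λ.kcase v b hvb hX with ⟨c1, c2⟩ | ⟨c1, c2, c3⟩ | ⟨c1, c2, c3⟩
      · rw [if_neg (by omega), if_neg (by omega)] at hE
        have : (Λ.k v b : ℝ) ≤ 1 := by exact_mod_cast c2
        nlinarith
      · omega
      · have := c3 b hvb; omega
    · have hb := g3 b hvb
      have e1 := h1 hb
      have e2 := hn.1 hb
      have hz2 : z.2 = Λ.y D v - D := by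
        rcases g4 with g4 | g4
        · exact absurd (hzb.symm.trans g4.1) hX
        · exact g4.1
      rcases Λ.kcase v b hvb hX with ⟨c1, c2⟩ | ⟨c1, c2, c3⟩ | ⟨c1, c2, c3⟩
      · rw [if_neg (by omega), if_neg (by omega)] at hE
        have : (-1 : ℝ) ≤ Λ.k v b := by exact_mod_cast c1
        nlinarith
      · have := c3 b hvb; omega
      · omega

lemma stub_stub (hD : 0 < D) (hDX : ∀ v a, G.Adj v a → |Λ.X v a - Λ.x v| < D)
    {v a b : V} (hva : G.Adj v a) (hvb : G.Adj v b) (hab : a ≠ b) {z : ℝ × ℝ}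
    (hz : z ∈ pathImage (Λ.stub D v a)) (hzb : z ∈ pathImage (Λ.stub D v b)) :
    z = Λ.P D v := by
  by_cases hx : z.1 = Λ.x v
  · refine Prod.ext hx ?_
    show z.2 = Λ.y D v
    rcases Λ.mem_stub D hva hD hz with ⟨g1, g2⟩ | ⟨g1, n1, n2, g2, g3, g4, g5⟩ |
      ⟨g1, g2, g3, g4⟩ | ⟨g1, g2, g3, g4⟩
    · rw [g2]; rfl
    · rw [g5, hx]; simp
    · rcases Λ.mem_stub D hvb hD hzb with ⟨f1, f2⟩ | ⟨f1, m1, m2, f2, f3, f4, f5⟩ |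
        ⟨f1, f2, f3, f4⟩ | ⟨f1, f2, f3, f4⟩
      · rw [f2]; rfl
      · rw [f5, hx]; simp
      · exact absurd (g1.trans f1.symm) (Λ.stub_k hva hvb hab (Or.inl ⟨g2, f2⟩))
      · have := g3 b hvb; have := f3 b hvb; omega
    · rcases Λ.mem_stub D hvb hD hzb with ⟨f1, f2⟩ | ⟨f1, m1, m2, f2, f3, f4, f5⟩ |
        ⟨f1, f2, f3, f4⟩ | ⟨f1, f2, f3, f4⟩
      · rw [f2]; rfl
      · rw [f5, hx]; simp
      · have := g3 b hvb; have := f3 b hvb; omega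
      · exact absurd (g1.trans f1.symm) (Λ.stub_k hva hvb hab (Or.inl ⟨g2, f2⟩))
  · exfalso
    have hside : (Λ.x v < Λ.X v a ∧ Λ.x v < Λ.X v b) ∨
        (Λ.X v a < Λ.x v ∧ Λ.X v b < Λ.x v) := by
      rcases lt_or_gt_of_ne hx with h | h
      · right
        rcases Λ.stub_x D hva hD hz with h1 | h1 <;>
        rcases Λ.stub_x D hvb hD hzb with h2 | h2 <;> constructor <;> linarith
      · left
        rcases Λ.stub_x D hva hD hz with h1 | h1 <;>
        rcases Λ.stub_x D hvb hD hzb with h2 | h2 <;> constructor <;> linarith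
    have hk := Λ.stub_k hva hvb hab hside
    have hd : 0 < |z.1 - Λ.x v| := abs_pos.2 (sub_ne_zero.2 hx)
    have hda : |z.1 - Λ.x v| < D := by
      have h6 := hDX v a hva
      rw [abs_lt] at h6 ⊢
      rcases Λ.stub_x D hva hD hz with h | h <;> constructor <;> linarith
    rcases Λ.mem_stub D hva hD hz with ⟨g1, g2⟩ | ⟨g1, n1, n2, g2, g3, g4, g5⟩ |
        ⟨g1, g2, g3, g4⟩ | ⟨g1, g2, g3, g4⟩ <;>
    rcases Λ.mem_stub D hvb hD hzb with ⟨f1, f2⟩ | ⟨f1, m1, m2, f2, f3, f4, f5⟩ |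
        ⟨f1, f2, f3, f4⟩ | ⟨f1, f2, f3, f4⟩
    all_goals try (rw [g2] at hx; exact hx rfl)
    all_goals try (rw [f2] at hx; exact hx rfl)
    all_goals try (exact hk (g1.trans f1.symm))
    all_goals try (have := g3 b hvb; have := f3 b hvb; omega)
    · have h1 : (Λ.k v a : ℝ) * |z.1 - Λ.x v| = Λ.k v b * |z.1 - Λ.x v| := by linarith
      exact hk (by exact_mod_cast mul_right_cancel₀ hd.ne' h1)
    · rcases f4 with f4 | f4
      · exact hx f4.1
      · have : (Λ.k v a : ℝ) ≤ 1 := by exact_mod_cast g3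
        nlinarith
    · rcases f4 with f4 | f4
      · exact hx f4.1
      · have : (-1 : ℝ) ≤ Λ.k v a := by exact_mod_cast g2
        nlinarith
    · rcases g4 with f4 | f4
      · exact hx f4.1
      · have : (Λ.k v b : ℝ) ≤ 1 := by exact_mod_cast f3
        nlinarith
    · rcases g4 with f4 | f4
      · exact hx f4.1
      · have : (-1 : ℝ) ≤ Λ.k v b := by exact_mod_cast f2
        nlinarith

end Layout

open Polyline in
/-- The list of points describes an octilinear polyline. -/
def ListOcti : List (ℝ × ℝ) → Prop
  | a :: b :: c :: l => OctiSeg a b ∧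
      (b.1 - a.1) * (c.2 - b.2) ≠ (b.2 - a.2) * (c.1 - b.1) ∧ ListOcti (b :: c :: l)
  | [a, b] => OctiSeg a b
  | _ => True

lemma ListOcti.append : ∀ (l m : List (ℝ × ℝ)) (a b : ℝ × ℝ), ListOcti (l ++ [a, b]) →
    ListOcti (a :: b :: m) → ListOcti (l ++ a :: b :: m)
  | [], _, _, _, _, h => h
  | [_], _, _, _, h, h' => ⟨h.1, h.2.1, h'⟩
  | [_, d], m, a, b, h, h' => ⟨h.1, h.2.1, ListOcti.append [d] m a b h.2.2 h'⟩
  | _ :: d :: e :: l, m, a, b, h, h' =>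
      ⟨h.1, h.2.1, ListOcti.append (d :: e :: l) m a b h.2.2 h'⟩

lemma OctiSeg.symm {a b : ℝ × ℝ} (h : Polyline.OctiSeg a b) : Polyline.OctiSeg b a := by
  unfold Polyline.OctiSeg at *
  rcases h with h | h | h | h
  · left; linarith
  · right; left; linarith
  · right; right; left; linarith
  · right; right; right; linarith

lemma ListOcti.reverse : ∀ (l : List (ℝ × ℝ)), ListOcti l → ListOcti l.reverse
  | [], _ => trivial
  | [_], _ => trivial
  | [_, _], h => OctiSeg.symm h
  | a :: b :: c :: l, h => by
      have ih := ListOcti.reverse (b :: c :: l) h.2.2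
      simp only [List.reverse_cons, List.append_assoc, List.cons_append, List.nil_append] at ih ⊢
      refine ListOcti.append _ [a] c b ih ⟨?_, ?_, OctiSeg.symm h.1⟩
      · cases l with
        | nil => exact OctiSeg.symm h.2.2
        | cons d l => exact OctiSeg.symm h.2.2.1
      · have := h.2.1
        intro h'; apply this; linarith

lemma ListOcti.getD : ∀ (l : List (ℝ × ℝ)), ListOcti l →
    (∀ i, i + 1 < l.length → Polyline.OctiSeg (l.getD i 0) (l.getD (i + 1) 0)) ∧
    (∀ i, i + 2 < l.length →
      ¬ Collinear ℝ ({l.getD i 0, l.getD (i + 1) 0, l.getD (i + 2) 0} : Set (ℝ × ℝ)))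
  | [], _ => ⟨fun i hi => by simp at hi, fun i hi => by simp at hi⟩
  | [_], _ => ⟨fun i hi => by simp at hi, fun i hi => by simp at hi⟩
  | [a, b], h => ⟨fun i hi => by
      have : i = 0 := by simp at hi; omega
      subst this; exact h, fun i hi => by simp at hi⟩
  | a :: b :: c :: l, h => by
      have ih := ListOcti.getD (b :: c :: l) h.2.2
      constructor
      · intro i hi
        cases i with
        | zero => exact h.1
        | succ i => exact ih.1 i (by simp at hi ⊢; omega)
      · intro i hi
        cases i with
        | zero => exact not_collinear_of_det _ _ _ h.2.1
        | succ i => exact ih.2 i (by simp at hi ⊢; omega)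

lemma octilinear_polyOf (l : List (ℝ × ℝ)) (h : 2 ≤ l.length) (hs : ListSimple l)
    (ho : ListOcti l) : (polyOf l h).Octilinear := by
  have := ListOcti.getD l ho
  refine ⟨⟨fun i hi => ListSimple.ne l hs i (by simp [polyOf] at hi; omega), fun i hi =>
    this.2 i (by simp [polyOf] at hi; omega)⟩, fun i hi => this.1 i (by simp [polyOf] at hi; omega)⟩

namespace Layout

variable {V : Type*} {G : SimpleGraph V} (Λ : Layout G ℝ) (D : ℝ)

/-- The points of the polyline of the edge `{u, w}`, from the lower endvertex `u` to the upper
endvertex `w`. -/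
noncomputable def path (u w : V) : List (ℝ × ℝ) :=
  Λ.pre D u w ++ Λ.tip D u w :: Λ.tip D w u :: (Λ.pre D w u).reverse

lemma stub_octi {v a : V} (hva : G.Adj v a) (hD : 0 < D) {y' : ℝ} (hy : y' ≠ Λ.E D v a) :
    ListOcti (Λ.pre D v a ++ [Λ.tip D v a, (Λ.X v a, y')]) := by
  by_cases hX : Λ.X v a = Λ.x v
  · have : Λ.pre D v a = [] := by unfold pre; rw [if_pos hX]
    rw [this]
    right; left; simp [tip]
  · have hX' : Λ.X v a - Λ.x v ≠ 0 := sub_ne_zero.2 hX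
    have hy' : y' - Λ.E D v a ≠ 0 := sub_ne_zero.2 hy
    have hv : Polyline.OctiSeg (Λ.tip D v a) (Λ.X v a, y') := by right; left; simp [tip]
    rcases Λ.kcase v a hva hX with ⟨h1, h2⟩ | ⟨h1, h2, h3⟩ | ⟨h1, h2, h3⟩
    · have n1 : Λ.k v a ≠ 2 := by omega
      have n2 : Λ.k v a ≠ -2 := by omega
      have hE : Λ.E D v a = Λ.y D v + Λ.k v a * |Λ.X v a - Λ.x v| := by
        unfold E; rw [if_neg hX, if_neg n1, if_neg n2]
      have hp : Λ.pre D v a = [Λ.P D v] := by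
        unfold pre; rw [if_neg hX, if_neg n1, if_neg n2]
      rw [hp]
      refine ⟨?_, ?_, hv⟩
      · have hk : Λ.k v a = -1 ∨ Λ.k v a = 0 ∨ Λ.k v a = 1 := by omega
        unfold Polyline.OctiSeg tip P
        simp only [hE]
        rcases hk with hk | hk | hk <;> rcases abs_cases (Λ.X v a - Λ.x v) with ⟨h, -⟩ | ⟨h, -⟩ <;>
          rw [hk, h] <;> simp
      · simp only [tip, P, sub_self, mul_zero]
        exact mul_ne_zero hX' hy'
    · have hE : Λ.E D v a = Λ.y D v + D := by
        unfold E; rw [if_neg hX, if_pos h1]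
      have hp : Λ.pre D v a = [Λ.P D v, (Λ.x v, Λ.y D v + D)] := by
        unfold pre; rw [if_neg hX, if_pos h1]
      rw [hp]
      refine ⟨Or.inr (Or.inl (by simp [P])), ?_, Or.inl (by simp [tip, hE]), ?_, hv⟩
      · simp [tip, P, hD.ne', hX']
      · simp only [tip, sub_self, mul_zero]
        exact mul_ne_zero hX' hy'
    · have n1 : Λ.k v a ≠ 2 := by omega
      have hE : Λ.E D v a = Λ.y D v - D := by
        unfold E; rw [if_neg hX, if_neg n1, if_pos h1]
      have hp : Λ.pre D v a = [Λ.P D v, (Λ.x v, Λ.y D v - D)] := by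
        unfold pre; rw [if_neg hX, if_neg n1, if_pos h1]
      rw [hp]
      refine ⟨Or.inr (Or.inl (by simp [P])), ?_, Or.inl (by simp [tip, hE]), ?_, hv⟩
      · simp [tip, P, hD.ne', hX']
      · simp only [tip, sub_self, mul_zero]
        exact mul_ne_zero hX' hy'

lemma stub_simple {v a : V} (hD : 0 < D) : ListSimple (Λ.stub D v a) := by
  unfold stub pre
  split_ifs with h1 h2 h3
  · trivial
  · have hE : Λ.E D v a = Λ.y D v + D := by
      unfold E; rw [if_neg h1, if_pos h2]
    refine ⟨?_, ?_, ?_, ?_, trivial⟩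
    · simp [P, hD.ne']
    · rintro z ⟨hz1, hz2⟩
      have hz1 := mem_vseg (by linarith) hz1
      simp only [tip, hE] at hz2
      refine Prod.ext hz1.1 ?_
      rcases hz2 with hz2 | hz2
      · obtain ⟨t, -, -, -, h3⟩ := (mem_seg_iff _ _ _).1 hz2
        simpa using h3
      · rw [Set.mem_singleton_iff.1 hz2]
    · simp [tip, Ne.symm h1]
    · intro z hz; simpa [pathImage] using hz.2
  · have hE : Λ.E D v a = Λ.y D v - D := by
      unfold E; rw [if_neg h1, if_neg h2, if_pos h3]
    refine ⟨?_, ?_, ?_, ?_, trivial⟩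
    · intro h'
      have := congrArg Prod.snd h'
      simp only [P] at this
      linarith
    · rintro z ⟨hz1, hz2⟩
      rw [segment_symm] at hz1
      have hz1 := mem_vseg (by linarith) hz1
      simp only [tip, hE] at hz2
      refine Prod.ext hz1.1 ?_
      rcases hz2 with hz2 | hz2
      · obtain ⟨t, -, -, -, h3⟩ := (mem_seg_iff _ _ _).1 hz2
        simpa using h3
      · rw [Set.mem_singleton_iff.1 hz2]
    · simp [tip, Ne.symm h1]
    · intro z hz; simpa [pathImage] using hz.2
  · refine ⟨?_, ?_, trivial⟩
    · simp [P, tip, Ne.symm h1]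
    · intro z hz; simpa [pathImage] using hz.2

lemma E_lt (hD : 0 < D) (hDX : ∀ v a, G.Adj v a → |Λ.X v a - Λ.x v| < D)
    {u w : V} (huw : G.Adj u w) (h : Λ.h u < Λ.h w) : Λ.E D u w + D < Λ.E D w u := by
  have h1 := Λ.tip_y D hD hDX huw
  have h2 := Λ.tip_y D hD hDX huw.symm
  have h3 := Λ.ygap D hD h
  linarith

lemma path_length (u w : V) :
    (Λ.path D u w).length = (Λ.pre D u w).length + (Λ.pre D w u).length + 2 := by
  simp [path]; ring

lemma path_octi (hD : 0 < D) (hDX : ∀ v a, G.Adj v a → |Λ.X v a - Λ.x v| < D)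
    {u w : V} (huw : G.Adj u w) (h : Λ.h u < Λ.h w) : ListOcti (Λ.path D u w) := by
  have hE := Λ.E_lt D hD hDX huw h
  have h1 := Λ.stub_octi D huw hD (y' := Λ.E D w u) (by linarith)
  have h2 := ListOcti.reverse _ (Λ.stub_octi D huw.symm hD (y' := Λ.E D u w) (by linarith))
  rw [List.reverse_append] at h2
  rw [Λ.X_symm w u] at h2
  refine ListOcti.append _ _ _ _ ?_ h2
  have : Λ.tip D w u = (Λ.X u w, Λ.E D w u) := by unfold tip; rw [Λ.X_symm]
  rw [this]; exact h1

lemma mem_path (hD : 0 < D) (hDX : ∀ v a, G.Adj v a → |Λ.X v a - Λ.x v| < D)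
    {u w : V} (huw : G.Adj u w) (h : Λ.h u < Λ.h w) {z : ℝ × ℝ} :
    z ∈ pathImage (Λ.path D u w) → z ∈ pathImage (Λ.stub D u w) ∨
      (z.1 = Λ.X u w ∧ Λ.E D u w ≤ z.2 ∧ z.2 ≤ Λ.E D w u) ∨ z ∈ pathImage (Λ.stub D w u) := by
  unfold path
  rw [pathImage_append]
  rintro ((h1 | h1) | h1)
  · left; exact h1
  · right; left
    unfold tip at h1
    rw [Λ.X_symm w u] at h1
    exact mem_vseg (by linarith [Λ.E_lt D hD hDX huw h]) h1
  · right; right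
    have : Λ.tip D w u :: (Λ.pre D w u).reverse = (Λ.stub D w u).reverse := by
      simp [stub]
    rw [this, pathImage_reverse] at h1
    exact h1

lemma stub_sub_path (u w : V) :
    pathImage (Λ.stub D u w) ⊆ pathImage (Λ.path D u w) ∧
    pathImage (Λ.stub D w u) ⊆ pathImage (Λ.path D u w) := by
  have : Λ.tip D w u :: (Λ.pre D w u).reverse = (Λ.stub D w u).reverse := by
      simp [stub]
  unfold path
  rw [pathImage_append, this, pathImage_reverse]
  exact ⟨fun z hz => Or.inl (Or.inl hz), fun z hz => Or.inr hz⟩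

lemma path_simple (hD : 0 < D) (hDX : ∀ v a, G.Adj v a → |Λ.X v a - Λ.x v| < D)
    {u w : V} (huw : G.Adj u w) (h : Λ.h u < Λ.h w) :
    ListSimple (Λ.path D u w) := by
  have hE := Λ.E_lt D hD hDX huw h
  have e : Λ.tip D w u :: (Λ.pre D w u).reverse = (Λ.stub D w u).reverse := by
      simp [stub]
  refine ListSimple.append _ _ _ _ (Λ.stub_simple D hD) ?_ ?_ ?_ ?_ ?_
  · rw [e]; exact ListSimple.reverse _ (Λ.stub_simple D hD)
  · intro h'
    have := congrArg Prod.snd h'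
    simp only [tip] at this
    linarith
  · rintro z ⟨h1, h2⟩
    unfold tip at h2
    rw [Λ.X_symm w u] at h2
    exact Λ.stub_tip D hD huw h1 (mem_vseg (by linarith) h2).1
  · rintro z ⟨h2, h1⟩
    rw [e, pathImage_reverse] at h1
    unfold tip at h2
    rw [Λ.X_symm u w] at h2
    exact Λ.stub_tip D hD huw.symm h1 (mem_vseg (by linarith) h2).1
  · rw [e, pathImage_reverse, Set.disjoint_left]
    intro z h1 h2
    have h1 := Λ.stub_y D hD hDX huw h1
    have h2 := Λ.stub_y D hD hDX huw.symm h2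
    have h3 := Λ.ygap D hD h
    linarith

/-- The path of an edge stays away from the box around a vertex not on the edge. -/
lemma path_box (hD : 0 < D) (hDX : ∀ v a, G.Adj v a → |Λ.X v a - Λ.x v| < D)
    {u w v : V} (huw : G.Adj u w) (h : Λ.h u < Λ.h w) (hu : v ≠ u) (hw : v ≠ w)
    {z : ℝ × ℝ} (hz : z ∈ pathImage (Λ.path D u w)) (h1 : Λ.y D v - D ≤ z.2)
    (h2 : z.2 ≤ Λ.y D v + D) (hx : z.1 = Λ.x v ∨ ∃ a, G.Adj v a ∧
      ((Λ.x v ≤ z.1 ∧ z.1 ≤ Λ.X v a) ∨ (Λ.X v a ≤ z.1 ∧ z.1 ≤ Λ.x v))) : False := by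
  have hne : ∀ c, v ≠ c → Λ.h v < Λ.h c ∨ Λ.h c < Λ.h v := fun c hc =>
    lt_or_gt_of_ne (fun h' => hc (Λ.h_inj h'))
  have t1 := Λ.tip_y D hD hDX huw
  have t2 := Λ.tip_y D hD hDX huw.symm
  rcases Λ.mem_path D hD hDX huw h hz with hz | hz | hz
  · have h3 := Λ.stub_y D hD hDX huw hz
    rcases hne u hu with h4 | h4 <;> have := Λ.ygap D hD h4 <;> linarith
  · rcases hne u hu with h4 | h4
    · have := Λ.ygap D hD h4; linarith
    rcases hne w hw with h5 | h5
    · rcases Λ.pass u w v huw h4 h5 with ⟨h6, h7⟩ | ⟨h6, h7⟩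
      · rcases hx with hx | ⟨a, ha, hx⟩
        · linarith
        · have := h7 a ha; rcases hx with hx | hx <;> linarith
      · rcases hx with hx | ⟨a, ha, hx⟩
        · linarith
        · have := h7 a ha; rcases hx with hx | hx <;> linarith
    · have := Λ.ygap D hD h5; linarith
  · have h3 := Λ.stub_y D hD hDX huw.symm hz
    rcases hne w hw with h4 | h4 <;> have := Λ.ygap D hD h4 <;> linarith

lemma path_pos (hD : 0 < D) (hDX : ∀ v a, G.Adj v a → |Λ.X v a - Λ.x v| < D)
    {u w v : V} (huw : G.Adj u w) (h : Λ.h u < Λ.h w)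
    (hz : Λ.P D v ∈ pathImage (Λ.path D u w)) : v = u ∨ v = w := by
  by_contra hc
  push Not at hc
  refine Λ.path_box D hD hDX huw h hc.1 hc.2 hz ?_ ?_ (Or.inl rfl) <;> simp only [P] <;> linarith

/-- A stub at `v` meets the path of another edge only in `v`, if at all. -/
lemma stub_path (hD : 0 < D) (hDX : ∀ v a, G.Adj v a → |Λ.X v a - Λ.x v| < D)
    {v a u w : V} (hva : G.Adj v a) (huw : G.Adj u w) (h : Λ.h u < Λ.h w)
    (hne : s(v, a) ≠ s(u, w)) {z : ℝ × ℝ} (hz : z ∈ pathImage (Λ.stub D v a))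
    (hz' : z ∈ pathImage (Λ.path D u w)) : z = Λ.P D v := by
  have hy := Λ.stub_y D hD hDX hva hz
  have hx := Λ.stub_x D hva hD hz
  by_cases hu : v = u
  · subst hu
    have haw : a ≠ w := fun h => hne (by rw [h])
    have hg := Λ.ygap D hD h
    rcases Λ.mem_path D hD hDX huw h hz' with h1 | h1 | h1
    · exact Λ.stub_stub D hD hDX hva huw haw hz h1
    · exact Λ.stub_vert D hD hDX hva huw haw hz h1.1 (fun _ => h1.2.1) (fun h2 => by omega)
    · have := Λ.stub_y D hD hDX huw.symm h1
      linarith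
  by_cases hw : v = w
  · subst hw
    have hau : a ≠ u := fun h => hne (by rw [h, Sym2.eq_swap])
    have hg := Λ.ygap D hD h
    rcases Λ.mem_path D hD hDX huw h hz' with h1 | h1 | h1
    · have := Λ.stub_y D hD hDX huw h1
      linarith
    · refine Λ.stub_vert D hD hDX hva huw.symm hau hz (by rw [h1.1, Λ.X_symm])
        (fun h2 => by omega) (fun _ => h1.2.2)
    · exact Λ.stub_stub D hD hDX hva huw.symm hau hz h1
  · exact (Λ.path_box D hD hDX huw h hu hw hz' hy.1 hy.2 (Or.inr ⟨a, hva, hx⟩)).elim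

/-- Vertical segments of distinct edges meet at most in a vertex. -/
lemma vert_vert (hD : 0 < D) (hDX : ∀ v a, G.Adj v a → |Λ.X v a - Λ.x v| < D)
    {u w u' w' : V} (huw : G.Adj u w) (h : Λ.h u < Λ.h w) (huw' : G.Adj u' w')
    (h' : Λ.h u' < Λ.h w') (hne : s(u, w) ≠ s(u', w')) {z : ℝ × ℝ}
    (hz : z.1 = Λ.X u w ∧ Λ.E D u w ≤ z.2 ∧ z.2 ≤ Λ.E D w u)
    (hz' : z.1 = Λ.X u' w' ∧ Λ.E D u' w' ≤ z.2 ∧ z.2 ≤ Λ.E D w' u')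
    (hle : Λ.h u ≤ Λ.h u') : ∃ v, z = Λ.P D v := by
  have t2 := Λ.tip_y D hD hDX huw.symm
  have t1' := Λ.tip_y D hD hDX huw'
  have hX : Λ.X u w = Λ.X u' w' := hz.1.symm.trans hz'.1
  rcases hle.lt_or_eq with hlt | heq
  · rcases lt_trichotomy (Λ.h w) (Λ.h u') with g | g | g
    · have := Λ.ygap D hD g; linarith
    · have e : w = u' := Λ.h_inj g
      subst e
      have huw2 : u ≠ w' := by rintro rfl; exact lt_irrefl _ (h.trans h')
      have hs := (Λ.sep w u w' huw.symm huw' huw2 (by rw [Λ.X_symm]; exact hX)).1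
      refine ⟨w, Prod.ext (by rw [hz.1, Λ.X_symm, hs]; rfl) ?_⟩
      have e1 : Λ.E D w u = Λ.y D w := by unfold E; rw [if_pos hs]
      have e2 : Λ.E D w w' = Λ.y D w := by
        unfold E; rw [if_pos]; rw [← hX, Λ.X_symm, hs]
      show z.2 = Λ.y D w
      linarith
    · exfalso
      rcases Λ.pass u w u' huw hlt g with ⟨-, g2⟩ | ⟨-, g2⟩ <;> have := g2 w' huw' <;> linarith
  · exfalso
    have e : u = u' := Λ.h_inj heq
    subst e
    have : w ≠ w' := fun e => hne (by rw [e])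
    have hs := (Λ.sep u w w' huw huw' this hX).2
    omega

lemma path_path (hD : 0 < D) (hDX : ∀ v a, G.Adj v a → |Λ.X v a - Λ.x v| < D)
    {u w u' w' : V} (huw : G.Adj u w) (h : Λ.h u < Λ.h w) (huw' : G.Adj u' w')
    (h' : Λ.h u' < Λ.h w') (hne : s(u, w) ≠ s(u', w')) {z : ℝ × ℝ}
    (hz : z ∈ pathImage (Λ.path D u w)) (hz' : z ∈ pathImage (Λ.path D u' w')) :
    ∃ v, z = Λ.P D v := by
  rcases Λ.mem_path D hD hDX huw h hz with h1 | h1 | h1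
  · exact ⟨_, Λ.stub_path D hD hDX huw huw' h' hne h1 hz'⟩
  · rcases Λ.mem_path D hD hDX huw' h' hz' with h2 | h2 | h2
    · exact ⟨_, Λ.stub_path D hD hDX huw' huw h hne.symm h2 hz⟩
    · rcases le_total (Λ.h u) (Λ.h u') with h3 | h3
      · exact Λ.vert_vert D hD hDX huw h huw' h' hne h1 h2 h3
      · exact Λ.vert_vert D hD hDX huw' h' huw h hne.symm h2 h1 h3
    · exact ⟨_, Λ.stub_path D hD hDX huw'.symm huw h
        (by rw [Sym2.eq_swap]; exact hne.symm) h2 hz⟩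
  · exact ⟨_, Λ.stub_path D hD hDX huw.symm huw' h' (by rw [Sym2.eq_swap]; exact hne) h1 hz'⟩

end Layout

/-- A sum over edges of the contributions of both endvertices is a sum over ordered pairs. -/
lemma sum_edges_eq {V : Type*} [Fintype V] (G : SimpleGraph V) (p : V → V → ℕ) (f : Sym2 V → ℕ)
    (hf : ∀ u w, G.Adj u w → f s(u, w) = p u w + p w u) :
    ∑ e ∈ G.edgeSet.toFinite.toFinset, f e =
      ∑ v, ∑ a ∈ (G.neighborSet v).toFinite.toFinset, p v a := by
  classical
  have h1 : ∑ v, ∑ a ∈ (G.neighborSet v).toFinite.toFinset, p v a =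
      ∑ q ∈ (Finset.univ : Finset (V × V)) with G.Adj q.1 q.2, p q.1 q.2 := by
    rw [Finset.sum_filter, ← Finset.univ_product_univ, Finset.sum_product]
    refine Finset.sum_congr rfl fun v _ => ?_
    rw [← Finset.sum_filter]
    refine Finset.sum_congr ?_ fun _ _ => rfl
    ext a; simp
  rw [h1, ← Finset.sum_fiberwise_of_maps_to (t := G.edgeSet.toFinite.toFinset)
    (g := fun q : V × V => s(q.1, q.2))]
  · refine Finset.sum_congr rfl fun e he => ?_
    induction e with | _ u w => ?_
    have huw : G.Adj u w := by simpa using he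
    rw [hf u w huw]
    have : {q ∈ {q ∈ (Finset.univ : Finset (V × V)) | G.Adj q.1 q.2} | s(q.1, q.2) = s(u, w)} =
        {(u, w), (w, u)} := by
      ext ⟨a, b⟩
      simp only [Finset.mem_filter, Finset.mem_univ, true_and, Sym2.eq_iff, Finset.mem_insert,
        Finset.mem_singleton, Prod.mk.injEq]
      constructor
      · rintro ⟨-, h⟩; exact h
      · rintro (⟨rfl, rfl⟩ | ⟨rfl, rfl⟩)
        · exact ⟨huw, by simp⟩
        · exact ⟨huw.symm, by simp⟩
    rw [this, Finset.sum_pair]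
    simp only [ne_eq, Prod.mk.injEq, not_and]
    intro h; exact absurd h huw.ne
  · intro q hq
    simpa using hq

namespace Layout

variable {V : Type*} {G : SimpleGraph V} (Λ : Layout G ℝ) (D : ℝ)

lemma path_head (u w : V) : ∃ m, Λ.path D u w = Λ.P D u :: m := by
  unfold path
  by_cases h1 : Λ.X u w = Λ.x u
  · have hp : Λ.pre D u w = [] := by unfold pre; rw [if_pos h1]
    have ht : Λ.tip D u w = Λ.P D u := by unfold tip E P; rw [if_pos h1, h1]
    rw [hp, ht]; exact ⟨_, rfl⟩
  · unfold pre
    rw [if_neg h1]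
    split_ifs <;> exact ⟨_, rfl⟩

lemma path_reverse (u w : V) : (Λ.path D u w).reverse = Λ.path D w u := by
  simp [path]

lemma path_two_le (u w : V) : 2 ≤ (Λ.path D u w).length := by
  rw [path_length]; omega

open Classical in
/-- The polyline of an edge. -/
noncomputable def poly (e : Sym2 V) : Polyline :=
  if H : ∃ q : V × V, e = s(q.1, q.2) ∧ Λ.h q.1 < Λ.h q.2 then
    polyOf (Λ.path D H.choose.1 H.choose.2) (Λ.path_two_le D _ _)
  else ⟨1, le_rfl, fun _ => 0⟩

lemma poly_eq {u w : V} (h : Λ.h u < Λ.h w) :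
    Λ.poly D s(u, w) = polyOf (Λ.path D u w) (Λ.path_two_le D _ _) := by
  have H : ∃ q : V × V, s(u, w) = s(q.1, q.2) ∧ Λ.h q.1 < Λ.h q.2 := ⟨(u, w), rfl, h⟩
  have h1 := H.choose_spec
  have : H.choose = (u, w) := by
    rcases Sym2.eq_iff.1 h1.1 with ⟨h2, h3⟩ | ⟨h2, h3⟩
    · exact Prod.ext h2.symm h3.symm
    · rw [← h2, ← h3] at h1; omega
  unfold poly
  rw [dif_pos H]
  simp only [this]

lemma polyOf_ends (l : List (ℝ × ℝ)) (h : 2 ≤ l.length) (a b : ℝ × ℝ) (ha : ∃ m, l = a :: m)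
    (hb : ∃ m, l.reverse = b :: m) :
    (polyOf l h).pt 0 = a ∧ (polyOf l h).pt (polyOf l h).len = b := by
  obtain ⟨m, rfl⟩ := ha
  refine ⟨rfl, ?_⟩
  obtain ⟨m', hm'⟩ := hb
  have : (a :: m) = m'.reverse ++ [b] := by
    rw [← List.reverse_reverse (a :: m), hm']; simp
  simp only [polyOf]
  rw [this]
  simp

lemma exists_oriented {u w : V} (huw : G.Adj u w) :
    ∃ u' w', s(u, w) = s(u', w') ∧ G.Adj u' w' ∧ Λ.h u' < Λ.h w' := by
  rcases lt_or_gt_of_ne (fun h' => huw.ne (Λ.h_inj h')) with h | h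
  · exact ⟨u, w, rfl, huw, h⟩
  · exact ⟨w, u, Sym2.eq_swap, huw.symm, h⟩

lemma edge_oriented {e : Sym2 V} (he : e ∈ G.edgeSet) :
    ∃ u w, e = s(u, w) ∧ G.Adj u w ∧ Λ.h u < Λ.h w := by
  induction e with | _ u w => exact Λ.exists_oriented he

variable (xi : V → ℤ) (hxi : ∀ v, Λ.x v = xi v) (Dn : ℤ) (hDn : D = Dn)
variable (hD : 0 < D) (hDX : ∀ v a, G.Adj v a → |Λ.X v a - Λ.x v| < D)

lemma toR_pos (xi : V → ℤ) (hxi : ∀ v, Λ.x v = xi v) (Dn : ℤ) (hDn : D = Dn)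
    (v : V) : toR (xi v, 4 * Dn * Λ.h v) = Λ.P D v := by
  simp [toR, P, y, hxi, hDn]

/-- The octilinear drawing described by a layout with integral vertex abscissae. -/
noncomputable def drawing : OctiDrawing G where
  pos v := (xi v, 4 * Dn * Λ.h v)
  inj := by
    intro u v h
    have h1 := congrArg Prod.snd h
    simp only at h1
    have : Dn ≠ 0 := by rintro rfl; simp [hDn] at hD
    exact Λ.h_inj (mul_left_cancel₀ (by simpa using this) h1)
  poly := Λ.poly D
  ends u v huv := by
    rw [Λ.toR_pos D xi hxi Dn hDn, Λ.toR_pos D xi hxi Dn hDn]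
    have key : ∀ u v, Λ.h u < Λ.h v → ({(Λ.poly D s(u, v)).pt 0,
        (Λ.poly D s(u, v)).pt (Λ.poly D s(u, v)).len} : Set (ℝ × ℝ)) = {Λ.P D u, Λ.P D v} := by
      intro u v h
      rw [Λ.poly_eq D h]
      have := polyOf_ends (Λ.path D u v) (Λ.path_two_le D _ _) _ _ (Λ.path_head D u v)
        (by rw [path_reverse]; exact Λ.path_head D v u)
      rw [this.1, this.2]
    rcases lt_or_gt_of_ne (fun h' => huv.ne (Λ.h_inj h')) with h | h
    · exact key u v h
    · rw [Sym2.eq_swap, key v u h]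
      exact Set.pair_comm _ _
  octi e he := by
    obtain ⟨u, w, rfl, huw, h⟩ := Λ.edge_oriented he
    rw [Λ.poly_eq D h]
    exact octilinear_polyOf _ _ (Λ.path_simple D hD hDX huw h) (Λ.path_octi D hD hDX huw h)

lemma drawing_image {u w : V} (h : Λ.h u < Λ.h w) :
    ((Λ.drawing D xi hxi Dn hDn hD hDX).poly s(u, w)).image = pathImage (Λ.path D u w) := by
  show (Λ.poly D s(u, w)).image = _
  rw [Λ.poly_eq D h, image_polyOf]

lemma drawing_planar : (Λ.drawing D xi hxi Dn hDn hD hDX).IsPlanar := by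
  have hpos : ∀ v, toR ((Λ.drawing D xi hxi Dn hDn hD hDX).pos v) = Λ.P D v :=
    Λ.toR_pos D xi hxi Dn hDn
  refine ⟨?_, ?_, ?_⟩
  · intro e he
    obtain ⟨u, w, rfl, huw, h⟩ := Λ.edge_oriented he
    show (Λ.poly D s(u, w)).Simple
    rw [Λ.poly_eq D h]
    exact simple_polyOf _ _ (Λ.path_simple D hD hDX huw h)
  · have key : ∀ u v, G.Adj u v → Λ.h u < Λ.h v →
        ((Λ.drawing D xi hxi Dn hDn hD hDX).poly s(u, v)).image ∩
        Set.range (fun w => toR ((Λ.drawing D xi hxi Dn hDn hD hDX).pos w)) =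
          {Λ.P D u, Λ.P D v} := by
      intro u v huv h
      rw [Λ.drawing_image D xi hxi Dn hDn hD hDX h]
      ext z
      constructor
      · rintro ⟨h1, w, rfl⟩
        simp only [hpos] at h1 ⊢
        rcases Λ.path_pos D hD hDX huv h h1 with rfl | rfl <;> simp
      · rintro (rfl | rfl)
        · exact ⟨(Λ.stub_sub_path D u v).1 (Λ.P_mem_stub D u v), u, hpos u⟩
        · exact ⟨(Λ.stub_sub_path D u v).2 (Λ.P_mem_stub D v u), v, hpos v⟩
    intro u v huv
    rw [hpos, hpos]
    rcases lt_or_gt_of_ne (fun h' => huv.ne (Λ.h_inj h')) with h | h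
    · exact key u v huv h
    · rw [Sym2.eq_swap, Set.pair_comm]
      exact key v u huv.symm h
  · intro e he e' he' hne z hz
    obtain ⟨u, w, rfl, huw, h⟩ := Λ.edge_oriented he
    obtain ⟨u', w', rfl, huw', h'⟩ := Λ.edge_oriented he'
    rw [Λ.drawing_image D xi hxi Dn hDn hD hDX h,
      Λ.drawing_image D xi hxi Dn hDn hD hDX h'] at hz
    obtain ⟨v, rfl⟩ := Λ.path_path D hD hDX huw h huw' h' hne hz.1 hz.2
    refine ⟨v, ⟨?_, ?_⟩, hpos v⟩
    · have := Λ.path_pos D hD hDX huw h hz.1; simpa using this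
    · have := Λ.path_pos D hD hDX huw' h' hz.2; simpa using this

lemma drawing_bends [Fintype V] : (Λ.drawing D xi hxi Dn hDn hD hDX).totalBends =
    ∑ v, ∑ a ∈ (G.neighborSet v).toFinite.toFinset, (Λ.pre D v a).length := by
  refine sum_edges_eq G (fun v a => (Λ.pre D v a).length) _ ?_
  have key : ∀ u w, Λ.h u < Λ.h w → (Λ.poly D s(u, w)).bends =
      (Λ.pre D u w).length + (Λ.pre D w u).length := by
    intro u w h
    rw [Λ.poly_eq D h]
    simp only [Polyline.bends, polyOf, path_length]
    omega
  intro u w huw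
  show (Λ.poly D s(u, w)).bends = _
  rcases lt_or_gt_of_ne (fun h' => huw.ne (Λ.h_inj h')) with h | h
  · exact key u w h
  · rw [Sym2.eq_swap, key w u h, add_comm]

lemma exists_bound [Finite V] : ∃ Dn : ℤ, (0 : ℝ) < Dn ∧
    ∀ v a, G.Adj v a → |Λ.X v a - Λ.x v| < Dn := by
  classical
  have := Fintype.ofFinite V
  obtain ⟨B, hB⟩ := (Set.finite_range (fun q : V × V => |Λ.X q.1 q.2 - Λ.x q.1|)).bddAbove
  have hB' : ∀ v a, |Λ.X v a - Λ.x v| ≤ B := fun v a => hB ⟨(v, a), rfl⟩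
  refine ⟨max 1 (⌊B⌋ + 1), ?_, fun v a _ => ?_⟩
  · have : (1 : ℤ) ≤ max 1 (⌊B⌋ + 1) := le_max_left _ _
    exact_mod_cast this
  · have : ⌊B⌋ + 1 ≤ max 1 (⌊B⌋ + 1) := le_max_right _ _
    have h2 : ((⌊B⌋ : ℝ) + 1) ≤ (max 1 (⌊B⌋ + 1) : ℤ) := by exact_mod_cast this
    linarith [hB' v a, Int.lt_floor_add_one B]

end Layout

/-! ### Sweeps -/

section Sweep

variable {V : Type*}

/-- A combinatorial upward planar drawing, described from bottom to top. The vertices of `Q` are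
swept in turn; `L` lists, from left to right, the edges (directed upwards) crossing the current
level. The edges of `L` entering the next vertex `v` must form a contiguous block `I`, which is
replaced by a list `O` of the edges leaving `v`. -/
def Run (R : V → V → Prop) : List (V × V) → List V → Prop
  | L, [] => L = []
  | L, v :: Q => ∃ A I O B : List (V × V), L = A ++ I ++ B ∧ (∀ e ∈ I, e.2 = v) ∧
      (∀ e ∈ A, e.2 ≠ v) ∧ (∀ e ∈ B, e.2 ≠ v) ∧ (∀ e ∈ O, e.1 = v) ∧ O.Nodup ∧
      (∀ w, (v, w) ∈ O ↔ R v w ∧ w ∈ Q) ∧ Run R (A ++ O ++ B) Q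

/-- The position of the straight edge in the lists `I` and `O` of edges entering and leaving a
vertex, as a function of the vertex and of the lengths of these lists. -/
abbrev Policy (V : Type*) := V → ℕ → ℕ → ℕ × ℕ

/-- In the increasing list `I` the entry at position `n` has abscissa `c`. -/
def Straight (X : V × V → ℚ) (c : ℚ) (I : List (V × V)) (n : ℕ) : Prop :=
  I = [] ∨ ∃ I₁ e I₂, I = I₁ ++ e :: I₂ ∧ X e = c ∧ I₁.length = n

/-- The geometric conditions at a vertex `v` with abscissa `c`: `A` and `B` pass to the left and
right of `v` and of its edges `I` (entering) and `O` (leaving). -/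
def LocalLay (pol : ℕ → ℕ → ℕ × ℕ) (c : ℚ) (X : V × V → ℚ) (A I O B : List (V × V)) : Prop :=
  (∀ e ∈ A, X e < c ∧ ∀ e' ∈ I ++ O, X e < X e') ∧
  (∀ e ∈ B, c < X e ∧ ∀ e' ∈ I ++ O, X e' < X e) ∧
  I.Pairwise (fun e e' => X e < X e') ∧ O.Pairwise (fun e e' => X e < X e') ∧
  Straight X c I (pol I.length O.length).1 ∧ Straight X c O (pol I.length O.length).2 ∧
  (∀ e ∈ I, ∀ e' ∈ O, X e = X e' → X e = c)

/-- A sweep together with abscissae of vertices and edges. -/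
def LayRun (R : V → V → Prop) (pol : Policy V) (x : V → ℚ) (X : V × V → ℚ) :
    List (V × V) → List V → Prop
  | L, [] => L = []
  | L, v :: Q => ∃ A I O B : List (V × V), L = A ++ I ++ B ∧ (∀ e ∈ I, e.2 = v) ∧
      (∀ e ∈ A, e.2 ≠ v) ∧ (∀ e ∈ B, e.2 ≠ v) ∧ (∀ e ∈ O, e.1 = v) ∧ O.Nodup ∧
      (∀ w, (v, w) ∈ O ↔ R v w ∧ w ∈ Q) ∧ LocalLay (pol v) (x v) X A I O B ∧
      LayRun R pol x X (A ++ O ++ B) Q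

lemma exists_delta (l : List ℚ) : ∃ δ : ℚ, 0 < δ ∧ ∀ q ∈ l, q ≠ 0 → δ ≤ |q| := by
  induction l with
  | nil => exact ⟨1, one_pos, by simp⟩
  | cons a l ih =>
    obtain ⟨δ, h1, h2⟩ := ih
    by_cases ha : a = 0
    · refine ⟨δ, h1, ?_⟩
      intro q hq hq0
      rcases List.mem_cons.1 hq with rfl | hq
      · exact absurd ha hq0
      · exact h2 q hq hq0
    · refine ⟨min δ |a|, lt_min h1 (abs_pos.2 ha), ?_⟩
      intro q hq hq0
      rcases List.mem_cons.1 hq with rfl | hq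
      · exact min_le_right _ _
      · exact (min_le_left _ _).trans (h2 q hq hq0)

lemma exists_between_lists (A B : List ℚ) (h : ∀ a ∈ A, ∀ b ∈ B, a < b) :
    ∃ q, (∀ a ∈ A, a < q) ∧ (∀ b ∈ B, q < b) := by
  obtain ⟨q, h1, h2⟩ := Order.exists_between_finsets A.toFinset B.toFinset
    (by simpa using h)
  exact ⟨q, by simpa using h1, by simpa using h2⟩

/-- The abscissae of a sweep can be chosen one vertex after the other: the edges leaving a vertex
are spread over an interval so small that it contains nothing else. -/
lemma Run.exists_layRun (R : V → V → Prop) (pol : Policy V)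
    (hpol : ∀ v i o, (0 < i → (pol v i o).1 < i) ∧ (0 < o → (pol v i o).2 < o)) :
    ∀ (Q : List V) (L : List (V × V)) (x₀ : V → ℚ) (X₀ : V × V → ℚ), Run R L Q → Q.Nodup →
      (∀ e ∈ L, e.1 ∉ Q) → L.Pairwise (fun e e' => X₀ e < X₀ e') →
      ∃ x X, (∀ v ∉ Q, x v = x₀ v) ∧ (∀ e : V × V, e.1 ∉ Q → X e = X₀ e) ∧ LayRun R pol x X L Q
  | [], L, x₀, X₀, h, _, _, _ => ⟨x₀, X₀, fun _ _ => rfl, fun _ _ => rfl, h⟩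
  | v :: Q, L, x₀, X₀, h, hnd, hfr, hpw => by
    classical
    obtain ⟨A, I, O, B, rfl, hI, hA, hB, hO, hOnd, hOm, hrun⟩ := h
    obtain ⟨hv, hnd⟩ := List.nodup_cons.1 hnd
    set li := (pol v I.length O.length).1 with hli
    set lo := (pol v I.length O.length).2 with hlo
    have hpw' := hpw
    rw [List.pairwise_append, List.pairwise_append] at hpw'
    obtain ⟨⟨pA, pI, pAI⟩, pB, pAB⟩ := hpw'
    have hc : ∃ c : ℚ, (∀ e ∈ A, X₀ e < c) ∧ (∀ e ∈ B, c < X₀ e) ∧ Straight X₀ c I li := by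
      by_cases hI0 : I = []
      · obtain ⟨q, h1, h2⟩ := exists_between_lists (A.map X₀) (B.map X₀) (by
          intro a ha b hb
          obtain ⟨e, he, rfl⟩ := List.mem_map.1 ha
          obtain ⟨f, hf, rfl⟩ := List.mem_map.1 hb
          exact pAB e (List.mem_append_left _ he) f hf)
        exact ⟨q, fun e he => h1 _ (List.mem_map_of_mem he),
          fun e he => h2 _ (List.mem_map_of_mem he), Or.inl hI0⟩
      · have hlt : li < I.length := (hpol v _ _).1 (List.length_pos_iff.2 hI0)
        refine ⟨X₀ I[li], fun e he => pAI e he _ (List.getElem_mem hlt),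
          fun e he => pAB _ (List.mem_append_right _ (List.getElem_mem hlt)) e he, Or.inr ?_⟩
        refine ⟨I.take li, I[li], I.drop (li + 1), ?_, rfl, ?_⟩
        · rw [List.getElem_cons_drop, List.take_append_drop]
        · rw [List.length_take]; omega
    obtain ⟨c, cA, cB, cI⟩ := hc
    obtain ⟨δ, hδ, hδ'⟩ := exists_delta ((A ++ I ++ B).map (fun e => X₀ e - c))
    have hδ2 : ∀ e ∈ A ++ I ++ B, X₀ e ≠ c → δ ≤ |X₀ e - c| := fun e he hne =>
      hδ' _ (List.mem_map_of_mem (f := fun e => X₀ e - c) he) (sub_ne_zero.2 hne)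
    set ε := δ / (O.length + 1) with hε
    have hεpos : 0 < ε := by positivity
    let X₁ : V × V → ℚ := fun e => if e.1 = v then c + ((O.idxOf e : ℚ) - lo) * ε else X₀ e
    have hX₁L : ∀ e ∈ A ++ I ++ B, X₁ e = X₀ e := by
      intro e he
      have := hfr e he
      simp only [X₁]
      rw [if_neg]
      rintro rfl; simp at this
    have hX₁O : ∀ e ∈ O, X₁ e = c + ((O.idxOf e : ℚ) - lo) * ε := by
      intro e he; simp only [X₁]; rw [if_pos (hO e he)]
    have hsmall : ∀ e ∈ O, |X₁ e - c| < δ := by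
      intro e he
      have h0 : 0 < O.length := List.length_pos_of_mem he
      have h1 : lo < O.length := (hpol v _ _).2 h0
      have h2 : O.idxOf e < O.length := List.idxOf_lt_length_iff.2 he
      rw [hX₁O e he, add_sub_cancel_left, abs_mul, abs_of_pos hεpos, hε]
      have h3 : |(O.idxOf e : ℚ) - lo| < O.length + 1 := by
        have h1' : (lo : ℚ) < O.length := by exact_mod_cast h1
        have h2' : (O.idxOf e : ℚ) < O.length := by exact_mod_cast h2
        have : (0 : ℚ) ≤ lo := by positivity
        have : (0 : ℚ) ≤ O.idxOf e := by positivity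
        rw [abs_lt]; constructor <;> linarith
      have h4 : (0 : ℚ) < O.length + 1 := by positivity
      rw [mul_div_assoc', div_lt_iff₀ h4, mul_comm]
      exact mul_lt_mul_of_pos_left h3 hδ
    have hpO : O.Pairwise (fun e e' => X₁ e < X₁ e') := by
      rw [List.pairwise_iff_getElem]
      intro i j hi hj hij
      rw [hX₁O _ (List.getElem_mem hi), hX₁O _ (List.getElem_mem hj),
        hOnd.idxOf_getElem, hOnd.idxOf_getElem]
      have : (i : ℚ) < j := by exact_mod_cast hij
      nlinarith
    have hAO : ∀ e ∈ A, ∀ e' ∈ O, X₁ e < X₁ e' := by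
      intro e he e' he'
      have h1 : e ∈ A ++ I ++ B := by simp [he]
      rw [hX₁L e h1]
      have h2 := hsmall e' he'
      have h3 := hδ2 e h1 (cA e he).ne
      rw [abs_lt] at h2
      rw [abs_of_neg (by linarith [cA e he])] at h3
      linarith [h2.1]
    have hBO : ∀ e ∈ B, ∀ e' ∈ O, X₁ e' < X₁ e := by
      intro e he e' he'
      have h1 : e ∈ A ++ I ++ B := by simp [he]
      rw [hX₁L e h1]
      have h2 := hsmall e' he'
      have h3 := hδ2 e h1 (cB e he).ne'
      rw [abs_lt] at h2
      rw [abs_of_pos (by linarith [cB e he])] at h3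
      linarith [h2.2]
    have hpw1 : (A ++ O ++ B).Pairwise (fun e e' => X₁ e < X₁ e') := by
      rw [List.pairwise_append, List.pairwise_append]
      refine ⟨⟨pA.imp_of_mem ?_, hpO, hAO⟩, pB.imp_of_mem ?_, ?_⟩
      · intro a b ha hb hab
        rw [hX₁L a (by simp [ha]), hX₁L b (by simp [hb])]; exact hab
      · intro a b ha hb hab
        rw [hX₁L a (by simp [ha]), hX₁L b (by simp [hb])]; exact hab
      · intro a ha b hb
        rcases List.mem_append.1 ha with ha | ha
        · rw [hX₁L a (by simp [ha]), hX₁L b (by simp [hb])]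
          exact pAB a (List.mem_append_left _ ha) b hb
        · exact hBO b hb a ha
    have hfr1 : ∀ e ∈ A ++ O ++ B, e.1 ∉ Q := by
      intro e he
      simp only [List.mem_append] at he
      rcases he with (he | he) | he
      · have := hfr e (by simp [he]); simp at this; exact this.2
      · rw [hO e he]; exact hv
      · have := hfr e (by simp [he]); simp at this; exact this.2
    obtain ⟨x, X, hx, hX, hlay⟩ := Run.exists_layRun R pol hpol Q (A ++ O ++ B)
      (Function.update x₀ v c) X₁ hrun hnd hfr1 hpw1
    have hxv : x v = c := by rw [hx v hv]; simp
    have hXL : ∀ e ∈ A ++ I ++ B, X e = X₀ e := by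
      intro e he
      have := hfr e he
      simp at this
      rw [hX e this.2, hX₁L e he]
    have hXO : ∀ e ∈ O, X e = X₁ e := fun e he => hX e (by rw [hO e he]; exact hv)
    refine ⟨x, X, ?_, ?_, A, I, O, B, rfl, hI, hA, hB, hO, hOnd, hOm, ?_, hlay⟩
    · intro u hu
      simp at hu
      rw [hx u hu.2, Function.update_of_ne hu.1]
    · intro e he
      simp at he
      rw [hX e he.2]
      simp only [X₁]; rw [if_neg he.1]
    · rw [hxv]
      refine ⟨?_, ?_, ?_, ?_, ?_, ?_, ?_⟩
      · intro e he
        rw [hXL e (by simp [he])]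
        refine ⟨cA e he, fun e' he' => ?_⟩
        rcases List.mem_append.1 he' with h | h
        · rw [hXL e' (by simp [h])]; exact pAI e he e' h
        · rw [hXO e' h, ← hX₁L e (by simp [he])]; exact hAO e he e' h
      · intro e he
        rw [hXL e (by simp [he])]
        refine ⟨cB e he, fun e' he' => ?_⟩
        rcases List.mem_append.1 he' with h | h
        · rw [hXL e' (by simp [h])]; exact pAB e' (List.mem_append_right _ h) e he
        · rw [hXO e' h, ← hX₁L e (by simp [he])]; exact hBO e he e' h
      · refine pI.imp_of_mem ?_
        intro a b ha hb hab
        rw [hXL a (by simp [ha]), hXL b (by simp [hb])]; exact hab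
      · refine hpO.imp_of_mem ?_
        intro a b ha hb hab
        rw [hXO a ha, hXO b hb]; exact hab
      · rcases cI with h | ⟨I₁, e, I₂, h1, h2, h3⟩
        · exact Or.inl h
        · refine Or.inr ⟨I₁, e, I₂, h1, ?_, h3⟩
          rw [hXL e (by simp [h1]), h2]
      · by_cases hO0 : O = []
        · exact Or.inl hO0
        · have hlt : lo < O.length := (hpol v _ _).2 (List.length_pos_iff.2 hO0)
          refine Or.inr ⟨O.take lo, O[lo], O.drop (lo + 1), ?_, ?_, ?_⟩
          · rw [List.getElem_cons_drop, List.take_append_drop]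
          · rw [hXO _ (List.getElem_mem hlt), hX₁O _ (List.getElem_mem hlt), hOnd.idxOf_getElem]
            ring
          · rw [List.length_take]; omega
      · intro e he e' he' hee
        by_contra hne
        have h1 : e ∈ A ++ I ++ B := by simp [he]
        rw [hXL e h1] at hne hee
        have h2 := hδ2 e h1 hne
        have h3 := hsmall e' he'
        rw [← hXO e' he', ← hee] at h3
        linarith

/-- In a sweep of `P ++ Q` starting at `Q`, every `v ∈ Q` splits the edges as expected. -/
lemma LayRun.local_data (R : V → V → Prop) (pol : Policy V) (x : V → ℚ) (X : V × V → ℚ) :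
    ∀ (Q P : List V) (L : List (V × V)), LayRun R pol x X L Q → (P ++ Q).Nodup →
      (∀ e, e ∈ L ↔ R e.1 e.2 ∧ e.1 ∈ P ∧ e.2 ∈ Q) → L.Nodup →
      ∀ v ∈ Q, ∃ P' Q' A I O B, P ++ Q = P' ++ v :: Q' ∧
        LocalLay (pol v) (x v) X A I O B ∧ I.Nodup ∧ O.Nodup ∧
        (∀ e, e ∈ I ↔ R e.1 v ∧ e.1 ∈ P' ∧ e.2 = v) ∧
        (∀ e, e ∈ O ↔ R v e.2 ∧ e.2 ∈ Q' ∧ e.1 = v) ∧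
        (∀ e, e ∈ A ∨ e ∈ B ↔ R e.1 e.2 ∧ e.1 ∈ P' ∧ e.2 ∈ Q')
  | [], _, _, _, _, _, _, v, hv => by simp at hv
  | u :: Q, P, L, h, hnd, hL, hLnd, v, hv => by
    obtain ⟨A, I, O, B, rfl, hI, hA, hB, hO, hOnd, hOm, hloc, hrun⟩ := h
    have hu : u ∉ P ∧ u ∉ Q := by
      rw [List.nodup_append] at hnd
      have h1 := hnd.2.1
      rw [List.nodup_cons] at h1
      exact ⟨fun h => hnd.2.2 u h u (by simp) rfl, h1.1⟩
    have hLI : ∀ e, e ∈ I ↔ R e.1 u ∧ e.1 ∈ P ∧ e.2 = u := by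
      intro e
      constructor
      · intro he
        have h1 := (hL e).1 (by simp [he])
        have h2 := hI e he
        rw [h2] at h1
        exact ⟨h1.1, h1.2.1, h2⟩
      · rintro ⟨h1, h2, h3⟩
        have h4 := (hL e).2 ⟨by rw [h3]; exact h1, h2, by rw [h3]; simp⟩
        simp only [List.mem_append] at h4
        rcases h4 with (h4 | h4) | h4
        · exact absurd h3 (hA e h4)
        · exact h4
        · exact absurd h3 (hB e h4)
    have hLO : ∀ e, e ∈ O ↔ R u e.2 ∧ e.2 ∈ Q ∧ e.1 = u := by
      rintro ⟨a, b⟩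
      constructor
      · intro he
        have h1 := hO _ he
        simp only at h1
        subst h1
        have h2 := (hOm b).1 he
        exact ⟨h2.1, h2.2, rfl⟩
      · rintro ⟨h1, h2, h3⟩
        simp only at h3
        subst h3
        exact (hOm b).2 ⟨h1, h2⟩
    have hLAB : ∀ e, e ∈ A ∨ e ∈ B ↔ R e.1 e.2 ∧ e.1 ∈ P ∧ e.2 ∈ Q := by
      intro e
      constructor
      · intro he
        have h1 := (hL e).1 (by simp; tauto)
        have h2 : e.2 ≠ u := he.elim (hA e) (hB e)
        refine ⟨h1.1, h1.2.1, ?_⟩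
        rcases List.mem_cons.1 h1.2.2 with h3 | h3
        · exact absurd h3 h2
        · exact h3
      · rintro ⟨h1, h2, h3⟩
        have h4 := (hL e).2 ⟨h1, h2, List.mem_cons_of_mem _ h3⟩
        simp only [List.mem_append] at h4
        rcases h4 with (h4 | h4) | h4
        · exact Or.inl h4
        · exact absurd (hI e h4) (fun h => hu.2 (h ▸ h3))
        · exact Or.inr h4
    rw [List.nodup_append, List.nodup_append] at hLnd
    obtain ⟨⟨nA, nI, dAI⟩, nB, dAB⟩ := hLnd
    rcases List.mem_cons.1 hv with rfl | hv
    · exact ⟨P, Q, A, I, O, B, rfl, hloc, nI, hOnd, hLI, hLO, hLAB⟩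
    · have := LayRun.local_data R pol x X Q (P ++ [u]) (A ++ O ++ B) hrun (by simpa using hnd)
        (by
          intro e
          have e1 := hLAB e
          have e2 := hLO e
          simp only [List.mem_append, List.mem_singleton]
          constructor
          · rintro ((h | h) | h)
            · have := e1.1 (Or.inl h); tauto
            · have := e2.1 h; rw [this.2.2]; tauto
            · have := e1.1 (Or.inr h); tauto
          · rintro ⟨h1, h2 | h2, h3⟩
            · have := e1.2 ⟨h1, h2, h3⟩; tauto
            · have := e2.2 ⟨h2 ▸ h1, h3, h2⟩; tauto)
        (by
          rw [List.nodup_append, List.nodup_append]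
          have hOP : ∀ e ∈ O, ∀ e', e' ∈ A ∨ e' ∈ B → e' ≠ e := by
            rintro e he e' he' rfl
            exact hu.1 (hO _ he ▸ ((hLAB _).1 he').2.1)
          refine ⟨⟨nA, hOnd, fun a ha b hb => hOP b hb a (Or.inl ha)⟩, nB, fun a ha b hb => ?_⟩
          rcases List.mem_append.1 ha with ha | ha
          · exact dAB a (by simp [ha]) b hb
          · exact (hOP a ha b (Or.inr hb)).symm) v hv
      simpa using this

end Sweep

/-! ### Slopes -/

/-- Layouts only depend on the relative order of the abscissae. -/
def Layout.map {V : Type*} {G : SimpleGraph V} {α β : Type*} [LinearOrder α] [LinearOrder β]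
    (Λ : Layout G α) (f : α → β) (T : Set α) (hf : StrictMonoOn f T) (hx : ∀ v, Λ.x v ∈ T)
    (hX : ∀ u v, Λ.X u v ∈ T) : Layout G β where
  x v := f (Λ.x v)
  h := Λ.h
  X u v := f (Λ.X u v)
  k := Λ.k
  h_inj := Λ.h_inj
  X_symm u v := by rw [Λ.X_symm]
  pass u w v h1 h2 h3 := by
    simp only [hf.lt_iff_lt (hX _ _) (hx _), hf.lt_iff_lt (hX _ _) (hX _ _),
      hf.lt_iff_lt (hx _) (hX _ _)]
    exact Λ.pass u w v h1 h2 h3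
  sep v a b h1 h2 h3 h4 := by
    have h5 := Λ.sep v a b h1 h2 h3 (hf.injOn (hX _ _) (hX _ _) h4)
    exact ⟨congrArg f h5.1, h5.2⟩
  near v a b h1 h2 h3 h4 := by
    simp only [hf.lt_iff_lt (hX _ _) (hx _), hf.lt_iff_lt (hX _ _) (hX _ _),
      hf.lt_iff_lt (hx _) (hX _ _)] at h4
    exact Λ.near v a b h1 h2 h3 h4
  kcase v a h1 h2 := by
    have := Λ.kcase v a h1 (fun h => h2 (congrArg f h))
    simp only [hf.lt_iff_lt (hx _) (hX _ _)]
    exact this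

section Slopes

variable {V : Type*} [Fintype V] (G : SimpleGraph V) (h : V → ℤ) {α : Type*} [LinearOrder α]
  (x : V → α) (Y : V → V → α)

/-- At `v`, the edge to `b` is on the same side as the edge to `a`, and strictly nearer. -/
def Nearer (v b a : V) : Prop :=
  (x v < Y v b ∧ Y v b < Y v a) ∨ (Y v a < Y v b ∧ Y v b < x v)

open Classical in
/-- The nearer edges entering `v`. -/
noncomputable def nearIn (v a : V) : Finset V := {b | G.Adj v b ∧ h b < h v ∧ Nearer x Y v b a}

open Classical in
/-- The nearer edges leaving `v`. -/
noncomputable def nearOut (v a : V) : Finset V := {b | G.Adj v b ∧ h v < h b ∧ Nearer x Y v b a}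

open Classical in
/-- The neighbours of `v` whose edges lie to the left of `v`. -/
noncomputable def leftNbrs (v : V) : Finset V := {b | G.Adj v b ∧ Y v b < x v}

open Classical in
/-- The neighbours of `v` whose edges lie to the right of `v`. -/
noncomputable def rightNbrs (v : V) : Finset V := {b | G.Adj v b ∧ x v < Y v b}

/-- The edges on either side of a vertex are assigned slopes: those entering from below get
`-1, 0, 1, 2` and those leaving get `1, 0, -1, -2`, from the nearest to the farthest. -/
lemma exists_layout (h_inj : Function.Injective h) (Y_symm : ∀ u v, Y u v = Y v u)
    (pass : ∀ u w v, G.Adj u w → h u < h v → h v < h w →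
      (Y u w < x v ∧ ∀ b, G.Adj v b → Y u w < Y v b) ∨
      (x v < Y u w ∧ ∀ b, G.Adj v b → Y v b < Y u w))
    (sep : ∀ v a b, G.Adj v a → G.Adj v b → a ≠ b → Y v a = Y v b →
      Y v a = x v ∧ ((h a < h v ∧ h v < h b) ∨ (h b < h v ∧ h v < h a)))
    (hleft : ∀ v, (leftNbrs G x Y v).card ≤ 3)
    (hright : ∀ v, (rightNbrs G x Y v).card ≤ 3 ∨ ((rightNbrs G x Y v).card = 4 ∧
      ((∀ b, G.Adj v b → h b < h v) ∨ (∀ b, G.Adj v b → h v < h b)))) :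
    ∃ Λ : Layout G α, Λ.x = x ∧ Λ.h = h ∧ Λ.X = Y ∧ ∀ v a, G.Adj v a → Y v a ≠ x v →
      (Λ.k v a = 2 ∨ Λ.k v a = -2) → (rightNbrs G x Y v).card = 4 := by
  classical
  have hne : ∀ v a, G.Adj v a → h v < h a ∨ h a < h v := fun v a hva =>
    lt_or_gt_of_ne (fun hva_eq => hva.ne (h_inj hva_eq))
  -- the nearer edges of either kind and the edges themselves all lie on one side
  have sub : ∀ v a b, G.Adj v a → G.Adj v b → (Nearer x Y v a b) → ∀ c,
      (c = a ∨ c = b ∨ (G.Adj v c ∧ (Nearer x Y v c a ∨ Nearer x Y v c b))) →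
      (x v < Y v a → c ∈ rightNbrs G x Y v) ∧ (Y v a < x v → c ∈ leftNbrs G x Y v) := by
    intro v a b ha hb hn c hc
    simp only [rightNbrs, leftNbrs, Finset.mem_filter, Finset.mem_univ, true_and]
    unfold Nearer at *
    grind
  have mixed : ∀ v a b, G.Adj v a → G.Adj v b → Nearer x Y v a b →
      ∀ S T : Finset V, (∀ c ∈ S, G.Adj v c ∧ (Nearer x Y v c a ∨ Nearer x Y v c b)) →
      (∀ c ∈ T, G.Adj v c ∧ (Nearer x Y v c a ∨ Nearer x Y v c b)) →
      a ∉ S → a ∉ T → b ∉ S → b ∉ T → Disjoint S T → a ≠ b →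
      (h a < h v ∧ h v < h b ∨ h v < h a ∧ h b < h v) → S.card + T.card < 2 := by
    intro v a b ha hb hn S T hS hT haS haT hbS hbT hST hab hh
    have hcard : (insert a (insert b (S ∪ T))).card = S.card + T.card + 2 := by
      rw [Finset.card_insert_of_notMem, Finset.card_insert_of_notMem,
        Finset.card_union_of_disjoint hST]
      · simp [hbS, hbT]
      · simp [hab, haS, haT]
    have hmem : ∀ c ∈ insert a (insert b (S ∪ T)),
        (x v < Y v a → c ∈ rightNbrs G x Y v) ∧ (Y v a < x v → c ∈ leftNbrs G x Y v) := by
      intro c hc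
      refine sub v a b ha hb hn c ?_
      simp only [Finset.mem_insert, Finset.mem_union] at hc
      rcases hc with hc | hc | hc | hc
      · exact Or.inl hc
      · exact Or.inr (Or.inl hc)
      · exact Or.inr (Or.inr (hS c hc))
      · exact Or.inr (Or.inr (hT c hc))
    rcases hn with hn | hn
    · have := Finset.card_le_card (fun c hc => (hmem c hc).1 hn.1)
      rcases hright v with h3 | ⟨-, h3 | h3⟩
      · omega
      · have := h3 a ha; have := h3 b hb; omega
      · have := h3 a ha; have := h3 b hb; omega
    · have := Finset.card_le_card (fun c hc => (hmem c hc).2 hn.2)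
      have := hleft v
      omega
  have irr : ∀ v a, ¬ Nearer x Y v a a := by
    intro v a ha; unfold Nearer at ha; grind
  have tr : ∀ v a b c, Nearer x Y v a b → Nearer x Y v c a → Nearer x Y v c b := by
    intro v a b c; unfold Nearer; grind
  have asym : ∀ v a b, Nearer x Y v a b → ¬ Nearer x Y v b a := by
    intro v a b; unfold Nearer; grind
  have bnd : ∀ v a, G.Adj v a → Y v a ≠ x v → ∀ S : Finset V,
      (∀ c ∈ S, G.Adj v c ∧ Nearer x Y v c a) → S.card ≤ 2 ∨ (S.card = 3 ∧ x v < Y v a ∧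
        (rightNbrs G x Y v).card = 4 ∧
        ((∀ b, G.Adj v b → h b < h v) ∨ (∀ b, G.Adj v b → h v < h b))) := by
    intro v a ha hY S hS
    have haS : a ∉ S := fun h' => irr v a (hS a h').2
    have hc : (insert a S).card = S.card + 1 := Finset.card_insert_of_notMem haS
    rcases lt_or_gt_of_ne hY with hlt | hlt
    · have : insert a S ⊆ leftNbrs G x Y v := by
        intro c hc
        simp only [leftNbrs, Finset.mem_filter, Finset.mem_univ, true_and]
        rcases Finset.mem_insert.1 hc with rfl | hc
        · exact ⟨ha, hlt⟩
        · have := hS c hc; unfold Nearer at this; grind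
      have := Finset.card_le_card this
      have := hleft v
      left; omega
    · have : insert a S ⊆ rightNbrs G x Y v := by
        intro c hc
        simp only [rightNbrs, Finset.mem_filter, Finset.mem_univ, true_and]
        rcases Finset.mem_insert.1 hc with rfl | hc
        · exact ⟨ha, hlt⟩
        · have := hS c hc; unfold Nearer at this; grind
      have := Finset.card_le_card this
      rcases hright v with h3 | ⟨h3, h4⟩
      · left; omega
      · by_cases hS3 : S.card ≤ 2
        · exact Or.inl hS3
        · exact Or.inr ⟨by omega, hlt, h3, h4⟩
  let k : V → V → ℤ := fun v a =>
    if h a < h v then -1 + (nearIn G h x Y v a).card else 1 - (nearOut G h x Y v a).card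
  have kin : ∀ v a, h a < h v → k v a = -1 + (nearIn G h x Y v a).card := fun v a hh => if_pos hh
  have kout : ∀ v a, h v < h a → k v a = 1 - (nearOut G h x Y v a).card :=
    fun v a hh => if_neg (by omega)
  have kb : ∀ v a, G.Adj v a → Y v a ≠ x v →
    (-1 ≤ k v a ∧ k v a ≤ 1) ∨
    (k v a = 2 ∧ x v < Y v a ∧ (rightNbrs G x Y v).card = 4 ∧ ∀ b, G.Adj v b → h b < h v) ∨
    (k v a = -2 ∧ x v < Y v a ∧ (rightNbrs G x Y v).card = 4 ∧ ∀ b, G.Adj v b → h v < h b) := by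
    intro v a ha hY
    rcases hne v a ha with hh | hh
    · rw [kout v a hh]
      rcases bnd v a ha hY (nearOut G h x Y v a) (by
        intro c hc; simp only [nearOut, Finset.mem_filter] at hc; tauto) with h1 | ⟨h1, h2, h3, h4⟩
      · left; omega
      · right; right
        refine ⟨by omega, h2, h3, ?_⟩
        rcases h4 with h4 | h4
        · have := h4 a ha; omega
        · exact h4
    · rw [kin v a hh]
      rcases bnd v a ha hY (nearIn G h x Y v a) (by
        intro c hc; simp only [nearIn, Finset.mem_filter] at hc; tauto) with h1 | ⟨h1, h2, h3, h4⟩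
      · left; omega
      · right; left
        refine ⟨by omega, h2, h3, ?_⟩
        rcases h4 with h4 | h4
        · exact h4
        · have := h4 a ha; omega
  refine ⟨⟨x, h, Y, k, h_inj, Y_symm, pass, sep, ?_, ?_⟩, rfl, rfl, rfl, ?_⟩
  · intro v a b ha hb hab hn
    have hn : Nearer x Y v a b := hn
    have memIn : ∀ c d, c ∈ nearIn G h x Y v d ↔ (G.Adj v c ∧ h c < h v ∧ Nearer x Y v c d) := by
      intro c d; simp [nearIn]
    have memOut : ∀ c d, c ∈ nearOut G h x Y v d ↔ (G.Adj v c ∧ h v < h c ∧ Nearer x Y v c d) := by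
      intro c d; simp [nearOut]
    constructor
    · intro hh
      rw [kout v a hh]
      rcases hne v b hb with hh' | hh'
      · rw [kout v b hh']
        have : nearOut G h x Y v a ⊂ nearOut G h x Y v b := by
          rw [Finset.ssubset_iff_of_subset]
          · exact ⟨a, (memOut _ _).2 ⟨ha, hh, hn⟩, fun h' => irr v a ((memOut _ _).1 h').2.2⟩
          · intro c hc
            obtain ⟨c1, c2, c3⟩ := (memOut _ _).1 hc
            exact (memOut _ _).2 ⟨c1, c2, tr v a b c hn c3⟩
        have := Finset.card_lt_card this
        omega
      · rw [kin v b hh']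
        have := mixed v a b ha hb hn (nearOut G h x Y v a) (nearIn G h x Y v b)
          (fun c hc => by have := (memOut _ _).1 hc; tauto)
          (fun c hc => by have := (memIn _ _).1 hc; tauto)
          (fun h' => irr v a ((memOut _ _).1 h').2.2)
          (fun h' => by have := ((memIn _ _).1 h').2.1; omega)
          (fun h' => by have := ((memOut _ _).1 h').2.1; omega)
          (fun h' => irr v b ((memIn _ _).1 h').2.2)
          (Finset.disjoint_left.2 fun c h1 h2 => by
            have := ((memOut _ _).1 h1).2.1; have := ((memIn _ _).1 h2).2.1; omega)
          hab (Or.inr ⟨hh, hh'⟩)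
        omega
    · intro hh
      rw [kin v a hh]
      rcases hne v b hb with hh' | hh'
      · rw [kout v b hh']
        have := mixed v a b ha hb hn (nearIn G h x Y v a) (nearOut G h x Y v b)
          (fun c hc => by have := (memIn _ _).1 hc; tauto)
          (fun c hc => by have := (memOut _ _).1 hc; tauto)
          (fun h' => irr v a ((memIn _ _).1 h').2.2)
          (fun h' => by have := ((memOut _ _).1 h').2.1; omega)
          (fun h' => by have := ((memIn _ _).1 h').2.1; omega)
          (fun h' => irr v b ((memOut _ _).1 h').2.2)
          (Finset.disjoint_left.2 fun c h1 h2 => by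
            have := ((memIn _ _).1 h1).2.1; have := ((memOut _ _).1 h2).2.1; omega)
          hab (Or.inl ⟨hh, hh'⟩)
        omega
      · rw [kin v b hh']
        have : nearIn G h x Y v a ⊂ nearIn G h x Y v b := by
          rw [Finset.ssubset_iff_of_subset]
          · exact ⟨a, (memIn _ _).2 ⟨ha, hh, hn⟩, fun h' => irr v a ((memIn _ _).1 h').2.2⟩
          · intro c hc
            obtain ⟨c1, c2, c3⟩ := (memIn _ _).1 hc
            exact (memIn _ _).2 ⟨c1, c2, tr v a b c hn c3⟩
        have := Finset.card_lt_card this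
        omega
  · intro v a ha hY
    rcases kb v a ha hY with h1 | h1 | h1
    · exact Or.inl h1
    · exact Or.inr (Or.inl ⟨h1.1, h1.2.1, h1.2.2.2⟩)
    · exact Or.inr (Or.inr ⟨h1.1, h1.2.1, h1.2.2.2⟩)
  · intro v a ha hY hk
    rcases kb v a ha hY with h1 | h1 | h1
    · simp only at hk; omega
    · exact h1.2.2.1
    · exact h1.2.2.1

end Slopes

/-! ### Drawing a sweep -/

section Order

variable {V : Type*}

/-- The vertex `a` precedes `b` in the list `ord`. -/
abbrev Bef (ord : List V) (a b : V) : Prop := [a, b].Sublist ord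

lemma sub_iff_left {ord P Q : List V} {v a : V} (hnd : ord.Nodup) (h : ord = P ++ v :: Q) :
    Bef ord a v ↔ a ∈ P := by
  subst h
  rw [List.nodup_append] at hnd
  obtain ⟨h1, h2, h3⟩ := hnd
  rw [List.nodup_cons] at h2
  constructor
  · intro h
    rw [Bef, List.sublist_append_iff] at h
    obtain ⟨l1, l2, h4, h5, h6⟩ := h
    rcases l1 with _ | ⟨b, l1⟩
    · simp only [List.nil_append] at h4
      subst h4
      rcases List.sublist_cons_iff.1 h6 with h7 | ⟨r, h7, h8⟩
      · exact absurd (h7.subset (by simp)) h2.1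
      · simp only [List.cons.injEq] at h7
        obtain ⟨rfl, rfl⟩ := h7
        exact absurd (h8.subset (by simp)) h2.1
    · simp only [List.cons_append, List.cons.injEq] at h4
      obtain ⟨rfl, -⟩ := h4
      exact h5.subset (by simp)
  · intro h
    exact (List.singleton_sublist.2 h).append (List.singleton_sublist.2 (by simp : v ∈ v :: Q))

lemma sub_iff_right {ord P Q : List V} {v a : V} (hnd : ord.Nodup) (h : ord = P ++ v :: Q) :
    Bef ord v a ↔ a ∈ Q := by
  have := sub_iff_left (ord := ord.reverse) (P := Q.reverse) (Q := P.reverse) (v := v) (a := a)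
    (List.nodup_reverse.2 hnd) (by simp [h])
  rw [List.mem_reverse] at this
  rw [← this, Bef, Bef, ← List.reverse_sublist]
  simp

lemma sub_iff_idxOf [DecidableEq V] {ord : List V} {a b : V} (hnd : ord.Nodup) (hb : b ∈ ord) :
    Bef ord a b ↔ ord.idxOf a < ord.idxOf b := by
  obtain ⟨P, Q, rfl⟩ := List.append_of_mem hb
  rw [sub_iff_left hnd rfl]
  rw [List.nodup_append] at hnd
  obtain ⟨h1, h2, h3⟩ := hnd
  have hbP : b ∉ P := fun h => h3 b h b (by simp) rfl
  rw [List.idxOf_append_of_notMem hbP, List.idxOf_cons_self, add_zero]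
  constructor
  · intro h
    rw [List.idxOf_append_of_mem h]
    exact List.idxOf_lt_length_iff.2 h
  · intro h
    by_contra h'
    rw [List.idxOf_append_of_notMem h'] at h
    omega

end Order

section Draw

variable {V : Type*} (G : SimpleGraph V)

/-- The number of neighbours of `v` preceding it in the list `ord`. -/
noncomputable def iD (ord : List V) (v : V) : ℕ := {a | G.Adj v a ∧ Bef ord a v}.ncard

/-- The number of neighbours of `v` following it in the list `ord`. -/
noncomputable def oD (ord : List V) (v : V) : ℕ := {a | G.Adj v a ∧ Bef ord v a}.ncard

/-- The number of bends charged to a vertex with `i` entering and `o` leaving edges: one bend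
per edge which is not straight, and an additional bend if there are eight edges which all enter or
all leave the vertex. -/
def cst (i o : ℕ) : ℕ := (i - 1) + (o - 1) + if i + o = 8 ∧ (i = 0 ∨ o = 0) then 1 else 0

/-- The policy spreading the edges evenly over both sides of a vertex. -/
def stdPol (i o : ℕ) : ℕ × ℕ :=
  if i = 0 then (0, min 3 (o - 1)) else if o = 0 then (min 3 (i - 1), 0)
  else (min (i - 1) (min 3 (i + o - 2)), min 3 (i + o - 2) - min (i - 1) (min 3 (i + o - 2)))

open Classical in
/-- The standard policy, except that nothing is drawn to the left of the vertices in `Z`. -/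
noncomputable def zPol (Z : V → Prop) : Policy V := fun v i o => if Z v then (0, 0) else stdPol i o

lemma zPol_lt (Z : V → Prop) (v : V) (i o : ℕ) :
    (0 < i → (zPol Z v i o).1 < i) ∧ (0 < o → (zPol Z v i o).2 < o) := by
  unfold zPol stdPol
  split_ifs <;> simp <;> omega

lemma zPol_bound (Z : V → Prop) (v : V) (i o : ℕ) (hio : i + o ≤ 8)
    (hZ : Z v → i = 0 ∧ o ≤ 4) :
    (zPol Z v i o).1 + (zPol Z v i o).2 ≤ 3 ∧
    ((i - 1 - (zPol Z v i o).1) + (o - 1 - (zPol Z v i o).2) ≤ 3 ∨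
     ((i - 1 - (zPol Z v i o).1) + (o - 1 - (zPol Z v i o).2) = 4 ∧ i + o = 8 ∧
      (i = 0 ∨ o = 0))) ∧
    (zPol Z v i o).1 + (i - 1 - (zPol Z v i o).1) ≤ i - 1 ∧
    (zPol Z v i o).2 + (o - 1 - (zPol Z v i o).2) ≤ o - 1 := by
  unfold zPol stdPol
  split_ifs with h
  · obtain ⟨rfl, h2⟩ := hZ h
    simp; omega
  all_goals simp; omega

lemma inj_of_pairwise {W α : Type*} [LinearOrder α] {X : W → α} {I : List W}
    (hI : I.Pairwise (fun e e' => X e < X e')) {e f : W} (he : e ∈ I) (hf : f ∈ I)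
    (hef : X e = X f) : e = f := by
  rw [List.pairwise_iff_getElem] at hI
  obtain ⟨i, hi, rfl⟩ := List.getElem_of_mem he
  obtain ⟨j, hj, rfl⟩ := List.getElem_of_mem hf
  rcases lt_trichotomy i j with h | rfl | h
  · exact absurd hef (hI i j hi hj h).ne
  · rfl
  · exact absurd hef (hI j i hj hi h).ne'

lemma Straight.count {X : V × V → ℚ} {c : ℚ} {I : List (V × V)} {n : ℕ}
    (h : Straight X c I n) (hp : I.Pairwise (fun e e' => X e < X e')) :
    (I.filter (fun e => X e < c)).length ≤ n ∧
    (I.filter (fun e => c < X e)).length ≤ I.length - 1 - n ∧ (I ≠ [] → ∃ e ∈ I, X e = c) := by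
  rcases h with rfl | ⟨I₁, e, I₂, rfl, he, rfl⟩
  · simp
  · rw [List.pairwise_append, List.pairwise_cons] at hp
    obtain ⟨h1, ⟨h2, h3⟩, h4⟩ := hp
    have e1 : I₂.filter (fun e => X e < c) = [] := by
      rw [List.filter_eq_nil_iff]
      intro a ha
      have := h2 a ha
      simp; linarith
    have e2 : I₁.filter (fun e => c < X e) = [] := by
      rw [List.filter_eq_nil_iff]
      intro a ha
      have := h4 a ha e (by simp)
      simp; linarith
    refine ⟨?_, ?_, fun _ => ⟨e, by simp, he⟩⟩
    · rw [List.filter_append, List.filter_cons_of_neg (by simp [he]), e1, List.append_nil]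
      exact List.length_filter_le _ _
    · rw [List.filter_append, List.filter_cons_of_neg (by simp [he]), e2, List.nil_append]
      have := List.length_filter_le (fun e => decide (c < X e)) I₂
      simp only [List.length_append, List.length_cons]
      omega

/-- The local structure of a sweep with abscissae, in terms of the graph. -/
lemma Run.exists_abscissae [Fintype V] (ord : List V) (hnd : ord.Nodup) (hall : ∀ v, v ∈ ord)
    (hrun : Run G.Adj [] ord) (Z : V → Prop) (hdeg : ∀ v, iD G ord v + oD G ord v ≤ 8)
    (hZ : ∀ v, Z v → iD G ord v = 0 ∧ oD G ord v ≤ 4) :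
    ∃ (h : V → ℤ) (x : V → ℚ) (Y : V → V → ℚ), (∀ u v, h u < h v ↔ Bef ord u v) ∧
      Function.Injective h ∧ (∀ u v, Y u v = Y v u) ∧
      (∀ u w v, G.Adj u w → h u < h v → h v < h w →
        (Y u w < x v ∧ ∀ b, G.Adj v b → Y u w < Y v b) ∨
        (x v < Y u w ∧ ∀ b, G.Adj v b → Y v b < Y u w)) ∧
      (∀ v a b, G.Adj v a → G.Adj v b → a ≠ b → Y v a = Y v b →
        Y v a = x v ∧ ((h a < h v ∧ h v < h b) ∨ (h b < h v ∧ h v < h a))) ∧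
      (∀ v, (leftNbrs G x Y v).card ≤ 3) ∧
      (∀ v, (rightNbrs G x Y v).card ≤ 3 ∨ ((rightNbrs G x Y v).card = 4 ∧
        iD G ord v + oD G ord v = 8 ∧ (iD G ord v = 0 ∨ oD G ord v = 0))) ∧
      (∀ v, (leftNbrs G x Y v).card + (rightNbrs G x Y v).card ≤
        (iD G ord v - 1) + (oD G ord v - 1)) ∧
      (∀ v, Z v → (leftNbrs G x Y v).card = 0) := by
  classical
  obtain ⟨x, X, -, -, hlay⟩ := Run.exists_layRun G.Adj (zPol Z) (zPol_lt Z) ord [] (fun _ => 0)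
    (fun _ => 0) hrun hnd (by simp) (by simp)
  have hloc := LayRun.local_data G.Adj (zPol Z) x X ord [] [] hlay (by simpa using hnd) (by simp)
    (by simp)
  set h : V → ℤ := fun v => (ord.idxOf v : ℤ) with hh
  set Y : V → V → ℚ := fun v a => if h v < h a then X (v, a) else X (a, v) with hY
  have hbef : ∀ u v, h u < h v ↔ Bef ord u v := by
    intro u v
    rw [sub_iff_idxOf hnd (hall v)]
    simp [hh]
  have hinj : Function.Injective h := by
    intro u v huv
    simp only [hh, Nat.cast_inj] at huv
    exact (List.idxOf_inj (hall u)).1 huv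
  have hY1 : ∀ u v, h u < h v → Y u v = X (u, v) := fun u v huv => if_pos huv
  have hY2 : ∀ u v, h u < h v → Y v u = X (u, v) := fun u v huv => if_neg (not_lt.2 huv.le)
  have hsymm : ∀ u v, Y u v = Y v u := by
    intro u v
    rcases lt_trichotomy (h u) (h v) with huv | huv | huv
    · rw [hY1 u v huv, hY2 u v huv]
    · rw [hinj huv]
    · rw [hY1 v u huv, hY2 v u huv]
  have hnb : ∀ v a, G.Adj v a → h a < h v ∨ h v < h a := fun v a hva =>
    lt_or_gt_of_ne (fun h' => hva.ne (hinj h'.symm))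
  have main : ∀ v, ∃ A I O B, LocalLay (zPol Z v) (x v) X A I O B ∧
      (∀ a, (a, v) ∈ I ↔ G.Adj v a ∧ h a < h v) ∧ (∀ a, (v, a) ∈ O ↔ G.Adj v a ∧ h v < h a) ∧
      (∀ e ∈ I, e.2 = v) ∧ (∀ e ∈ O, e.1 = v) ∧
      (∀ u w, G.Adj u w → h u < h v → h v < h w → (u, w) ∈ A ∨ (u, w) ∈ B) ∧
      I.length = iD G ord v ∧ O.length = oD G ord v := by
    intro v
    obtain ⟨P', Q', A, I, O, B, heq, hl, hIn, hOn, hI, hO, hAB⟩ := hloc v (hall v)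
    rw [List.nil_append] at heq
    have b1 : ∀ a, a ∈ P' ↔ h a < h v := fun a => by rw [hbef, sub_iff_left hnd heq]
    have b2 : ∀ a, a ∈ Q' ↔ h v < h a := fun a => by rw [hbef, sub_iff_right hnd heq]
    refine ⟨A, I, O, B, hl, ?_, ?_, fun e he => ((hI e).1 he).2.2, fun e he => ((hO e).1 he).2.2,
      ?_, ?_, ?_⟩
    · intro a; rw [hI]; simp [b1, G.adj_comm]
    · intro a; rw [hO]; simp [b2]
    · intro u w h1 h2 h3; rw [hAB]; exact ⟨h1, (b1 u).2 h2, (b2 w).2 h3⟩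
    · rw [← List.toFinset_card_of_nodup hIn, iD]
      have : {a | G.Adj v a ∧ Bef ord a v} = ((I.toFinset.image Prod.fst : Finset V) : Set V) := by
        ext a
        simp only [Set.mem_ofPred_eq, Finset.coe_image, List.coe_toFinset, Set.mem_image,
          Prod.exists, exists_and_right, exists_eq_right]
        rw [← hbef]
        constructor
        · rintro ⟨h1, h2⟩; exact ⟨v, (hI _).2 ⟨h1.symm, (b1 a).2 h2, rfl⟩⟩
        · rintro ⟨b, hb⟩
          have := (hI _).1 hb
          exact ⟨this.1.symm, (b1 a).1 this.2.1⟩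
      rw [this, Set.ncard_coe_finset, Finset.card_image_of_injOn]
      intro e he f hf hef
      have := (hI e).1 (by simpa using he)
      have := (hI f).1 (by simpa using hf)
      exact Prod.ext hef (by grind)
    · rw [← List.toFinset_card_of_nodup hOn, oD]
      have : {a | G.Adj v a ∧ Bef ord v a} = ((O.toFinset.image Prod.snd : Finset V) : Set V) := by
        ext a
        simp only [Set.mem_ofPred_eq, Finset.coe_image, List.coe_toFinset, Set.mem_image,
          Prod.exists, exists_eq_right]
        rw [← hbef]
        constructor
        · rintro ⟨h1, h2⟩; exact ⟨v, (hO _).2 ⟨h1, (b2 a).2 h2, rfl⟩⟩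
        · rintro ⟨b, hb⟩
          have := (hO _).1 hb
          exact ⟨this.1, (b2 a).1 this.2.1⟩
      rw [this, Set.ncard_coe_finset, Finset.card_image_of_injOn]
      intro e he f hf hef
      have := (hO e).1 (by simpa using he)
      have := (hO f).1 (by simpa using hf)
      exact Prod.ext (by grind) hef
  have cards : ∀ v, (leftNbrs G x Y v).card ≤ (zPol Z v (iD G ord v) (oD G ord v)).1 +
      (zPol Z v (iD G ord v) (oD G ord v)).2 ∧ (rightNbrs G x Y v).card ≤
      (iD G ord v - 1 - (zPol Z v (iD G ord v) (oD G ord v)).1) +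
      (oD G ord v - 1 - (zPol Z v (iD G ord v) (oD G ord v)).2) := by
    intro v
    obtain ⟨A, I, O, B, ⟨-, -, hI, hO, sI, sO, -⟩, mI, mO, -, -, -, lI, lO⟩ := main v
    rw [lI, lO] at sI sO
    have cI := sI.count hI
    have cO := sO.count hO
    rw [lI] at cI
    rw [lO] at cO
    have gen : ∀ (p : ℚ → Bool) (S : Finset V), (∀ a ∈ S, G.Adj v a ∧ p (Y v a) = true) →
        S.card ≤ (I.filter (fun e => p (X e))).length + (O.filter (fun e => p (X e))).length := by
      intro p S hS
      have hsub : S ⊆ ((I.filter (fun e => p (X e))).map Prod.fst ++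
          (O.filter (fun e => p (X e))).map Prod.snd).toFinset := by
        intro a ha
        obtain ⟨h1, h2⟩ := hS a ha
        rw [List.mem_toFinset, List.mem_append, List.mem_map, List.mem_map]
        rcases hnb v a h1 with h3 | h3
        · left
          refine ⟨(a, v), ?_, rfl⟩
          rw [List.mem_filter, mI, ← hY2 a v h3]
          exact ⟨⟨h1, h3⟩, h2⟩
        · right
          refine ⟨(v, a), ?_, rfl⟩
          rw [List.mem_filter, mO, ← hY1 v a h3]
          exact ⟨⟨h1, h3⟩, h2⟩
      have h1 := Finset.card_le_card hsub
      have h2 := List.toFinset_card_le ((I.filter (fun e => p (X e))).map Prod.fst ++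
          (O.filter (fun e => p (X e))).map Prod.snd)
      simp only [List.length_append, List.length_map] at h2
      omega
    have g1 := gen (fun q => q < x v) (leftNbrs G x Y v) (by simp [leftNbrs])
    have g2 := gen (fun q => x v < q) (rightNbrs G x Y v) (by simp [rightNbrs])
    constructor
    · exact g1.trans (add_le_add cI.1 cO.1)
    · exact g2.trans (add_le_add cI.2.1 cO.2.1)
  have bnd := fun v => zPol_bound Z v _ _ (hdeg v) (hZ v)
  refine ⟨h, x, Y, hbef, hinj, hsymm, ?_, ?_, ?_, ?_, ?_, ?_⟩
  · intro u w v huw h1 h2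
    obtain ⟨A, I, O, B, ⟨hA, hB, -⟩, mI, mO, -, -, hAB, -⟩ := main v
    rw [hY1 u w (h1.trans h2)]
    have hmem : ∀ b, G.Adj v b → ∃ e ∈ I ++ O, X e = Y v b := by
      intro b hb
      rcases hnb v b hb with h3 | h3
      · exact ⟨(b, v), List.mem_append_left _ ((mI b).2 ⟨hb, h3⟩), (hY2 _ _ h3).symm⟩
      · exact ⟨(v, b), List.mem_append_right _ ((mO b).2 ⟨hb, h3⟩), (hY1 _ _ h3).symm⟩
    rcases hAB u w huw h1 h2 with h3 | h3
    · left
      refine ⟨(hA _ h3).1, fun b hb => ?_⟩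
      obtain ⟨e, he, he'⟩ := hmem b hb
      rw [← he']; exact (hA _ h3).2 e he
    · right
      refine ⟨(hB _ h3).1, fun b hb => ?_⟩
      obtain ⟨e, he, he'⟩ := hmem b hb
      rw [← he']; exact (hB _ h3).2 e he
  · intro v a b ha hb hab hYab
    obtain ⟨A, I, O, B, ⟨-, -, hI, hO, -, -, hInOut⟩, mI, mO, -⟩ := main v
    have injI : ∀ e ∈ I, ∀ f ∈ I, X e = X f → e = f := by
      exact fun e he f hf => inj_of_pairwise hI he hf
    have injO : ∀ e ∈ O, ∀ f ∈ O, X e = X f → e = f := by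
      exact fun e he f hf => inj_of_pairwise hO he hf
    rcases hnb v a ha with h1 | h1 <;> rcases hnb v b hb with h2 | h2
    · rw [hY2 _ _ h1, hY2 _ _ h2] at hYab
      have := injI _ ((mI a).2 ⟨ha, h1⟩) _ ((mI b).2 ⟨hb, h2⟩) hYab
      exact absurd (congrArg Prod.fst this) hab
    · rw [hY2 _ _ h1, hY1 _ _ h2] at hYab
      rw [hY2 _ _ h1]
      exact ⟨hInOut _ ((mI a).2 ⟨ha, h1⟩) _ ((mO b).2 ⟨hb, h2⟩) hYab, Or.inl ⟨h1, h2⟩⟩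
    · rw [hY1 _ _ h1, hY2 _ _ h2] at hYab
      rw [hY1 _ _ h1, hYab]
      exact ⟨hInOut _ ((mI b).2 ⟨hb, h2⟩) _ ((mO a).2 ⟨ha, h1⟩) hYab.symm, Or.inr ⟨h2, h1⟩⟩
    · rw [hY1 _ _ h1, hY1 _ _ h2] at hYab
      have := injO _ ((mO a).2 ⟨ha, h1⟩) _ ((mO b).2 ⟨hb, h2⟩) hYab
      exact absurd (congrArg Prod.snd this) hab
  · intro v; have := cards v; have := bnd v; omega
  · intro v; have := cards v; have := bnd v; omega
  · intro v; have := cards v; have := bnd v; omega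
  · intro v hv
    have := (cards v).1
    simp only [zPol, if_pos hv] at this
    omega

end Draw

section Draw

variable {V : Type*} (G : SimpleGraph V)

/-- Replacing the abscissae by their ranks, every finite layout becomes integral. -/
lemma Layout.exists_int [Fintype V] {G : SimpleGraph V} (Λ : Layout G ℚ) :
    ∃ f : ℚ → ℤ, (∃ T : Set ℚ, StrictMonoOn f T ∧ (∀ v, Λ.x v ∈ T) ∧ ∀ u v, Λ.X u v ∈ T) := by
  classical
  let T : Finset ℚ := Finset.univ.image Λ.x ∪ Finset.univ.image (fun q : V × V => Λ.X q.1 q.2)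
  refine ⟨fun q => ((T.filter (· < q)).card : ℤ), T, ?_, ?_, ?_⟩
  · intro a ha b hb hab
    simp only [Nat.cast_lt]
    refine Finset.card_lt_card ⟨fun c hc => ?_, fun hsub => ?_⟩
    · simp only [Finset.mem_filter] at hc ⊢
      exact ⟨hc.1, hc.2.trans hab⟩
    · have := hsub (Finset.mem_filter.2 ⟨ha, hab⟩)
      simp at this
  · intro v; simp [T]
  · intro u v
    simp only [T, Finset.coe_union, Finset.coe_image, Set.mem_union]
    right; exact ⟨(u, v), by simp, rfl⟩

lemma Layout.pre_length {G : SimpleGraph V} (Λ : Layout G ℝ) (D : ℝ) (v a : V) :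
    (Λ.pre D v a).length = (if Λ.X v a < Λ.x v then 1 else 0) +
      (if Λ.x v < Λ.X v a then 1 else 0) +
      (if Λ.X v a ≠ Λ.x v ∧ (Λ.k v a = 2 ∨ Λ.k v a = -2) then 1 else 0) := by
  unfold Layout.pre
  rcases lt_trichotomy (Λ.X v a) (Λ.x v) with h' | h' | h'
  · rw [if_neg h'.ne, if_pos h', if_neg h'.not_gt]
    by_cases h2 : Λ.k v a = 2
    · rw [if_pos h2, if_pos ⟨h'.ne, Or.inl h2⟩]; rfl
    · rw [if_neg h2]
      by_cases h3 : Λ.k v a = -2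
      · rw [if_pos h3, if_pos ⟨h'.ne, Or.inr h3⟩]; rfl
      · rw [if_neg h3, if_neg (by tauto)]; rfl
  · simp [h']
  · rw [if_neg h'.ne', if_pos h', if_neg h'.not_gt]
    by_cases h2 : Λ.k v a = 2
    · rw [if_pos h2, if_pos ⟨h'.ne', Or.inl h2⟩]; rfl
    · rw [if_neg h2]
      by_cases h3 : Λ.k v a = -2
      · rw [if_pos h3, if_pos ⟨h'.ne', Or.inr h3⟩]; rfl
      · rw [if_neg h3, if_neg (by tauto)]; rfl

/-- A sweep yields an integral layout with few bends at each vertex. -/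
lemma Run.exists_realLayout [Fintype V] (ord : List V) (hnd : ord.Nodup) (hall : ∀ v, v ∈ ord)
    (hrun : Run G.Adj [] ord) (Z : V → Prop) (hdeg : ∀ v, iD G ord v + oD G ord v ≤ 8)
    (hZ : ∀ v, Z v → iD G ord v = 0 ∧ oD G ord v ≤ 4) :
    ∃ (Λ : Layout G ℝ) (xi : V → ℤ), (∀ v, Λ.x v = xi v) ∧ (∀ u v, Λ.h u < Λ.h v ↔ Bef ord u v) ∧
      (∀ v D, ∑ a ∈ (G.neighborSet v).toFinite.toFinset, (Λ.pre D v a).length ≤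
        cst (iD G ord v) (oD G ord v)) ∧
      (∀ v, Z v → ∀ a, G.Adj v a → Λ.x v ≤ Λ.X v a) ∧
      (∀ v a, G.Adj v a → Λ.X v a ≠ Λ.x v → (Λ.k v a = 2 ∨ Λ.k v a = -2) →
        iD G ord v + oD G ord v = 8) := by
  classical
  obtain ⟨h, x, Y, hbef, hinj, hsymm, hpass, hsep, hleft, hright, hlr, hz⟩ :=
    Run.exists_abscissae G ord hnd hall hrun Z hdeg hZ
  have hi0 : ∀ v, iD G ord v = 0 → ∀ b, G.Adj v b → h v < h b := by
    intro v hv b hb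
    rcases lt_or_gt_of_ne (fun h' => hb.ne (hinj h')) with h' | h'
    · exact h'
    · rw [iD, Set.ncard_eq_zero] at hv
      exact absurd (show b ∈ {a | G.Adj v a ∧ Bef ord a v} from ⟨hb, (hbef _ _).1 h'⟩) (by simp [hv])
  have ho0 : ∀ v, oD G ord v = 0 → ∀ b, G.Adj v b → h b < h v := by
    intro v hv b hb
    rcases lt_or_gt_of_ne (fun h' => hb.ne (hinj h')) with h' | h'
    · rw [oD, Set.ncard_eq_zero] at hv
      exact absurd (show b ∈ {a | G.Adj v a ∧ Bef ord v a} from ⟨hb, (hbef _ _).1 h'⟩) (by simp [hv])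
    · exact h'
  obtain ⟨Λ₀, rfl, rfl, rfl, hk⟩ := exists_layout G h x Y hinj hsymm hpass hsep hleft (by
    intro v
    rcases hright v with h1 | ⟨h1, -, h2 | h2⟩
    · exact Or.inl h1
    · exact Or.inr ⟨h1, Or.inr (hi0 v h2)⟩
    · exact Or.inr ⟨h1, Or.inl (ho0 v h2)⟩)
  obtain ⟨f, T, hf, hT1, hT2⟩ := Λ₀.exists_int
  have hf' : StrictMonoOn (fun q => (f q : ℝ)) T := by
    intro a ha b hb hab
    simpa using hf ha hb hab
  have hcase := Λ₀.kcase
  -- at most one edge at each vertex needs a second bend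
  have huniq : ∀ v a b, G.Adj v a → G.Adj v b → Λ₀.X v a ≠ Λ₀.x v → Λ₀.X v b ≠ Λ₀.x v →
      (Λ₀.k v a = 2 ∨ Λ₀.k v a = -2) → (Λ₀.k v b = 2 ∨ Λ₀.k v b = -2) → a = b := by
    intro v a b ha hb hxa hxb hka hkb
    by_contra hab
    have c1 := hcase v a ha hxa
    have c2 := hcase v b hb hxb
    have hX : Λ₀.X v a ≠ Λ₀.X v b := fun h' => hxa (hsep v a b ha hb hab h').1
    have n1 := Λ₀.near v a b ha hb hab
    have n2 := Λ₀.near v b a hb ha (Ne.symm hab)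
    have hav : Λ₀.h a ≠ Λ₀.h v := fun h' => ha.ne (hinj h').symm
    have hbv : Λ₀.h b ≠ Λ₀.h v := fun h' => hb.ne (hinj h').symm
    have t1 : ∀ {p : V → Prop}, (∀ b, G.Adj v b → p b) → p a ∧ p b := fun h' => ⟨h' a ha, h' b hb⟩
    have key : Λ₀.x v < Λ₀.X v a ∧ Λ₀.x v < Λ₀.X v b ∧ Λ₀.k v a = Λ₀.k v b := by
      rcases c1 with c1 | ⟨c1, c1', c1''⟩ | ⟨c1, c1', c1''⟩ <;>
      rcases c2 with c2 | ⟨c2, c2', c2''⟩ | ⟨c2, c2', c2''⟩ <;>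
      first
      | (exfalso; omega)
      | exact ⟨c1', c2', by omega⟩
      | (exfalso; have := c1'' a ha; have := c2'' a ha; omega)
    rcases lt_or_gt_of_ne hX with h' | h'
    · have := n1 (Or.inl ⟨key.1, h'⟩); omega
    · have := n2 (Or.inl ⟨key.2.1, h'⟩); omega
  refine ⟨Λ₀.map (fun q => (f q : ℝ)) T hf' hT1 hT2, fun v => f (Λ₀.x v), fun v => rfl, hbef, ?_,
    ?_, ?_⟩
  · intro v D
    set N := (G.neighborSet v).toFinite.toFinset with hN
    have hmN : ∀ a, a ∈ N ↔ G.Adj v a := by intro a; simp [hN]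
    set S := N.filter (fun a => Λ₀.X v a ≠ Λ₀.x v ∧ (Λ₀.k v a = 2 ∨ Λ₀.k v a = -2)) with hS
    have hlen : ∀ a ∈ N, ((Λ₀.map (fun q => (f q : ℝ)) T hf' hT1 hT2).pre D v a).length =
        (if Λ₀.X v a < Λ₀.x v then 1 else 0) + (if Λ₀.x v < Λ₀.X v a then 1 else 0) +
        (if Λ₀.X v a ≠ Λ₀.x v ∧ (Λ₀.k v a = 2 ∨ Λ₀.k v a = -2) then 1 else 0) := by
      intro a ha
      rw [Layout.pre_length]
      have e1 : ∀ p q, p ∈ T → q ∈ T → ((f p : ℝ) < f q ↔ p < q) := fun p q hp hq =>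
        hf'.lt_iff_lt hp hq
      have e2 : (f (Λ₀.X v a) : ℝ) = f (Λ₀.x v) ↔ Λ₀.X v a = Λ₀.x v :=
        hf'.injOn.eq_iff (hT2 _ _) (hT1 _)
      simp only [Layout.map, e1 _ _ (hT2 _ _) (hT1 _), e1 _ _ (hT1 _) (hT2 _ _), ne_eq, e2]
    rw [Finset.sum_congr rfl hlen, Finset.sum_add_distrib, Finset.sum_add_distrib,
      ← Finset.card_filter, ← Finset.card_filter, ← Finset.card_filter]
    have s1 : N.filter (fun a => Λ₀.X v a < Λ₀.x v) = leftNbrs G Λ₀.x Λ₀.X v := by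
      ext a; simp [leftNbrs, hmN]
    have s2 : N.filter (fun a => Λ₀.x v < Λ₀.X v a) = rightNbrs G Λ₀.x Λ₀.X v := by
      ext a; simp [rightNbrs, hmN]
    rw [s1, s2, ← hS]
    have h1 := hlr v
    have h2 : S.card ≤ 1 := by
      rw [Finset.card_le_one]
      intro a ha b hb
      simp only [hS, Finset.mem_filter, hmN] at ha hb
      exact huniq v a b ha.1 hb.1 ha.2.1 hb.2.1 ha.2.2 hb.2.2
    have h3 : S.card ≠ 0 → iD G ord v + oD G ord v = 8 ∧ (iD G ord v = 0 ∨ oD G ord v = 0) := by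
      intro h0
      obtain ⟨a, ha⟩ := Finset.card_ne_zero.1 h0
      simp only [hS, Finset.mem_filter, hmN] at ha
      have := hk v a ha.1 ha.2.1 ha.2.2
      rcases hright v with h4 | ⟨-, h4⟩
      · omega
      · exact h4
    unfold cst
    split_ifs with h4
    · omega
    · by_cases h5 : S.card = 0
      · omega
      · exact absurd (h3 h5) h4
  · intro v hv a ha
    have h0 := hz v hv
    rw [Finset.card_eq_zero] at h0
    have : a ∉ leftNbrs G Λ₀.x Λ₀.X v := by simp [h0]
    simp only [leftNbrs, Finset.mem_filter, Finset.mem_univ, true_and, not_and, not_lt] at this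
    exact hf'.monotoneOn (hT1 _) (hT2 _ _) (this ha)
  · intro v a ha hne hk'
    have hne' : Λ₀.X v a ≠ Λ₀.x v := fun h' => hne (congrArg (fun q => (f q : ℝ)) h')
    have := hk v a ha hne' hk'
    rcases hright v with h4 | ⟨-, h4, -⟩
    · omega
    · exact h4

/-- Every sweep can be drawn octilinearly. At each vertex one of the entering edges and one of the
leaving edges is straight; every other edge has one bend near the vertex. A second bend is needed for
one edge if there are eight edges which all enter or all leave the vertex. -/
theorem Run.exists_drawing [Fintype V] (ord : List V) (hnd : ord.Nodup) (hall : ∀ v, v ∈ ord)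
    (hrun : Run G.Adj [] ord) (hdeg : ∀ v, iD G ord v + oD G ord v ≤ 8) :
    ∃ D : OctiDrawing G, D.IsPlanar ∧
      D.totalBends ≤ ∑ v, cst (iD G ord v) (oD G ord v) := by
  obtain ⟨Λ, xi, hxi, -, hb, -⟩ := Run.exists_realLayout G ord hnd hall hrun (fun _ => False) hdeg
    (fun _ h => h.elim)
  obtain ⟨Dn, hD, hDX⟩ := Λ.exists_bound
  refine ⟨Λ.drawing Dn xi hxi Dn rfl hD hDX, Λ.drawing_planar _ xi hxi Dn rfl hD hDX, ?_⟩
  rw [Λ.drawing_bends]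
  exact Finset.sum_le_sum (fun v _ => hb v _)

lemma iD_add_oD [Finite V] (ord : List V) (hnd : ord.Nodup) (hall : ∀ v, v ∈ ord) (v : V) :
    iD G ord v + oD G ord v = (G.neighborSet v).ncard := by
  obtain ⟨P, Q, hPQ⟩ := List.append_of_mem (hall v)
  rw [iD, oD, ← Set.ncard_union_eq]
  · congr 1
    ext a
    simp only [sub_iff_left hnd hPQ, sub_iff_right hnd hPQ, Set.mem_union, Set.mem_ofPred_eq,
      SimpleGraph.mem_neighborSet]
    constructor
    · rintro (h | h) <;> exact h.1
    · intro h
      have := hall a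
      rw [hPQ, List.mem_append, List.mem_cons] at this
      rcases this with h1 | h1 | h1
      · exact Or.inl ⟨h, h1⟩
      · exact absurd h1 h.ne'
      · exact Or.inr ⟨h, h1⟩
  · rw [Set.disjoint_left]
    rintro a ⟨-, h1⟩ ⟨-, h2⟩
    rw [sub_iff_left hnd hPQ] at h1
    rw [sub_iff_right hnd hPQ] at h2
    subst hPQ
    rw [List.nodup_append] at hnd
    exact hnd.2.2 a h1 a (by simp [h2]) rfl

end Draw

/-! ### An edge around the drawing -/

section Special

variable {V : Type*}

lemma Polyline.isCompact_image (P : Polyline) : IsCompact P.image := by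
  have : P.image = ⋃ i ∈ Set.Iio P.len, segment ℝ (P.pt i) (P.pt (i + 1)) := by
    ext z
    rw [Polyline.mem_image_iff]
    simp
  rw [this]
  refine (Set.finite_Iio _).isCompact_biUnion fun i _ => ?_
  rw [segment_eq_image]
  exact isCompact_Icc.image (by fun_prop)

/-- The four points of an edge which leaves `s` to the west, passes around everything else in
north-eastern direction, and reaches `t` from the north. -/
def around (s t : ℝ × ℝ) (C : ℝ) : List (ℝ × ℝ) := [s, (s.2 - C, s.2), (t.1, t.1 + C), t]

lemma mem_around {s t : ℝ × ℝ} {C : ℝ} (hs : s.2 < s.1 + C) (ht : t.2 < t.1 + C) {z : ℝ × ℝ}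
    (hz : z ∈ pathImage (around s t C)) :
    (z.2 = s.2 ∧ z.1 ≤ s.1) ∨ z.2 = z.1 + C ∨ (z.1 = t.1 ∧ t.2 ≤ z.2) := by
  simp only [around, pathImage] at hz
  rcases hz with hz | hz | hz | hz
  · left
    rw [segment_symm] at hz
    have := mem_hseg (x1 := s.2 - C) (x2 := s.1) (y := s.2) (by linarith) hz
    grind
  · right; left
    rw [mem_seg_iff] at hz
    obtain ⟨θ, h1, h2, h3, h4⟩ := hz
    simp only at h3 h4
    rw [h3, h4]; ring
  · right; right
    rw [segment_symm] at hz
    have := mem_vseg (X := t.1) (y1 := t.2) (y2 := t.1 + C) (by linarith) hz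
    grind
  · right; right
    simp only [Set.mem_singleton_iff] at hz
    rw [hz]; simp

lemma around_simple {s t : ℝ × ℝ} {C : ℝ} (hs : s.2 < s.1 + C) (ht : t.2 < t.1 + C)
    (hst : s.2 < t.2) : ListSimple (around s t C) := by
  have e1 : ∀ z ∈ segment ℝ s (s.2 - C, s.2), z.2 = s.2 := by
    intro z hz
    rw [segment_symm] at hz
    have := mem_hseg (x1 := s.2 - C) (x2 := s.1) (y := s.2) (by linarith) hz
    grind
  have e2 : ∀ z ∈ segment ℝ (s.2 - C, s.2) (t.1, t.1 + C), z.2 = z.1 + C := by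
    intro z hz
    rw [mem_seg_iff] at hz
    obtain ⟨θ, h1, h2, h3, h4⟩ := hz
    simp only at h3 h4
    rw [h3, h4]; ring
  have e3 : ∀ z ∈ segment ℝ (t.1, t.1 + C) t, z.1 = t.1 ∧ t.2 ≤ z.2 := by
    intro z hz
    rw [segment_symm] at hz
    have := mem_vseg (X := t.1) (y1 := t.2) (y2 := t.1 + C) (by linarith) hz
    grind
  simp only [around, ListSimple, pathImage]
  refine ⟨?_, ?_, ?_, ?_, ?_, ?_, trivial⟩
  · intro h; have := congrArg Prod.fst h; simp at this; linarith
  · rintro z ⟨hz, hz' | hz' | hz'⟩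
    · have := e1 z hz; have := e2 z hz'
      exact Prod.ext (by simp; linarith) (by simp; linarith)
    · have := e1 z hz; have := e3 z hz'; linarith [this.2]
    · have h1 := e1 z hz; rw [Set.mem_singleton_iff.1 hz'] at h1; linarith
  · intro h; have := congrArg Prod.snd h; simp at this; linarith
  · rintro z ⟨hz, hz' | hz'⟩
    · have h1 := e2 z hz; have h2 := e3 z hz'
      exact Prod.ext h2.1 (by simp; linarith [h2.1])
    · have h1 := e2 z hz; rw [Set.mem_singleton_iff.1 hz'] at h1; linarith
  · intro h; have := congrArg Prod.snd h; simp at this; linarith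
  · rintro z ⟨hz, hz'⟩; exact hz'

lemma around_octi {s t : ℝ × ℝ} {C : ℝ} (hs : s.2 < s.1 + C) (ht : t.2 < t.1 + C)
    (hst : s.2 < t.2) : ListOcti (around s t C) := by
  have h1 : 0 < s.1 + C - s.2 := by linarith
  have h2 : 0 < t.1 + C - t.2 := by linarith
  have h3 : 0 < t.1 + C - s.2 := by linarith
  simp only [around, ListOcti, Polyline.OctiSeg]
  refine ⟨by simp, ?_, ?_, ?_, by simp⟩
  · simp only [sub_self, zero_mul]
    nlinarith [mul_pos h1 h3]
  · right; right; left; ring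
  · simp only [sub_self, mul_zero]
    nlinarith [mul_pos h2 h3]

/-- A drawing in which `s` is free to the west and `t` is free to the north can be extended by an
edge with two bends. -/
lemma OctiDrawing.addEdge [Fintype V] (G : SimpleGraph V) {s t : V} (hst : G.Adj s t)
    (H : SimpleGraph V) (hH : H = G.deleteEdges {s(s, t)}) (D : OctiDrawing H) (hD : D.IsPlanar)
    (hlt : (toR (D.pos s)).2 < (toR (D.pos t)).2) (S : Set (ℝ × ℝ))
    (hS : S = {z | (∃ e ∈ H.edgeSet, z ∈ (D.poly e).image) ∨
      ∃ v, z = toR (D.pos v)})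
    (h1 : ∀ z ∈ S, z.2 = (toR (D.pos s)).2 → (toR (D.pos s)).1 ≤ z.1)
    (h2 : ∀ z ∈ S, z.1 = (toR (D.pos t)).1 → z.2 ≤ (toR (D.pos t)).2) :
    ∃ D' : OctiDrawing G, D'.IsPlanar ∧ D'.totalBends ≤ D.totalBends + 2 := by
  classical
  have hHe : H.edgeSet = G.edgeSet \ {s(s, t)} := by rw [hH, SimpleGraph.edgeSet_deleteEdges]
  obtain ⟨C, hC⟩ : ∃ C : ℝ, ∀ z ∈ S, z.2 < z.1 + C := by
    have hcomp : IsCompact S := by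
      have : S = (⋃ e ∈ H.edgeSet, (D.poly e).image) ∪ Set.range (fun v => toR (D.pos v)) := by
        rw [hS]; ext z
        simp only [Set.mem_ofPred_eq, Set.mem_union, Set.mem_iUnion, Set.mem_range, exists_prop]
        exact or_congr_right ⟨fun ⟨v, h⟩ => ⟨v, h.symm⟩, fun ⟨v, h⟩ => ⟨v, h.symm⟩⟩
      rw [this]
      exact ((Set.toFinite _).isCompact_biUnion fun e _ => (D.poly e).isCompact_image).union
        (Set.finite_range _).isCompact
    obtain ⟨B, hB⟩ := hcomp.bddAbove_image (f := fun z : ℝ × ℝ => z.2 - z.1) (by fun_prop)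
    refine ⟨B + 1, fun z hz => ?_⟩
    have := hB (Set.mem_image_of_mem _ hz)
    linarith
  have hpS : ∀ v, toR (D.pos v) ∈ S := fun v => by rw [hS]; exact Or.inr ⟨v, rfl⟩
  have heS : ∀ e ∈ H.edgeSet, (D.poly e).image ⊆ S := fun e he z hz => by
    rw [hS]; exact Or.inl ⟨e, he, hz⟩
  set ps := toR (D.pos s) with hps
  set pt := toR (D.pos t) with hpt
  have cs := hC ps (hpS s)
  have ct := hC pt (hpS t)
  have hsimp := around_simple cs ct hlt
  have hlen : 2 ≤ (around ps pt C).length := by simp [around]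
  have hmeet : ∀ z ∈ S, z ∈ pathImage (around ps pt C) → z = ps ∨ z = pt := by
    intro z hz hz'
    rcases mem_around cs ct hz' with ⟨h3, h4⟩ | h3 | ⟨h3, h4⟩
    · left; exact Prod.ext (le_antisymm h4 (h1 z hz h3)) h3
    · have := hC z hz; linarith
    · right; exact Prod.ext h3 (le_antisymm (h2 z hz h3) h4)
  set Q := polyOf (around ps pt C) hlen with hQ
  have hQe : Q.pt 0 = ps ∧ Q.pt Q.len = pt :=
    Layout.polyOf_ends _ _ _ _ ⟨_, rfl⟩ ⟨[(pt.1, pt.1 + C), (ps.2 - C, ps.2), ps], by simp [around]⟩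
  have hQi : Q.image = pathImage (around ps pt C) := image_polyOf _ _
  have hQs : ps ∈ Q.image := by
    rw [hQi]; simp only [around, pathImage]; exact Or.inl (left_mem_segment _ _ _)
  have hQt : pt ∈ Q.image := by
    rw [hQi]; simp [around, pathImage]
  have hmemH : ∀ e ∈ G.edgeSet, e ≠ s(s, t) → e ∈ H.edgeSet := fun e he hne => by
    rw [hHe]; exact ⟨he, hne⟩
  let P : Sym2 V → Polyline := fun e => if e = s(s, t) then Q else D.poly e
  have P1 : P s(s, t) = Q := if_pos rfl
  have P2 : ∀ e, e ≠ s(s, t) → P e = D.poly e := fun e he => if_neg he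
  let D' : OctiDrawing G :=
    { pos := D.pos
      inj := D.inj
      poly := P
      ends := by
        intro u v huv
        by_cases he : s(u, v) = s(s, t)
        · rw [he, P1, hQe.1, hQe.2]
          rcases Sym2.eq_iff.1 he with ⟨rfl, rfl⟩ | ⟨rfl, rfl⟩
          · rfl
          · exact Set.pair_comm _ _
        · rw [P2 _ he]
          exact D.ends u v (hmemH s(u, v) huv he)
      octi := by
        intro e he
        by_cases he' : e = s(s, t)
        · rw [he', P1]; exact octilinear_polyOf _ _ hsimp (around_octi cs ct hlt)
        · rw [P2 _ he']; exact D.octi e (hmemH e he he') }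
  obtain ⟨d1, d2, d3⟩ := hD
  have hcross : ∀ e ∈ H.edgeSet, (D.poly e).image ∩ Q.image ⊆
      (fun w => toR (D.pos w)) '' {w | w ∈ e ∧ w ∈ s(s, t)} := by
    intro e he z hz
    have hz2 := hmeet z (heS e he hz.1) (hQi ▸ hz.2)
    revert he hz
    refine Sym2.ind (fun a b => ?_) e
    intro he hz
    have h4 := d2 a b he
    have key : ∀ v, z = toR (D.pos v) → v ∈ s(a, b) := by
      intro v hv
      have : z ∈ ({toR (D.pos a), toR (D.pos b)} : Set (ℝ × ℝ)) := by
        rw [← h4]; exact ⟨hz.1, v, hv.symm⟩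
      have toR_inj : Function.Injective toR := by
        intro p q hpq
        simp only [toR, Prod.mk.injEq, Int.cast_inj] at hpq
        exact Prod.ext hpq.1 hpq.2
      rw [hv] at this
      rcases this with h5 | h5
      · rw [D.inj (toR_inj h5)]; simp
      · rw [D.inj (toR_inj h5)]; simp
    rcases hz2 with h5 | h5
    · exact ⟨s, ⟨key s h5, by simp⟩, h5.symm⟩
    · exact ⟨t, ⟨key t h5, by simp⟩, h5.symm⟩
  refine ⟨D', ⟨?_, ?_, ?_⟩, ?_⟩
  · intro e he
    show (P e).Simple
    by_cases he' : e = s(s, t)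
    · rw [he', P1]; exact simple_polyOf _ _ hsimp
    · rw [P2 _ he']; exact d1 e (hmemH e he he')
  · intro u v huv
    show (P s(u, v)).image ∩ _ = _
    by_cases he : s(u, v) = s(s, t)
    · rw [he, P1]
      have : ({toR (D.pos u), toR (D.pos v)} : Set (ℝ × ℝ)) = {ps, pt} := by
        rcases Sym2.eq_iff.1 he with ⟨rfl, rfl⟩ | ⟨rfl, rfl⟩
        · rfl
        · exact Set.pair_comm _ _
      show _ = ({toR (D.pos u), toR (D.pos v)} : Set (ℝ × ℝ))
      rw [this]
      ext z
      constructor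
      · rintro ⟨h3, w, rfl⟩
        exact hmeet _ (hpS w) (hQi ▸ h3)
      · rintro (rfl | h3)
        · exact ⟨hQs, s, rfl⟩
        · rw [Set.mem_singleton_iff.1 h3]; exact ⟨hQt, t, rfl⟩
    · rw [P2 _ he]; exact d2 u v (hmemH s(u, v) huv he)
  · intro e he e' he' hne
    show (P e).image ∩ (P e').image ⊆ (fun w => toR (D.pos w)) '' _
    by_cases h3 : e = s(s, t)
    · subst h3
      rw [P1, P2 _ (Ne.symm hne), Set.inter_comm]
      have := hcross e' (hmemH e' he' (Ne.symm hne))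
      simpa only [and_comm] using this
    · by_cases h4 : e' = s(s, t)
      · subst h4
        rw [P1, P2 _ hne]
        exact hcross e (hmemH e he hne)
      · rw [P2 _ h3, P2 _ h4]
        exact d3 e (hmemH e he h3) e' (hmemH e' he' h4) hne
  · show ∑ e ∈ G.edgeSet.toFinite.toFinset, (P e).bends ≤
      ∑ e ∈ H.edgeSet.toFinite.toFinset, (D.poly e).bends + 2
    have hins : G.edgeSet.toFinite.toFinset = insert s(s, t) H.edgeSet.toFinite.toFinset := by
      ext e
      simp only [Set.Finite.mem_toFinset, Finset.mem_insert, hHe, Set.mem_sdiff,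
        Set.mem_singleton_iff]
      by_cases he : e = s(s, t)
      · subst he; simpa using hst
      · simp [he]
    have hnot : s(s, t) ∉ H.edgeSet.toFinite.toFinset := by
      simp only [Set.Finite.mem_toFinset, hHe]; simp
    rw [hins, Finset.sum_insert hnot, P1, add_comm]
    refine add_le_add (Finset.sum_le_sum fun e he => ?_) (by simp [hQ, polyOf, around, Polyline.bends])
    rw [P2 e (fun h => hnot (h ▸ he))]

/-- In a layout whose lowest vertex `s` has nothing to its left, and whose highest vertex `t` has
no edge with a second bend, `s` is free to the west and `t` is free to the north. -/
lemma Layout.free_ports {G : SimpleGraph V} (Λ : Layout G ℝ) (D : ℝ) (hD : 0 < D)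
    (hDX : ∀ v a, G.Adj v a → |Λ.X v a - Λ.x v| < D) (s t : V)
    (hs : ∀ v, v ≠ s → Λ.h s < Λ.h v) (ht : ∀ v, v ≠ t → Λ.h v < Λ.h t)
    (hsX : ∀ a, G.Adj s a → Λ.x s ≤ Λ.X s a)
    (htk : ∀ a, G.Adj t a → Λ.X t a ≠ Λ.x t → Λ.k t a ≠ 2 ∧ Λ.k t a ≠ -2)
    {u w : V} (huw : G.Adj u w) (h : Λ.h u < Λ.h w) {z : ℝ × ℝ}
    (hz : z ∈ pathImage (Λ.path D u w)) :
    (z.2 = Λ.y D s → Λ.x s ≤ z.1) ∧ (z.1 = Λ.x t → z.2 ≤ Λ.y D t) := by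
  have hws : w ≠ s := by
    rintro rfl
    exact absurd h (not_lt.2 (hs u (fun h' => huw.ne h')).le)
  have hut : u ≠ t := by
    rintro rfl
    exact absurd h (not_lt.2 (ht w (fun h' => huw.ne h'.symm)).le)
  have yw := Λ.ygap D hD (hs w hws)
  have yu := Λ.ygap D hD (ht u hut)
  have tu := Λ.tip_y D hD hDX huw
  have tw := Λ.tip_y D hD hDX huw.symm
  have ys : Λ.h s ≤ Λ.h u := by
    by_cases hus : u = s
    · rw [hus]
    · exact (hs u hus).le
  rcases Λ.mem_path D hD hDX huw h hz with h1 | ⟨h1, h2, h3⟩ | h1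
  · have hy := Λ.stub_y D hD hDX huw h1
    constructor
    · intro hzs
      by_cases hus : u = s
      · subst hus
        rcases Λ.stub_x D huw hD h1 with h2 | h2
        · exact h2.1
        · exact (hsX w huw).trans h2.1
      · have := Λ.ygap D hD (hs u hus); linarith
    · intro _; linarith
  · constructor
    · intro hzs
      by_cases hus : u = s
      · subst hus; rw [h1]; exact hsX w huw
      · have := Λ.ygap D hD (hs u hus); linarith
    · intro hzt
      by_cases hwt : w = t
      · subst hwt
        have : Λ.E D w u = Λ.y D w := by
          unfold E; rw [if_pos (by rw [Λ.X_symm, ← h1, hzt])]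
        linarith
      · have := Λ.ygap D hD (ht w hwt); linarith
  · have hy := Λ.stub_y D hD hDX huw.symm h1
    constructor
    · intro hzs; linarith
    · intro hzt
      by_cases hwt : w = t
      · subst hwt
        rcases Λ.mem_stub D huw.symm hD h1 with ⟨h1, h2⟩ | ⟨h1, _, _, h2, h3, h4, h5⟩ |
          ⟨h1, h2, h3, h4 | h4⟩ | ⟨h1, h2, h3, h4 | h4⟩
        · rw [h2]; rfl
        · rw [h5, hzt]; simp
        · exact absurd h1 (htk u huw.symm h2.ne').1
        · exact absurd h1 (htk u huw.symm h2.ne').1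
        · exact absurd h1 (htk u huw.symm h2.ne').2
        · exact absurd h1 (htk u huw.symm h2.ne').2
      · have := Λ.ygap D hD (ht w hwt); linarith

/-- A sweep of `G` without the edge `st` from `s` to `t` can be drawn together with this edge. -/
theorem Run.exists_drawing_special [Fintype V] (G : SimpleGraph V) {s t : V} (hst : G.Adj s t)
    (H : SimpleGraph V) (hH : H = G.deleteEdges {s(s, t)}) (ord m : List V)
    (hord : ord = s :: (m ++ [t])) (hnd : ord.Nodup) (hall : ∀ v, v ∈ ord)
    (hrun : Run H.Adj [] ord) (hdeg : ∀ v, iD H ord v + oD H ord v ≤ 8)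
    (hsd : (H.neighborSet s).ncard ≤ 4) (htd : (H.neighborSet t).ncard ≤ 7) :
    ∃ D : OctiDrawing G, D.IsPlanar ∧
      D.totalBends ≤ ∑ v, cst (iD H ord v) (oD H ord v) + 2 := by
  have his : iD H ord s = 0 := by
    rw [iD, Set.ncard_eq_zero]
    ext a
    simp [sub_iff_left hnd (P := []) (Q := m ++ [t]) (by simpa using hord)]
  obtain ⟨Λ, xi, hxi, hbef, hb, hZ, hk⟩ := Run.exists_realLayout H ord hnd hall hrun (fun v => v = s)
    hdeg (by
      rintro v rfl
      refine ⟨his, ?_⟩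
      have := iD_add_oD H ord hnd hall v
      omega)
  obtain ⟨Dn, hD, hDX⟩ := Λ.exists_bound
  have hs : ∀ v, v ≠ s → Λ.h s < Λ.h v := by
    intro v hv
    rw [hbef, sub_iff_right hnd (P := []) (Q := m ++ [t]) (by simpa using hord)]
    have := hall v
    rw [hord] at this
    simpa [hv] using this
  have ht : ∀ v, v ≠ t → Λ.h v < Λ.h t := by
    intro v hv
    rw [hbef, sub_iff_left hnd (P := s :: m) (Q := []) (by simpa using hord)]
    have := hall v
    rw [hord] at this
    simpa [hv] using this
  have htk : ∀ a, H.Adj t a → Λ.X t a ≠ Λ.x t → Λ.k t a ≠ 2 ∧ Λ.k t a ≠ -2 := by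
    intro a ha hne
    by_contra hcon
    have := hk t a ha hne (by tauto)
    have := iD_add_oD H ord hnd hall t
    omega
  have hpl := Λ.drawing_planar _ xi hxi Dn rfl hD hDX
  have hp : ∀ v, toR ((Λ.drawing Dn xi hxi Dn rfl hD hDX).pos v) = Λ.P Dn v := fun v =>
    Λ.toR_pos Dn xi hxi Dn rfl v
  have hfree : ∀ z, (∃ e ∈ H.edgeSet,
      z ∈ ((Λ.drawing Dn xi hxi Dn rfl hD hDX).poly e).image) ∨
      (∃ v, z = toR ((Λ.drawing Dn xi hxi Dn rfl hD hDX).pos v)) →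
      (z.2 = Λ.y Dn s → Λ.x s ≤ z.1) ∧ (z.1 = Λ.x t → z.2 ≤ Λ.y Dn t) := by
    rintro z (⟨e, he, hz⟩ | ⟨v, rfl⟩)
    · obtain ⟨u, w, rfl, huw, h⟩ := Λ.edge_oriented he
      rw [Λ.drawing_image Dn xi hxi Dn rfl hD hDX h] at hz
      exact Λ.free_ports Dn hD hDX s t hs ht (hZ s rfl) htk huw h hz
    · rw [hp]
      constructor
      · intro hy
        by_cases hv : v = s
        · rw [hv]; rfl
        · have := Λ.ygap Dn hD (hs v hv)
          simp only [Layout.P] at hy; linarith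
      · intro _
        by_cases hv : v = t
        · rw [hv]; rfl
        · have := Λ.ygap Dn hD (ht v hv)
          simp only [Layout.P]; linarith
  obtain ⟨D', h1, h2⟩ := OctiDrawing.addEdge G hst H hH _ hpl (by
    rw [hp, hp]
    have := Λ.ygap Dn hD (hs t hst.ne')
    simp only [Layout.P]; linarith) _ rfl
    (fun z hz => by rw [hp]; exact (hfree z hz).1) (fun z hz => by rw [hp]; exact (hfree z hz).2)
  refine ⟨D', h1, h2.trans (Nat.add_le_add_right ?_ 2)⟩
  rw [Λ.drawing_bends]
  exact Finset.sum_le_sum (fun v _ => hb v _)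

end Special

/-! ### Sweeping a straight-line drawing -/

section SweepLine

/-- The height of a point, in a direction depending on the parameter `t`. -/
def lev (t : ℝ) (p : ℝ × ℝ) : ℝ := p.2 + t * p.1

/-- The abscissa at height `c` of the segment `e`. -/
noncomputable def absc (t : ℝ) (e : (ℝ × ℝ) × (ℝ × ℝ)) (c : ℝ) : ℝ :=
  e.1.1 + (c - lev t e.1) * ((e.2.1 - e.1.1) / (lev t e.2 - lev t e.1))

/-- The segment `e` is nowhere to the right of the segment `e'`. -/
def Lft (t : ℝ) (e e' : (ℝ × ℝ) × (ℝ × ℝ)) : Prop :=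
  ∀ c, lev t e.1 ≤ c → c ≤ lev t e.2 → lev t e'.1 ≤ c → c ≤ lev t e'.2 → absc t e c ≤ absc t e' c

lemma absc_mem {t : ℝ} {e : (ℝ × ℝ) × (ℝ × ℝ)} (he : lev t e.1 < lev t e.2) {c : ℝ}
    (h1 : lev t e.1 ≤ c) (h2 : c ≤ lev t e.2) :
    (absc t e c, c - t * absc t e c) ∈ segment ℝ e.1 e.2 := by
  have h3 : 0 < lev t e.2 - lev t e.1 := by linarith
  rw [mem_seg_iff]
  refine ⟨(c - lev t e.1) / (lev t e.2 - lev t e.1), div_nonneg (by linarith) h3.le,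
    (div_le_one h3).2 (by linarith), ?_, ?_⟩
  · simp only [absc]; field_simp
  · simp only [absc]
    have h4 := h3.ne'
    simp only [lev] at *
    field_simp
    ring

lemma lev_mk (t X c : ℝ) : lev t (X, c - t * X) = c := by simp [lev]

lemma absc_fst (t : ℝ) (e : (ℝ × ℝ) × (ℝ × ℝ)) : absc t e (lev t e.1) = e.1.1 := by simp [absc]

lemma absc_snd {t : ℝ} {e : (ℝ × ℝ) × (ℝ × ℝ)} (he : lev t e.1 < lev t e.2) :
    absc t e (lev t e.2) = e.2.1 := by
  have h3 : lev t e.2 - lev t e.1 ≠ 0 := by linarith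
  simp only [absc]; field_simp; ring

/-- Segments may only meet in common endpoints. -/
def NonCrossing (R : ℝ × ℝ → ℝ × ℝ → Prop) : Prop :=
  ∀ p q p' q', R p q → R p' q' → ∀ z ∈ segment ℝ p q, z ∈ segment ℝ p' q' →
    (p = p' ∧ q = q') ∨ (p = q' ∧ q = p') ∨ ((z = p ∨ z = q) ∧ (z = p' ∨ z = q'))

variable {t : ℝ} {R : ℝ × ℝ → ℝ × ℝ → Prop}

/-- Two segments which do not cross are ordered from left to right. -/
lemma lft_or (hR : NonCrossing R) {e e' : (ℝ × ℝ) × (ℝ × ℝ)} (he : R e.1 e.2) (he' : R e'.1 e'.2)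
    (hl : lev t e.1 < lev t e.2) (hl' : lev t e'.1 < lev t e'.2) : Lft t e e' ∨ Lft t e' e := by
  by_contra hcon
  simp only [Lft] at hcon
  push Not at hcon
  obtain ⟨⟨c₁, a1, a2, a3, a4, a5⟩, c₂, b1, b2, b3, b4, b5⟩ := hcon
  have hcont : Continuous (fun c => absc t e c - absc t e' c) := by
    unfold absc; fun_prop
  have key : ∀ c, (min c₁ c₂ < c ∧ c < max c₁ c₂) → absc t e c - absc t e' c ≠ 0 := by
    rintro c ⟨h1, h2⟩ h0
    have g1 : max (lev t e.1) (lev t e'.1) ≤ min c₁ c₂ := by simp [*]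
    have g2 : max c₁ c₂ ≤ min (lev t e.2) (lev t e'.2) := by simp [*]
    have g3 := lt_of_le_of_lt g1 h1
    have g4 := lt_of_lt_of_le h2 g2
    rw [max_lt_iff] at g3
    rw [lt_min_iff] at g4
    have m1 := absc_mem hl g3.1.le g4.1.le
    have m2 := absc_mem hl' g3.2.le g4.2.le
    rw [← sub_eq_zero.1 h0] at m2
    have hlev := lev_mk t (absc t e c) c
    rcases hR _ _ _ _ he he' _ m1 m2 with ⟨h3, h4⟩ | ⟨h3, h4⟩ | ⟨h3 | h3, -⟩
    · have : e = e' := Prod.ext h3 h4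
      subst this
      linarith
    · rw [h3, h4] at hl; linarith
    · rw [h3] at hlev; linarith [g3.1]
    · rw [h3] at hlev; linarith [g4.1]
  rcases lt_trichotomy c₁ c₂ with h | h | h
  · have := intermediate_value_Ioo' h.le hcont.continuousOn
      (show (0 : ℝ) ∈ Set.Ioo _ _ from ⟨by linarith, by linarith⟩)
    obtain ⟨c, hc, h0⟩ := this
    exact key c ⟨by rw [min_eq_left h.le]; exact hc.1, by rw [max_eq_right h.le]; exact hc.2⟩ h0
  · subst h; linarith
  · have := intermediate_value_Ioo h.le hcont.continuousOn
      (show (0 : ℝ) ∈ Set.Ioo _ _ from ⟨by linarith, by linarith⟩)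
    obtain ⟨c, hc, h0⟩ := this
    exact key c ⟨by rw [min_eq_right h.le]; exact hc.1, by rw [max_eq_left h.le]; exact hc.2⟩ h0

/-- A list which is weakly sorted by the key `k` splits at each value of the key. -/
lemma split_sorted {W : Type*} (k : W → ℝ) (c : ℝ) : ∀ (L : List W),
    L.Pairwise (fun e e' => k e ≤ k e') →
    ∃ A I B, L = A ++ I ++ B ∧ (∀ e ∈ A, k e < c) ∧ (∀ e ∈ I, k e = c) ∧ (∀ e ∈ B, c < k e)
  | [], _ => ⟨[], [], [], by simp⟩
  | e :: L, h => by
    rw [List.pairwise_cons] at h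
    obtain ⟨A, I, B, h1, h2, h3, h4⟩ := split_sorted k c L h.2
    rcases lt_trichotomy (k e) c with h5 | h5 | h5
    · exact ⟨e :: A, I, B, by simp [h1], by simpa [h5] using h2, h3, h4⟩
    · have : A = [] := by
        rw [List.eq_nil_iff_forall_not_mem]
        intro a ha
        have := h.1 a (by simp [h1, ha])
        linarith [h2 a ha]
      subst this
      exact ⟨[], e :: I, B, by simp [h1], by simp, by simpa [h5] using h3, h4⟩
    · have hA : A = [] := by
        rw [List.eq_nil_iff_forall_not_mem]
        intro a ha
        have := h.1 a (by simp [h1, ha])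
        linarith [h2 a ha]
      have hI : I = [] := by
        rw [List.eq_nil_iff_forall_not_mem]
        intro a ha
        have := h.1 a (by simp [h1, ha])
        linarith [h3 a ha]
      subst hA hI
      exact ⟨[], [], e :: B, by simp [h1], by simp, by simp, by simpa [h5] using h4⟩

lemma exists_sorted {W : Type*} (k : W → ℝ) (S : Finset W) :
    ∃ l : List W, l.Nodup ∧ (∀ e, e ∈ l ↔ e ∈ S) ∧ l.Pairwise (fun e e' => k e ≤ k e') := by
  classical
  refine ⟨S.toList.mergeSort (fun a b => k a ≤ k b), ?_, ?_, ?_⟩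
  · exact (List.mergeSort_perm _ _).nodup_iff.2 S.nodup_toList
  · intro e; rw [(List.mergeSort_perm _ _).mem_iff]; simp
  · have := List.pairwise_mergeSort (le := fun a b => decide (k a ≤ k b))
      (by intro a b c; simpa using le_trans) (by intro a b; simpa using le_total _ _) S.toList
    simpa using this

/-- The edges leaving a point above the points already treated are inserted by their slopes. -/
lemma exists_run_aux (hsymm : ∀ p q, R p q → R q p) (hR : NonCrossing R) :
    ∀ (Q P : List (ℝ × ℝ)) (L : List ((ℝ × ℝ) × (ℝ × ℝ))),
      (P ++ Q).Pairwise (fun p q => lev t p < lev t q) → (∀ p, p ∈ P ++ Q ↔ ∃ q, R p q) →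
      (∀ e, e ∈ L ↔ R e.1 e.2 ∧ e.1 ∈ P ∧ e.2 ∈ Q) → L.Pairwise (Lft t) → Run R L Q
  | [], P, L, _, _, hL, _ => by
    rw [Run, List.eq_nil_iff_forall_not_mem]
    intro e he
    simpa using (hL e).1 he
  | v :: Q, P, L, hs, hmem, hL, hpw => by
    classical
    have hs' := hs
    rw [List.pairwise_append, List.pairwise_cons] at hs'
    obtain ⟨hP, ⟨hvQ, hQ⟩, hPQ⟩ := hs'
    have hPv : ∀ p ∈ P, lev t p < lev t v := fun p hp => hPQ p hp v (by simp)
    have hlow : ∀ e ∈ L, lev t e.1 < lev t v := fun e he => hPv _ ((hL e).1 he).2.1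
    have hup : ∀ e ∈ L, lev t v ≤ lev t e.2 := by
      intro e he
      have h := ((hL e).1 he).2.2
      rcases List.mem_cons.1 h with h | h
      · rw [h]
      · exact (hvQ _ h).le
    have hle : ∀ e ∈ L, lev t e.1 < lev t e.2 := fun e he => (hlow e he).trans_le (hup e he)
    have hmono : L.Pairwise (fun e e' => absc t e (lev t v) ≤ absc t e' (lev t v)) :=
      hpw.imp_of_mem (fun {e e'} he he' h =>
        h _ (hlow e he).le (hup e he) (hlow e' he').le (hup e' he'))
    obtain ⟨A, I, B, rfl, hA, hI, hB⟩ := split_sorted _ v.1 L hmono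
    have hvS := (hmem v).1 (by simp)
    have hfin : (fun w => R v w ∧ w ∈ Q) = fun w => w ∈ (Q.toFinset.filter (fun w => R v w)) := by
      ext w; simp [and_comm]
    obtain ⟨O', hO1, hO2, hO3⟩ := exists_sorted (fun w : ℝ × ℝ => (w.1 - v.1) / (lev t w - lev t v))
      (Q.toFinset.filter (fun w => R v w))
    have hO2' : ∀ w, w ∈ O' ↔ R v w ∧ w ∈ Q := by intro w; rw [hO2]; simp [and_comm]
    set O := O'.map (fun w => (v, w)) with hO
    have hOm : ∀ e, e ∈ O ↔ e.1 = v ∧ R v e.2 ∧ e.2 ∈ Q := by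
      rintro ⟨a, b⟩
      simp only [hO, List.mem_map, Prod.mk.injEq, exists_eq_right_right, hO2']
      tauto
    have hin : ∀ e ∈ A ++ I ++ B, e.2 = v ↔ absc t e (lev t v) = v.1 := by
      intro e he
      constructor
      · intro h
        rw [← h, absc_snd (hle e he)]
      · intro h
        have h1 := absc_mem (hle e he) (hlow e he).le (hup e he)
        have h2 : (absc t e (lev t v), lev t v - t * absc t e (lev t v)) = v := by
          rw [h]; ext <;> simp [lev]
        rw [h2] at h1
        obtain ⟨q, hq⟩ := hvS
        have hne : v ≠ e.1 := fun h' => by have := hlow e he; rw [← h'] at this; linarith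
        rcases hR _ _ _ _ ((hL e).1 he).1 hq v h1 (left_mem_segment ℝ v q) with
          ⟨h3, h4⟩ | ⟨h3, h4⟩ | ⟨h3 | h3, -⟩
        · exact absurd h3.symm hne
        · exact h4
        · exact absurd h3 hne
        · exact h3.symm
    have hOl : ∀ e ∈ O, lev t e.1 < lev t e.2 := by
      intro e he
      have := (hOm e).1 he
      rw [this.1]; exact hvQ _ this.2.2
    have hOR : ∀ e ∈ O, R e.1 e.2 := by
      intro e he
      have := (hOm e).1 he
      rw [this.1]; exact this.2.1
    have hOa : ∀ e ∈ O, absc t e (lev t v) = v.1 := by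
      intro e he
      rw [← ((hOm e).1 he).1]; exact absc_fst t e
    have hvP : v ∉ P := fun h => lt_irrefl _ (hPv v h)
    have hvQ' : v ∉ Q := fun h => lt_irrefl _ (hvQ v h)
    refine ⟨A, I, O, B, rfl, ?_, ?_, ?_, fun e he => ((hOm e).1 he).1, ?_, ?_, ?_⟩
    · intro e he; exact (hin e (by simp [he])).2 (hI e he)
    · intro e he h
      have := hA e he
      rw [(hin e (by simp [he])).1 h] at this
      exact lt_irrefl _ this
    · intro e he h
      have := hB e he
      rw [(hin e (by simp [he])).1 h] at this
      exact lt_irrefl _ this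
    · exact hO1.map (fun a b h => (Prod.mk.inj h).2)
    · intro w; rw [hOm]; simp
    · refine exists_run_aux hsymm hR Q (P ++ [v]) _ (by simpa using hs) (by simpa using hmem) ?_ ?_
      · intro e
        have h1 := hL e
        simp only [List.mem_append] at h1 ⊢
        rw [hOm]
        constructor
        · rintro ((h | h) | h)
          · have h2 := h1.1 (by simp [h])
            have h3 : e.2 ≠ v := fun h' => by
              have := hA e h
              rw [(hin e (by simp [h])).1 h'] at this
              exact lt_irrefl _ this
            simp only [List.mem_cons, h3, false_or] at h2
            exact ⟨h2.1, Or.inl h2.2.1, h2.2.2⟩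
          · refine ⟨by rw [h.1]; exact h.2.1, Or.inr (by simp [h.1]), h.2.2⟩
          · have h2 := h1.1 (by simp [h])
            have h3 : e.2 ≠ v := fun h' => by
              have := hB e h
              rw [(hin e (by simp [h])).1 h'] at this
              exact lt_irrefl _ this
            simp only [List.mem_cons, h3, false_or] at h2
            exact ⟨h2.1, Or.inl h2.2.1, h2.2.2⟩
        · rintro ⟨h2, h3 | h3, h4⟩
          · have h5 := h1.2 ⟨h2, h3, by simp [h4]⟩
            rcases h5 with (h5 | h5) | h5
            · exact Or.inl (Or.inl h5)
            · have := (hin e (by simp [h5])).2 (hI e h5)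
              rw [this] at h4; exact absurd h4 hvQ'
            · exact Or.inr h5
          · have h5 : e.1 = v := by simpa using h3
            exact Or.inl (Or.inr ⟨h5, h5 ▸ h2, h4⟩)
      · have hAI := hpw
        rw [List.pairwise_append, List.pairwise_append] at hAI
        obtain ⟨⟨pA, pI, pAI⟩, pB, pAB⟩ := hAI
        rw [List.pairwise_append, List.pairwise_append]
        refine ⟨⟨pA, ?_, ?_⟩, pB, ?_⟩
        · rw [hO, List.pairwise_map]
          refine hO3.imp (fun {a b} h => ?_)
          intro c h1 h2 h3 h4
          simp only [absc]
          have : 0 ≤ c - lev t v := by linarith [h1]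
          have := mul_le_mul_of_nonneg_left h this
          linarith
        · intro e he e' he'
          have heL : e ∈ A ++ I ++ B := by simp [he]
          rcases lft_or hR ((hL e).1 heL).1 (hOR e' he') (hle e heL) (hOl e' he') with h | h
          · exact h
          · have h1 := h (lev t v) (by rw [((hOm e').1 he').1]) 
              (by have := hOl e' he'; rw [((hOm e').1 he').1] at this; exact this.le)
              (hlow e heL).le (hup e heL)
            rw [hOa e' he'] at h1
            linarith [hA e he]
        · intro e' he' e he
          rcases List.mem_append.1 he' with he' | he'
          · exact pAB e' (by simp [he']) e he
          · have heL : e ∈ A ++ I ++ B := by simp [he]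
            rcases lft_or hR ((hL e).1 heL).1 (hOR e' he') (hle e heL) (hOl e' he') with h | h
            · have h1 := h (lev t v) (hlow e heL).le (hup e heL) (by rw [((hOm e').1 he').1])
                (by have := hOl e' he'; rw [((hOm e').1 he').1] at this; exact this.le)
              rw [hOa e' he'] at h1
              linarith [hB e he]
            · exact h

/-- Every finite straight-line drawing without crossings can be swept. -/
theorem NonCrossing.exists_run (hfin : {p | ∃ q, R p q}.Finite) (hsymm : ∀ p q, R p q → R q p)
    (hR : NonCrossing R) : ∃ ord : List (ℝ × ℝ), ord.Nodup ∧ (∀ p, p ∈ ord ↔ ∃ q, R p q) ∧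
      Run R [] ord := by
  classical
  set S := hfin.toFinset with hS
  -- all but finitely many directions separate the heights of the points
  obtain ⟨t, ht⟩ := Set.Finite.exists_notMem
    (((S ×ˢ S).image (fun q : (ℝ × ℝ) × (ℝ × ℝ) => -(q.1.2 - q.2.2) / (q.1.1 - q.2.1))).finite_toSet)
  have hinj : ∀ p ∈ S, ∀ q ∈ S, lev t p = lev t q → p = q := by
    intro p hp q hq h
    by_cases h1 : p.1 = q.1
    · exact Prod.ext h1 (by simpa [lev, h1] using h)
    · refine absurd ?_ ht
      have h2 : p.1 - q.1 ≠ 0 := sub_ne_zero.2 h1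
      simp only [Finset.coe_image, Set.mem_image, Finset.mem_coe, Finset.mem_product]
      refine ⟨(p, q), ⟨hp, hq⟩, ?_⟩
      simp only [lev] at h
      field_simp
      linarith
  obtain ⟨ord, h1, h2, h3⟩ := exists_sorted (lev t) S
  have hmem : ∀ p, p ∈ ord ↔ ∃ q, R p q := by intro p; rw [h2, hS]; simp
  refine ⟨ord, h1, hmem, exists_run_aux (t := t) hsymm hR ord [] [] ?_ (by simpa using hmem)
    (by simp) (by simp)⟩
  have := (List.Pairwise.and h3 h1)
  exact this.imp_of_mem fun {a b} ha hb h =>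
    lt_of_le_of_ne h.1 (fun h' => h.2 (hinj a ((h2 a).1 ha) b ((h2 b).1 hb) h'))

end SweepLine

/-! ### From sweeps to rotation systems -/

section Rotation

variable {V : Type*}

/-- `PS c Z a b L`: walking from left to right across the edges of `L`, where crossing `e` adds
`Z e` and `c e` is the value on the left of `e`, the value changes from `a` to `b`. -/
def PS {E : Type*} (c Z : E → ZMod 2) : ZMod 2 → ZMod 2 → List E → Prop
  | a, b, [] => a = b
  | a, b, e :: L => c e = a ∧ PS c Z (a + Z e) b L

lemma PS.append {E : Type*} {c Z : E → ZMod 2} : ∀ {L M : List E} {a b : ZMod 2},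
    PS c Z a b (L ++ M) ↔ ∃ m, PS c Z a m L ∧ PS c Z m b M
  | [], M, a, b => by simp [PS]
  | e :: L, M, a, b => by
    simp only [List.cons_append, PS, PS.append (L := L)]
    constructor
    · rintro ⟨h, m, h1, h2⟩; exact ⟨m, ⟨h, h1⟩, h2⟩
    · rintro ⟨m, ⟨h, h1⟩, h2⟩; exact ⟨h, m, h1, h2⟩

lemma PS.congr {E : Type*} {c c' Z : E → ZMod 2} : ∀ {L : List E} {a b : ZMod 2},
    (∀ e ∈ L, c' e = c e) → PS c Z a b L → PS c' Z a b L
  | [], a, b, _, h => h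
  | e :: L, a, b, hc, h => ⟨(hc e (by simp)).trans h.1,
      PS.congr (fun e he => hc e (by simp [he])) h.2⟩

lemma PS.sum {E : Type*} {c Z : E → ZMod 2} : ∀ {L : List E} {a b : ZMod 2},
    PS c Z a b L → b = a + (L.map Z).sum
  | [], a, b, h => by simpa [PS] using h.symm
  | e :: L, a, b, h => by rw [PS.sum h.2]; simp [add_assoc]

lemma PS.exists {E : Type*} (Z : E → ZMod 2) : ∀ (L : List E) (a : ZMod 2), L.Nodup →
    ∃ c, PS c Z a (a + (L.map Z).sum) L
  | [], a, _ => ⟨fun _ => 0, by simp [PS]⟩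
  | e :: L, a, h => by
    classical
    obtain ⟨h1, h2⟩ := List.nodup_cons.1 h
    obtain ⟨c, hc⟩ := PS.exists Z L (a + Z e) h2
    refine ⟨Function.update c e a, by simp, ?_⟩
    have : PS c Z (a + Z e) (a + ((e :: L).map Z).sum) L := by simpa [add_assoc] using hc
    refine this.congr ?_
    intro x hx
    rw [Function.update_of_ne]
    rintro rfl; exact h1 hx

lemma Run.exists_lists (R : V → V → Prop) : ∀ (Q P : List V) (L : List (V × V)), Run R L Q →
    (P ++ Q).Nodup → L.Nodup → (∀ e, e ∈ L ↔ R e.1 e.2 ∧ e.1 ∈ P ∧ e.2 ∈ Q) →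
    ∃ I O : V → List (V × V), (∀ v ∈ Q, (I v).Nodup ∧ (O v).Nodup) ∧
      (∀ v Q₁ Q₂, Q = Q₁ ++ v :: Q₂ →
        (∀ e, e ∈ I v ↔ e.2 = v ∧ R e.1 v ∧ e.1 ∈ P ++ Q₁) ∧
        (∀ e, e ∈ O v ↔ e.1 = v ∧ R v e.2 ∧ e.2 ∈ Q₂)) ∧
      ∀ (Z c₀ : V × V → ZMod 2) (a b : ZMod 2), PS c₀ Z a b L →
        (∀ v ∈ Q, ((I v).map Z).sum = ((O v).map Z).sum) →
        ∃ c, (∀ e ∈ L, c e = c₀ e) ∧ ∀ v ∈ Q, ∃ a b, PS c Z a b (I v) ∧ PS c Z a b (O v)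
  | [], P, L, h, _, _, _ => ⟨fun _ => [], fun _ => [], by simp, by simp,
      fun Z c₀ a b _ _ => ⟨c₀, by simp, by simp⟩⟩
  | v :: Q, P, L, h, hnd, hL, hLm => by
    classical
    obtain ⟨A, I, O, B, rfl, hI, hA, hB, hO, hOnd, hOm, hrun⟩ := h
    have hnd' : (P ++ [v] ++ Q).Nodup := by simpa using hnd
    have hvP : v ∉ P := by
      intro hv
      exact (List.disjoint_of_nodup_append hnd) hv (by simp)
    have hvQ : v ∉ Q := (List.nodup_cons.1 (List.nodup_append.1 hnd).2.1).1
    have hmem : ∀ e, e ∈ A ++ O ++ B ↔ R e.1 e.2 ∧ e.1 ∈ P ++ [v] ∧ e.2 ∈ Q := by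
      intro e
      have h1 := hLm e
      simp only [List.mem_append, List.mem_cons] at h1 ⊢
      by_cases hev : e.1 = v
      · have hOe : e ∈ O ↔ R e.1 e.2 ∧ e.2 ∈ Q := by
          obtain ⟨x, y⟩ := e
          simp only at hev; subst hev; exact hOm y
        have hnA : e ∉ A := fun h => hvP (hev ▸ (h1.1 (Or.inl (Or.inl h))).2.1)
        have hnB : e ∉ B := fun h => hvP (hev ▸ (h1.1 (Or.inr h)).2.1)
        simp [hnA, hnB, hOe, hev]
      · have hnO : e ∉ O := fun h => hev (hO e h)
        simp only [hnO, or_false, hev]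
        by_cases he2 : e.2 = v
        · have hnA : e ∉ A := fun h => hA e h he2
          have hnB : e ∉ B := fun h => hB e h he2
          simp [hnA, hnB, he2, hvQ]
        · have hnI : e ∉ I := fun h => he2 (hI e h)
          simpa [hnI, he2] using h1
    have hIm : ∀ e, e ∈ I ↔ e.2 = v ∧ R e.1 v ∧ e.1 ∈ P := by
      intro e
      have h1 := hLm e
      simp only [List.mem_append, List.mem_cons] at h1
      constructor
      · intro h
        have h2 := h1.1 (Or.inl (Or.inr h))
        have h3 := hI e h
        rw [h3] at h2
        exact ⟨h3, h2.1, h2.2.1⟩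
      · rintro ⟨h2, h3, h4⟩
        rcases h1.2 ⟨h2 ▸ h3, h4, Or.inl h2⟩ with (h | h) | h
        · exact absurd h2 (hA e h)
        · exact h
        · exact absurd h2 (hB e h)
    have hLnd : (A ++ O ++ B).Nodup := by
      have h1 : (A ++ I ++ B).Nodup := hL
      have hOd : ∀ e ∈ O, e ∉ A ∧ e ∉ B := fun e he =>
        ⟨fun h => hvP (hO e he ▸ ((hLm e).1 (by simp [h])).2.1),
          fun h => hvP (hO e he ▸ ((hLm e).1 (by simp [h])).2.1)⟩
      simp only [List.nodup_append, List.mem_append] at h1 ⊢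
      refine ⟨⟨h1.1.1, hOnd, ?_⟩, h1.2.1, ?_⟩
      · rintro a ha b hb rfl; exact (hOd a hb).1 ha
      · rintro a (ha | ha) b hb
        · exact h1.2.2 a (Or.inl ha) b hb
        · rintro rfl; exact (hOd a ha).2 hb
    obtain ⟨I', O', h1, h2, h3⟩ := Run.exists_lists R Q (P ++ [v]) _ hrun hnd' hLnd hmem
    have hne : ∀ w ∈ Q, w ≠ v := by rintro w hw rfl; exact hvQ hw
    refine ⟨Function.update I' v I, Function.update O' v O, ?_, ?_, ?_⟩
    · intro w hw
      rcases List.mem_cons.1 hw with rfl | hw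
      · simp only [Function.update_self]
        exact ⟨(List.nodup_append.1 (List.nodup_append.1 hL).1).2.1, hOnd⟩
      · rw [Function.update_of_ne (hne w hw), Function.update_of_ne (hne w hw)]
        exact h1 w hw
    · intro w Q₁ Q₂ hQ
      rcases Q₁ with _ | ⟨x, Q₁⟩
      · simp only [List.nil_append, List.cons.injEq] at hQ
        obtain ⟨rfl, rfl⟩ := hQ
        simp only [Function.update_self, List.append_nil]
        refine ⟨hIm, ?_⟩
        rintro ⟨x, y⟩
        constructor
        · intro h
          have := hO _ h
          simp only at this; subst this
          exact ⟨rfl, (hOm y).1 h⟩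
        · rintro ⟨h, h'⟩
          simp only at h; subst h
          exact (hOm y).2 h'
      · simp only [List.cons_append, List.cons.injEq] at hQ
        obtain ⟨rfl, rfl⟩ := hQ
        have hw := hne w (by simp)
        rw [Function.update_of_ne hw, Function.update_of_ne hw]
        obtain ⟨h4, h5⟩ := h2 w Q₁ Q₂ rfl
        exact ⟨fun e => by rw [h4 e]; simp, h5⟩
    · intro Z c₀ a b hps hcons
      obtain ⟨m', hm, hB'⟩ := PS.append.1 hps
      obtain ⟨m, hA', hI'⟩ := PS.append.1 hm
      obtain ⟨c₁, hc₁⟩ := PS.exists Z O m hOnd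
      have hs : m + (O.map Z).sum = m' := by
        have := hcons v (by simp)
        simp only [Function.update_self] at this
        rw [hI'.sum, this]
      rw [hs] at hc₁
      let c₂ : V × V → ZMod 2 := fun e => if e.1 = v then c₁ e else c₀ e
      have hc₂L : ∀ e ∈ A ++ I ++ B, c₂ e = c₀ e := by
        intro e he
        have := ((hLm e).1 he).2.1
        simp only [c₂]; rw [if_neg]
        intro h; exact hvP (h ▸ this)
      have hc₂O : ∀ e ∈ O, c₂ e = c₁ e := fun e he => by simp only [c₂]; rw [if_pos (hO e he)]
      obtain ⟨c, hc, hc'⟩ := h3 Z c₂ a b (PS.append.2 ⟨m', PS.append.2 ⟨m,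
        hA'.congr (fun e he => hc₂L e (by simp [he])), hc₁.congr hc₂O⟩,
        hB'.congr (fun e he => hc₂L e (by simp [he]))⟩) (by
          intro w hw
          have := hcons w (by simp [hw])
          rwa [Function.update_of_ne (hne w hw), Function.update_of_ne (hne w hw)] at this)
      -- edges entering `v` never occur again, so the value on them may still be prescribed
      let c₃ : V × V → ZMod 2 := fun e => if e.2 = v then c₀ e else c e
      have hc₃ : ∀ e, e.2 ≠ v → c₃ e = c e := fun e he => by simp only [c₃]; rw [if_neg he]
      refine ⟨c₃, ?_, ?_⟩
      · intro e he
        by_cases he2 : e.2 = v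
        · simp [c₃, he2]
        · rw [hc₃ e he2, hc e, hc₂L e he]
          simp only [List.mem_append] at he ⊢
          rcases he with (h | h) | h
          · simp [h]
          · exact absurd (hI e h) he2
          · simp [h]
      · intro w hw
        rcases List.mem_cons.1 hw with rfl | hw
        · simp only [Function.update_self]
          refine ⟨m, m', hI'.congr ?_, hc₁.congr ?_⟩
          · intro e he; simp [c₃, hI e he]
          · intro e he
            have : e.2 ≠ w := hne _ ((hmem e).1 (by simp [he])).2.2
            rw [hc₃ e this, hc e (by simp [he]), hc₂O e he]
        · obtain ⟨a, b, h4, h5⟩ := hc' w hw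
          rw [Function.update_of_ne (hne w hw), Function.update_of_ne (hne w hw)]
          obtain ⟨Q₁, Q₂, hQ⟩ := List.append_of_mem hw
          obtain ⟨h6, h7⟩ := h2 w Q₁ Q₂ hQ
          refine ⟨a, b, h4.congr ?_, h5.congr ?_⟩
          · intro e he; exact hc₃ e (by rw [((h6 e).1 he).1]; exact hne w hw)
          · intro e he
            refine hc₃ e (hne _ ?_)
            rw [hQ]; simp [((h7 e).1 he).2.2]

/-- `CS C v a b l`: walking around `v` across the edges to the vertices of `l`, where `C v w` and
`C w v` are the values before and after crossing the edge `vw`, the value changes from `a`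
to `b`. -/
def CS (C : V → V → ZMod 2) (v : V) : ZMod 2 → ZMod 2 → List V → Prop
  | a, b, [] => a = b
  | a, b, w :: l => C v w = a ∧ CS C v (C w v) b l

lemma CS.append {C : V → V → ZMod 2} {v : V} : ∀ {L M : List V} {a b : ZMod 2},
    CS C v a b (L ++ M) ↔ ∃ m, CS C v a m L ∧ CS C v m b M
  | [], M, a, b => by simp [CS]
  | e :: L, M, a, b => by
    simp only [List.cons_append, CS, CS.append (L := L)]
    constructor
    · rintro ⟨h, m, h1, h2⟩; exact ⟨m, ⟨h, h1⟩, h2⟩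
    · rintro ⟨m, ⟨h, h1⟩, h2⟩; exact ⟨h, m, h1, h2⟩

lemma CS.of_out {C : V → V → ZMod 2} {v : V} {c Z : V × V → ZMod 2} : ∀ {L : List (V × V)}
    {a b : ZMod 2}, (∀ e ∈ L, C v e.2 = c e ∧ C e.2 v = c e + Z e) → PS c Z a b L →
    CS C v a b (L.map Prod.snd)
  | [], a, b, _, h => h
  | e :: L, a, b, hc, h => by
    have he := hc e (by simp)
    refine ⟨he.1.trans h.1, ?_⟩
    rw [he.2, h.1]
    exact CS.of_out (fun e he => hc e (by simp [he])) h.2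

lemma CS.of_in {C : V → V → ZMod 2} {v : V} {c Z : V × V → ZMod 2} : ∀ {L : List (V × V)}
    {a b : ZMod 2}, (∀ e ∈ L, C e.1 v = c e ∧ C v e.1 = c e + Z e) → PS c Z a b L →
    CS C v b a (L.map Prod.fst).reverse
  | [], a, b, _, h => h.symm
  | e :: L, a, b, hc, h => by
    have he := hc e (by simp)
    rw [List.map_cons, List.reverse_cons, CS.append]
    refine ⟨a + Z e, CS.of_in (fun e he => hc e (by simp [he])) h.2, ?_, ?_⟩
    · rw [he.2, h.1]
    · exact he.1.trans h.1

/-- The rotation system of a sweep: clockwise around each vertex, first the edges leaving it and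
then the edges entering it. Every even set `Z` of edges separates the faces into two classes. -/
theorem Run.exists_rot (R : V → V → Prop) (hsymm : ∀ v w, R v w → R w v) (hirr : ∀ v, ¬ R v v)
    (ord : List V) (hnd : ord.Nodup) (hmem : ∀ v, v ∈ ord ↔ ∃ w, R v w) (hrun : Run R [] ord) :
    ∃ rot : V → List V, (∀ v, (rot v).Nodup) ∧ (∀ v w, w ∈ rot v ↔ R v w) ∧
      ∀ Z : V → V → ZMod 2, (∀ v w, Z v w = Z w v) → (∀ v, ((rot v).map (Z v)).sum = 0) →
        ∃ C : V → V → ZMod 2, (∀ v w, R v w → C v w + C w v = Z v w) ∧ ∀ v, ∃ a, CS C v a a (rot v) := by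
  classical
  obtain ⟨I, O, h1, h2, h3⟩ := Run.exists_lists R ord [] [] hrun (by simpa using hnd) (by simp)
    (by simp)
  have hbi : ∀ v ∈ ord, ∀ e, e ∈ I v ↔ e.2 = v ∧ R e.1 v ∧ Bef ord e.1 v := by
    intro v hv e
    obtain ⟨Q₁, Q₂, hQ⟩ := List.append_of_mem hv
    rw [(h2 v Q₁ Q₂ hQ).1 e, sub_iff_left hnd hQ, List.nil_append]
  have hbo : ∀ v ∈ ord, ∀ e, e ∈ O v ↔ e.1 = v ∧ R v e.2 ∧ Bef ord v e.2 := by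
    intro v hv e
    obtain ⟨Q₁, Q₂, hQ⟩ := List.append_of_mem hv
    rw [(h2 v Q₁ Q₂ hQ).2 e, sub_iff_right hnd hQ]
  have hord : ∀ v w, R v w → (Bef ord v w ↔ ¬ Bef ord w v) := by
    intro v w h
    have hv : v ∈ ord := (hmem v).2 ⟨w, h⟩
    have hw : w ∈ ord := (hmem w).2 ⟨v, hsymm _ _ h⟩
    rw [sub_iff_idxOf hnd hv, sub_iff_idxOf hnd hw]
    have : ord.idxOf v ≠ ord.idxOf w := by
      intro h'
      have := (List.idxOf_inj hv).1 h'
      subst this; exact hirr _ h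
    omega
  have hfst : ∀ v ∈ ord, ∀ e ∈ O v, e = (v, e.2) := fun v hv e he =>
    Prod.ext ((hbo v hv e).1 he).1 rfl
  have hsnd : ∀ v ∈ ord, ∀ e ∈ I v, e = (e.1, v) := fun v hv e he =>
    Prod.ext rfl ((hbi v hv e).1 he).1
  let rot : V → List V := fun v =>
    if v ∈ ord then (O v).map Prod.snd ++ ((I v).map Prod.fst).reverse else []
  refine ⟨rot, ?_, ?_, ?_⟩
  · intro v
    by_cases hv : v ∈ ord
    · simp only [rot, if_pos hv]
      rw [List.nodup_append, List.nodup_reverse]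
      refine ⟨(List.nodup_map_iff_inj_on (h1 v hv).2).2 ?_,
        (List.nodup_map_iff_inj_on (h1 v hv).1).2 ?_, ?_⟩
      · intro x hx y hy hxy; rw [hfst v hv x hx, hfst v hv y hy, hxy]
      · intro x hx y hy hxy; rw [hsnd v hv x hx, hsnd v hv y hy, hxy]
      · rintro x hx y hy rfl
        obtain ⟨e, he, rfl⟩ := List.mem_map.1 hx
        obtain ⟨f, hf, hfe⟩ := List.mem_map.1 (List.mem_reverse.1 hy)
        have h4 := (hbo v hv e).1 he
        have h5 := (hbi v hv f).1 hf
        rw [hfe] at h5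
        exact (hord _ _ h4.2.1).1 h4.2.2 h5.2.2
    · simp [rot, hv]
  · intro v w
    by_cases hv : v ∈ ord
    · simp only [rot, if_pos hv, List.mem_append, List.mem_reverse, List.mem_map]
      constructor
      · rintro (⟨e, he, rfl⟩ | ⟨e, he, rfl⟩)
        · exact ((hbo v hv e).1 he).2.1
        · exact hsymm _ _ ((hbi v hv e).1 he).2.1
      · intro h
        by_cases hb : Bef ord v w
        · exact Or.inl ⟨(v, w), (hbo v hv _).2 ⟨rfl, h, hb⟩, rfl⟩
        · have := (hord w v (hsymm _ _ h)).2 hb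
          exact Or.inr ⟨(w, v), (hbi v hv _).2 ⟨rfl, hsymm _ _ h, this⟩, rfl⟩
    · simp only [rot, if_neg hv, List.not_mem_nil, false_iff]
      intro h; exact hv ((hmem v).2 ⟨w, h⟩)
  · intro Z hZ hZ0
    obtain ⟨c, -, hc⟩ := h3 (fun e => Z e.1 e.2) (fun _ => 0) 0 0 rfl (by
      intro v hv
      have h := hZ0 v
      simp only [rot, if_pos hv, List.map_append, List.sum_append, List.map_reverse,
        List.sum_reverse, List.map_map] at h
      have e1 : (O v).map (Z v ∘ Prod.snd) = (O v).map (fun e => Z e.1 e.2) :=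
        List.map_congr_left (fun e he => by
          have := ((hbo v hv e).1 he).1
          simp [this])
      have e2 : (I v).map (Z v ∘ Prod.fst) = (I v).map (fun e => Z e.1 e.2) :=
        List.map_congr_left (fun e he => by
          have := ((hbi v hv e).1 he).1
          simp [this, hZ v])
      rw [e1, e2] at h
      exact ((CharTwo.add_eq_zero).1 h).symm)
    have htwo : ∀ x : ZMod 2, x + x = 0 := CharTwo.add_self_eq_zero
    refine ⟨fun v w => if Bef ord v w then c (v, w) else c (w, v) + Z w v, ?_, ?_⟩
    · intro v w hvw
      by_cases hb : Bef ord v w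
      · have := (hord _ _ hvw).1 hb
        simp only [if_pos hb, if_neg this]
        rw [← add_assoc, htwo, zero_add]
      · have := (hord _ _ (hsymm _ _ hvw)).2 hb
        simp only [if_pos this, if_neg hb]
        rw [add_right_comm, htwo, zero_add, hZ]
    · intro v
      by_cases hv : v ∈ ord
      · simp only [rot, if_pos hv]
        obtain ⟨a, b, ha, hb⟩ := hc v hv
        refine ⟨a, CS.append.2 ⟨b, CS.of_out ?_ hb, CS.of_in ?_ ha⟩⟩
        · intro e he
          have h4 := (hbo v hv e).1 he
          have h5 := (hord _ _ h4.2.1).1 h4.2.2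
          rw [hfst v hv e he]
          simp only [if_pos h4.2.2, if_neg h5, and_self]
        · intro e he
          have h4 := (hbi v hv e).1 he
          have h5 := (hord _ _ h4.2.1).1 h4.2.2
          rw [hsnd v hv e he]
          simp only [if_pos h4.2.2, if_neg h5, and_self]
      · exact ⟨0, by simp [rot, hv, CS]⟩

end Rotation

/-! ### The rotation system of a planar polyline drawing -/

lemma CS.formPerm {V : Type*} [DecidableEq V] {C : V → V → ZMod 2} {v : V} {l : List V}
    {a : ZMod 2} (hl : l.Nodup) (h : CS C v a a l) : ∀ w ∈ l, C v (l.formPerm w) = C w v := by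
  have key : ∀ i (hi : i + 1 < l.length), C v (l[i + 1]) = C (l[i]) v := by
    intro i hi
    have hl' : l = l.take i ++ l[i] :: l[i + 1] :: l.drop (i + 2) := by
      rw [← List.drop_eq_getElem_cons hi, ← List.drop_eq_getElem_cons (by omega : i < l.length),
        List.take_append_drop]
    rw [hl'] at h
    obtain ⟨m, -, h2⟩ := CS.append.1 h
    exact h2.2.1
  intro w hw
  obtain ⟨i, hi, rfl⟩ := List.getElem_of_mem hw
  rw [List.formPerm_apply_getElem l hl]
  by_cases hi' : i + 1 < l.length
  · simp only [Nat.mod_eq_of_lt hi']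
    exact key i hi'
  · have hi2 : i + 1 = l.length := by omega
    have h0 : (i + 1) % l.length = 0 := by rw [hi2]; exact Nat.mod_self _
    simp only [h0]
    have e1 : C v (l[0]) = a := by
      rcases l with _ | ⟨x, l⟩
      · simp at hi
      · exact h.1
    have e2 : C (l[i]) v = a := by
      have hl' : l = l.take i ++ [l[i]] := by
        rw [List.take_append_getElem, List.take_of_length_le (by omega)]
      rw [hl'] at h
      obtain ⟨m, -, h2⟩ := CS.append.1 h
      exact h2.2
    rw [e1, e2]

lemma CS.of_map {V W : Type*} {C : V → V → ZMod 2} {c : W → W → ZMod 2} {p : V} {v : W}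
    {f : W → V} : ∀ {l : List W} {a b : ZMod 2}, CS C p a b (l.map f) →
      (∀ w ∈ l, C p (f w) = c v w ∧ C (f w) p = c w v) → CS c v a b l
  | [], _, _, h, _ => h
  | w :: l, a, b, h, hc => by
    have hw := hc w (by simp)
    refine ⟨hw.1.symm.trans h.1, ?_⟩
    have := CS.of_map (l := l) h.2 (fun w hw => hc w (by simp [hw]))
    rwa [hw.2] at this

/-- A combinatorial certificate of planarity: a rotation system whose faces are separated by every
even set `Z` of edges, i.e. there is a function `c` on darts (directed edges), constant along faces,
which differs between the two sides of an edge exactly when this edge is in `Z`. -/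
def Cert {V : Type*} [Fintype V] (G : SimpleGraph V) : Prop :=
  ∃ σ : V → Equiv.Perm V, (∀ v, (σ v).IsCycleOn (G.neighborSet v)) ∧
    ∀ Z : V → V → ZMod 2, (∀ v w, Z v w = Z w v) → (∀ v w, ¬ G.Adj v w → Z v w = 0) →
      (∀ v, ∑ w, Z v w = 0) → ∃ c : V → V → ZMod 2, ∀ v w, G.Adj v w →
        c v w + c w v = Z v w ∧ c v (σ v w) = c w v

namespace PolyDrawing

variable {V : Type*} {G : SimpleGraph V} (D : PolyDrawing G)

/-- The number of segments of the polyline of the edge `vw`. -/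
def N (v w : V) : ℕ := (D.poly s(v, w)).len

open Classical in
/-- The points of the polyline of the edge `vw`, in the order from `v` to `w`. -/
noncomputable def arc (v w : V) (i : ℕ) : ℝ × ℝ :=
  if (D.poly s(v, w)).pt 0 = D.pos v then (D.poly s(v, w)).pt i
  else (D.poly s(v, w)).pt ((D.poly s(v, w)).len - i)

variable {D} {v w v' w' u : V} {z : ℝ × ℝ} {i j : ℕ}

lemma N_comm (v w : V) : D.N v w = D.N w v := by rw [N, N, Sym2.eq_swap]

lemma N_pos (v w : V) : 0 < D.N v w := (D.poly s(v, w)).len_pos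

lemma ends_or (h : G.Adj v w) :
    ((D.poly s(v, w)).pt 0 = D.pos v ∧ (D.poly s(v, w)).pt (D.poly s(v, w)).len = D.pos w) ∨
    ((D.poly s(v, w)).pt 0 = D.pos w ∧ (D.poly s(v, w)).pt (D.poly s(v, w)).len = D.pos v) :=
  Set.pair_eq_pair_iff.1 (D.ends v w h)

lemma pos_ne (h : G.Adj v w) : D.pos v ≠ D.pos w := fun h' => h.ne (D.inj h')

lemma arc_zero (h : G.Adj v w) : D.arc v w 0 = D.pos v := by
  have hne := pos_ne (D := D) h
  rcases ends_or (D := D) h with h1 | h1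
  · simp [arc, h1.1]
  · simp [arc, h1.1, h1.2, hne.symm]

lemma arc_symm (h : G.Adj v w) (hi : i ≤ D.N v w) : D.arc w v i = D.arc v w (D.N v w - i) := by
  have hne := pos_ne (D := D) h
  unfold N at hi
  rcases ends_or (D := D) h with h1 | h1
  · simp [arc, h1.1, hne, Sym2.eq_swap (a := w) (b := v), N]
  · simp only [arc, Sym2.eq_swap (a := w) (b := v), h1.1, if_true, hne.symm, if_false, N]
    congr 1; omega

lemma arc_N (h : G.Adj v w) : D.arc v w (D.N v w) = D.pos w := by
  have := arc_symm (D := D) h.symm (i := D.N v w) (by rw [N_comm])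
  rw [this, N_comm, Nat.sub_self, arc_zero h.symm]

lemma arc_simple (hD : D.IsPlanar) (h : G.Adj v w) (hij : i < j) (hj : j < D.N v w)
    (h1 : z ∈ segment ℝ (D.arc v w i) (D.arc v w (i + 1)))
    (h2 : z ∈ segment ℝ (D.arc v w j) (D.arc v w (j + 1))) : j = i + 1 ∧ z = D.arc v w j := by
  have hs := hD.1 s(v, w) h
  unfold N at hj
  unfold arc at h1 h2 ⊢
  split_ifs at h1 h2 ⊢ with h0
  · exact hs.segment_inter hij hj h1 h2
  · rw [segment_symm] at h1 h2
    have e1 : (D.poly s(v, w)).len - i = ((D.poly s(v, w)).len - (i + 1)) + 1 := by omega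
    have e2 : (D.poly s(v, w)).len - j = ((D.poly s(v, w)).len - (j + 1)) + 1 := by omega
    rw [e1] at h1
    rw [e2] at h2 ⊢
    obtain ⟨h3, h4⟩ := hs.segment_inter (by omega) (by omega) h2 h1
    refine ⟨by omega, ?_⟩
    rw [h4, h3]

lemma arc_ne (h : G.Adj v w) (hi : i < D.N v w) : D.arc v w i ≠ D.arc v w (i + 1) := by
  have hs := (D.proper s(v, w) h).1
  unfold N at hi
  unfold arc
  split_ifs with h0
  · exact hs i hi
  · have e1 : (D.poly s(v, w)).len - i = ((D.poly s(v, w)).len - (i + 1)) + 1 := by omega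
    rw [e1]
    exact (hs _ (by omega)).symm

lemma arc_mem (hi : i < D.N v w) (h1 : z ∈ segment ℝ (D.arc v w i) (D.arc v w (i + 1))) :
    z ∈ (D.poly s(v, w)).image := by
  rw [Polyline.mem_image_iff]
  unfold N at hi
  unfold arc at h1
  split_ifs at h1 with h0
  · exact ⟨i, hi, h1⟩
  · have e1 : (D.poly s(v, w)).len - i = ((D.poly s(v, w)).len - (i + 1)) + 1 := by omega
    rw [e1, segment_symm] at h1
    exact ⟨_, by omega, h1⟩

lemma arc_mem' (hi : i ≤ D.N v w) : D.arc v w i ∈ (D.poly s(v, w)).image := by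
  have hN := N_pos (D := D) v w
  by_cases h0 : i < D.N v w
  · exact arc_mem h0 (left_mem_segment _ _ _)
  · have : i = (i - 1) + 1 := by omega
    rw [this]
    exact arc_mem (i := i - 1) (by omega) (right_mem_segment _ _ _)

lemma image_inter (hD : D.IsPlanar) (h : G.Adj v w) (h' : G.Adj v' w') (hne : s(v, w) ≠ s(v', w'))
    (hz : z ∈ (D.poly s(v, w)).image) (hz' : z ∈ (D.poly s(v', w')).image) :
    ∃ u, z = D.pos u ∧ (u = v ∨ u = w) ∧ (u = v' ∨ u = w') := by
  obtain ⟨u, ⟨hu, hu'⟩, rfl⟩ := hD.2.2 s(v, w) h s(v', w') h' hne ⟨hz, hz'⟩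
  exact ⟨u, rfl, by simpa using hu, by simpa using hu'⟩

lemma image_pos (hD : D.IsPlanar) (h : G.Adj v w) (hz : D.pos u ∈ (D.poly s(v, w)).image) :
    u = v ∨ u = w := by
  have : D.pos u ∈ ({D.pos v, D.pos w} : Set (ℝ × ℝ)) := by
    rw [← hD.2.1 v w h]; exact ⟨hz, u, rfl⟩
  rcases this with h | h
  · exact Or.inl (D.inj h)
  · exact Or.inr (D.inj h)

lemma arc_inj (hD : D.IsPlanar) (h : G.Adj v w) (hi : i ≤ D.N v w) (hj : j ≤ D.N v w)
    (hij : D.arc v w i = D.arc v w j) : i = j := by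
  wlog hlt : i < j generalizing i j
  · rcases Nat.lt_trichotomy i j with h1 | h1 | h1
    · exact this hi hj hij h1
    · exact h1
    · exact (this hj hi hij.symm h1).symm
  exfalso
  obtain ⟨k, rfl⟩ : ∃ k, j = k + 1 := ⟨j - 1, by omega⟩
  rcases Nat.lt_or_ge i k with h1 | h1
  · obtain ⟨h2, h3⟩ := arc_simple hD h h1 (by omega) (left_mem_segment _ _ _)
      (by rw [hij]; exact right_mem_segment _ _ _)
    rw [hij] at h3
    exact arc_ne h (by omega : k < D.N v w) h3.symm
  · have : i = k := by omega
    subst this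
    exact arc_ne h (by omega : i < D.N v w) hij

lemma seg_start (hD : D.IsPlanar) (h : G.Adj v w) (hi : i < D.N v w)
    (hz : D.pos v ∈ segment ℝ (D.arc v w i) (D.arc v w (i + 1))) : i = 0 := by
  by_contra h0
  have h1 : D.pos v ∈ segment ℝ (D.arc v w 0) (D.arc v w (0 + 1)) := by
    rw [arc_zero h]; exact left_mem_segment _ _ _
  obtain ⟨h2, h3⟩ := arc_simple hD h (Nat.pos_of_ne_zero h0) hi h1 hz
  rw [← arc_zero h] at h3
  have := arc_inj hD h (Nat.zero_le _) hi.le h3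
  omega

lemma seg_end (hD : D.IsPlanar) (h : G.Adj v w) (hi : i < D.N v w)
    (hz : D.pos w ∈ segment ℝ (D.arc v w i) (D.arc v w (i + 1))) : i + 1 = D.N v w := by
  have hs := seg_start hD h.symm (i := D.N v w - (i + 1)) (by rw [N_comm w v]; omega) (by
    rw [arc_symm h (by omega), arc_symm h (by omega), segment_symm]
    have e1 : D.N v w - (D.N v w - (i + 1)) = i + 1 := by omega
    have e2 : D.N v w - (D.N v w - (i + 1) + 1) = i := by omega
    rwa [e1, e2])
  omega

/-- A point of the drawn graph on a segment `vw i` lying at a vertex is an end of the segment. -/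
lemma seg_pos (hD : D.IsPlanar) (h : G.Adj v w) (hi : i < D.N v w)
    (hz : D.pos u ∈ segment ℝ (D.arc v w i) (D.arc v w (i + 1))) :
    D.pos u = D.arc v w i ∨ D.pos u = D.arc v w (i + 1) := by
  rcases image_pos hD h (arc_mem hi hz) with rfl | rfl
  · have := seg_start hD h hi hz
    subst this
    exact Or.inl (arc_zero h).symm
  · have := seg_end hD h hi hz
    rw [this]
    exact Or.inr (arc_N h).symm

/-- The segments of a drawing, as a relation between points. -/
def SegRel (D : PolyDrawing G) (p q : ℝ × ℝ) : Prop :=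
  ∃ v w, G.Adj v w ∧ ∃ i < D.N v w, p = D.arc v w i ∧ q = D.arc v w (i + 1)

lemma SegRel.symm {p q : ℝ × ℝ} (h : D.SegRel p q) : D.SegRel q p := by
  obtain ⟨v, w, h, i, hi, rfl, rfl⟩ := h
  refine ⟨w, v, h.symm, D.N v w - (i + 1), by rw [N_comm w v]; omega, ?_, ?_⟩
  · rw [arc_symm h (by omega)]; congr 1; omega
  · rw [arc_symm h (by omega)]; congr 1; omega

lemma SegRel.irrefl (p : ℝ × ℝ) : ¬ D.SegRel p p := by
  rintro ⟨v, w, h, i, hi, h1, h2⟩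
  exact arc_ne h hi (h1.symm.trans h2)

lemma SegRel.nonCrossing (hD : D.IsPlanar) : NonCrossing D.SegRel := by
  rintro p q p' q' ⟨v, w, h, i, hi, rfl, rfl⟩ ⟨v', w', h', i', hi', rfl, rfl⟩ z hz hz'
  by_cases hs : s(v, w) = s(v', w')
  · have key : ∀ j < D.N v w, z ∈ segment ℝ (D.arc v w j) (D.arc v w (j + 1)) → i = j ∨
        ((z = D.arc v w i ∨ z = D.arc v w (i + 1)) ∧
          (z = D.arc v w j ∨ z = D.arc v w (j + 1))) := by
      intro j hj hzj
      rcases Nat.lt_trichotomy i j with h1 | h1 | h1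
      · obtain ⟨rfl, h3⟩ := arc_simple hD h h1 hj hz hzj
        exact Or.inr ⟨Or.inr h3, Or.inl h3⟩
      · exact Or.inl h1
      · obtain ⟨rfl, h3⟩ := arc_simple hD h h1 hi hzj hz
        exact Or.inr ⟨Or.inl h3, Or.inr h3⟩
    rcases Sym2.eq_iff.1 hs with ⟨rfl, rfl⟩ | ⟨rfl, rfl⟩
    · rcases key i' hi' hz' with rfl | h1
      · exact Or.inl ⟨rfl, rfl⟩
      · exact Or.inr (Or.inr h1)
    · rw [N_comm] at hi'
      have e1 : D.arc w v i' = D.arc v w (D.N v w - (i' + 1) + 1) := by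
        rw [arc_symm h (by omega)]; congr 1; omega
      have e2 : D.arc w v (i' + 1) = D.arc v w (D.N v w - (i' + 1)) := by
        rw [arc_symm h (by omega)]
      rw [e1, e2] at hz' ⊢
      rw [segment_symm] at hz'
      rcases key _ (by omega) hz' with h1 | h1
      · rw [← h1]; exact Or.inr (Or.inl ⟨rfl, rfl⟩)
      · exact Or.inr (Or.inr ⟨h1.1, h1.2.symm⟩)
  · obtain ⟨u, rfl, -, -⟩ := image_inter hD h h' hs (arc_mem hi hz) (arc_mem hi' hz')
    exact Or.inr (Or.inr ⟨seg_pos hD h hi hz, seg_pos hD h' hi' hz'⟩)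

lemma SegRel.finite [Finite V] : {p | ∃ q, D.SegRel p q}.Finite := by
  have : {p | ∃ q, D.SegRel p q} ⊆
      ⋃ x : V × V, (fun i => D.arc x.1 x.2 i) '' (Set.Iio (D.N x.1 x.2)) := by
    rintro p ⟨q, v, w, h, i, hi, rfl, rfl⟩
    exact Set.mem_iUnion.2 ⟨(v, w), i, hi, rfl⟩
  exact (Set.finite_iUnion (fun x => (Set.finite_Iio _).image _)).subset this

/-- A bend belongs to a single edge. -/
lemma arc_bend (hD : D.IsPlanar) (h : G.Adj v w) (h' : G.Adj v' w') (hi : 0 < i)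
    (hi' : i < D.N v w) (hj : j ≤ D.N v' w') (he : D.arc v w i = D.arc v' w' j) :
    (v' = v ∧ w' = w ∧ j = i) ∨ (v' = w ∧ w' = v ∧ j = D.N v w - i) := by
  by_cases hs : s(v, w) = s(v', w')
  · rcases Sym2.eq_iff.1 hs with ⟨rfl, rfl⟩ | ⟨rfl, rfl⟩
    · exact Or.inl ⟨rfl, rfl, (arc_inj hD h hi'.le hj he).symm⟩
    · rw [N_comm] at hj
      rw [arc_symm h hj] at he
      have := arc_inj hD h hi'.le (by omega) he
      exact Or.inr ⟨rfl, rfl, by omega⟩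
  · exfalso
    obtain ⟨u, hu, hu1, -⟩ := image_inter hD h h' hs (arc_mem' hi'.le) (he ▸ arc_mem' hj)
    rcases hu1 with rfl | rfl
    · rw [← arc_zero h] at hu
      have := arc_inj hD h hi'.le (Nat.zero_le _) hu
      omega
    · rw [← arc_N h] at hu
      have := arc_inj hD h hi'.le le_rfl hu
      omega

lemma segRel_pos (hD : D.IsPlanar) (q : ℝ × ℝ) :
    D.SegRel (D.pos v) q ↔ ∃ w, G.Adj v w ∧ q = D.arc v w 1 := by
  constructor
  · rintro ⟨v', w', h, i, hi, h1, rfl⟩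
    rcases image_pos hD h (h1 ▸ arc_mem' hi.le : D.pos v ∈ _) with rfl | rfl
    · rw [← arc_zero h] at h1
      have := arc_inj hD h (Nat.zero_le _) hi.le h1
      subst this
      exact ⟨w', h, rfl⟩
    · rw [← arc_N h] at h1
      have := arc_inj hD h le_rfl hi.le h1
      omega
  · rintro ⟨w, h, rfl⟩
    exact ⟨v, w, h, 0, N_pos _ _, (arc_zero h).symm, rfl⟩

lemma arc_one_inj (hD : D.IsPlanar) (h : G.Adj v w) (h' : G.Adj v w')
    (he : D.arc v w 1 = D.arc v w' 1) : w = w' := by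
  by_contra hne
  have hs : s(v, w) ≠ s(v, w') := by
    intro hs
    rcases Sym2.eq_iff.1 hs with ⟨-, h1⟩ | ⟨h1, -⟩
    · exact hne h1
    · exact h'.ne h1
  obtain ⟨u, hu, hu1, hu2⟩ := image_inter hD h h' hs (arc_mem' (N_pos _ _))
    (he ▸ arc_mem' (N_pos _ _))
  have huv : u = v := by
    rcases hu1 with h1 | h1
    · exact h1
    · rcases hu2 with h2 | h2
      · exact h2
      · exact absurd (h1.symm.trans h2) hne
  rw [huv, ← arc_zero h] at hu
  have := arc_inj hD h (N_pos _ _) (Nat.zero_le _) hu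
  omega

lemma segRel_bend (hD : D.IsPlanar) (h : G.Adj v w) (hi : 0 < i) (hi' : i < D.N v w)
    (q : ℝ × ℝ) :
    D.SegRel (D.arc v w i) q ↔ q = D.arc v w (i - 1) ∨ q = D.arc v w (i + 1) := by
  constructor
  · rintro ⟨v', w', h', j, hj, h1, rfl⟩
    rcases arc_bend hD h h' hi hi' hj.le h1 with ⟨rfl, rfl, rfl⟩ | ⟨rfl, rfl, rfl⟩
    · exact Or.inr rfl
    · left; rw [arc_symm h (by omega)]; congr 1; omega
  · rintro (rfl | rfl)
    · refine SegRel.symm ⟨v, w, h, i - 1, by omega, rfl, ?_⟩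
      congr 1; omega
    · exact ⟨v, w, h, i, hi', rfl, rfl⟩

/-- A segment belongs to a single edge. -/
lemma seg_edge (hD : D.IsPlanar) (h : G.Adj v w) (h' : G.Adj v' w') (hi : i < D.N v w)
    (hj : j < D.N v' w') (h1 : D.arc v w i = D.arc v' w' j)
    (h2 : D.arc v w (i + 1) = D.arc v' w' (j + 1)) : s(v, w) = s(v', w') := by
  by_contra hs
  obtain ⟨u, hu, hu1, hu2⟩ := image_inter hD h h' hs (arc_mem' hi.le) (h1 ▸ arc_mem' hj.le)
  obtain ⟨x, hx, hx1, hx2⟩ := image_inter hD h h' hs (arc_mem' hi) (h2 ▸ arc_mem' hj)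
  have hne : u ≠ x := by
    rintro rfl
    exact arc_ne h hi (hu.trans hx.symm)
  apply hs
  rw [Sym2.eq_iff]
  grind

open Classical in
/-- The segments of a planar drawing form a straight-line drawing without crossings, whose vertices
are the vertices and bends of the drawing. Its rotation system is restricted to the vertices, the
bends having rotations of length two. -/
theorem exists_cert [Fintype V] (D : PolyDrawing G) (hD : D.IsPlanar) : Cert G := by
  obtain ⟨ord, hnd, hmem, hrun⟩ := (SegRel.nonCrossing hD).exists_run SegRel.finite
    (fun _ _ h => SegRel.symm h)
  obtain ⟨rot, hrnd, hrm, hrZ⟩ := Run.exists_rot D.SegRel (fun _ _ h => SegRel.symm h)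
    SegRel.irrefl ord hnd hmem hrun
  have hlist : ∀ v, ∃ l : List V, l.Nodup ∧ (∀ w, w ∈ l ↔ G.Adj v w) ∧
      rot (D.pos v) = l.map (fun w => D.arc v w 1) := by
    intro v
    have : Nonempty V := ⟨v⟩
    have hch : ∀ q ∈ rot (D.pos v), ∃ w, G.Adj v w ∧ q = D.arc v w 1 := fun q hq =>
      (segRel_pos hD q).1 ((hrm _ _).1 hq)
    choose! g hg using hch
    have hr : rot (D.pos v) = ((rot (D.pos v)).map g).map (fun w => D.arc v w 1) := by
      rw [List.map_map]
      conv_lhs => rw [← List.map_id (rot (D.pos v))]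
      exact List.map_congr_left (fun q hq => (hg q hq).2)
    have hm : ∀ w, w ∈ (rot (D.pos v)).map g ↔ G.Adj v w := by
      intro w
      constructor
      · intro hw
        obtain ⟨q, hq, rfl⟩ := List.mem_map.1 hw
        exact (hg q hq).1
      · intro h
        have hq : D.arc v w 1 ∈ rot (D.pos v) := (hrm _ _).2 ((segRel_pos hD _).2 ⟨w, h, rfl⟩)
        exact List.mem_map.2 ⟨_, hq, (arc_one_inj hD h (hg _ hq).1 (hg _ hq).2).symm⟩
    refine ⟨(rot (D.pos v)).map g, ?_, hm, hr⟩
    have := hrnd (D.pos v)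
    rw [hr] at this
    exact this.of_map
  choose l hlnd hlm hlr using hlist
  refine ⟨fun v => (l v).formPerm, ?_, ?_⟩
  · intro v
    have : G.neighborSet v = {w | w ∈ l v} := by ext w; simp [hlm]
    rw [this]
    exact (hlnd v).isCycleOn_formPerm
  · intro Z hZ hZ0 hZs
    let Zp : ℝ × ℝ → ℝ × ℝ → ZMod 2 := fun p q =>
      if h : ∃ x : V × V, G.Adj x.1 x.2 ∧ ∃ i < D.N x.1 x.2,
        p = D.arc x.1 x.2 i ∧ q = D.arc x.1 x.2 (i + 1) then Z h.choose.1 h.choose.2 else 0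
    have hZp : ∀ v w i, G.Adj v w → i < D.N v w →
        Zp (D.arc v w i) (D.arc v w (i + 1)) = Z v w := by
      intro v w i h hi
      have hR : ∃ x : V × V, G.Adj x.1 x.2 ∧ ∃ j < D.N x.1 x.2,
        D.arc v w i = D.arc x.1 x.2 j ∧ D.arc v w (i + 1) = D.arc x.1 x.2 (j + 1) :=
        ⟨(v, w), h, i, hi, rfl, rfl⟩
      simp only [Zp, dif_pos hR]
      obtain ⟨h', j, hj, h1, h2⟩ := hR.choose_spec
      rcases Sym2.eq_iff.1 (seg_edge hD h h' hi hj h1 h2) with ⟨h3, h4⟩ | ⟨h3, h4⟩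
      · rw [← h3, ← h4]
      · rw [← h3, ← h4, hZ]
    have hZpr : ∀ v w i, G.Adj v w → i < D.N v w →
        Zp (D.arc v w (i + 1)) (D.arc v w i) = Z v w := by
      intro v w i h hi
      have := hZp w v (D.N v w - (i + 1)) h.symm (by rw [N_comm w v]; omega)
      rw [arc_symm h (by omega), arc_symm h (by omega)] at this
      have e1 : D.N v w - (D.N v w - (i + 1)) = i + 1 := by omega
      have e2 : D.N v w - (D.N v w - (i + 1) + 1) = i := by omega
      rw [e1, e2] at this
      rw [this, hZ]
    have hbend : ∀ v w i, G.Adj v w → 0 < i → i < D.N v w →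
        rot (D.arc v w i) = [D.arc v w (i - 1), D.arc v w (i + 1)] ∨
        rot (D.arc v w i) = [D.arc v w (i + 1), D.arc v w (i - 1)] := by
      intro v w i h hi hi'
      have hne : D.arc v w (i - 1) ≠ D.arc v w (i + 1) := by
        intro he
        have := arc_inj hD h (by omega) (by omega) he
        omega
      have hp : (rot (D.arc v w i)).Perm [D.arc v w (i - 1), D.arc v w (i + 1)] := by
        refine (List.perm_ext_iff_of_nodup (hrnd _) (by simp [hne])).2 ?_
        intro q
        rw [hrm, segRel_bend hD h hi hi']
        simp
      have := hp.length_eq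
      match hr : rot (D.arc v w i), this with
      | [x, y], _ =>
        rw [hr] at hp
        have hx : x ∈ [D.arc v w (i - 1), D.arc v w (i + 1)] := hp.subset (by simp)
        have hy : y ∈ [D.arc v w (i - 1), D.arc v w (i + 1)] := hp.subset (by simp)
        have hxy : x ≠ y := by have := hrnd (D.arc v w i); rw [hr] at this; simpa using this
        simp only [List.mem_cons, List.not_mem_nil, or_false] at hx hy
        rcases hx with rfl | rfl <;> rcases hy with rfl | rfl
        · exact absurd rfl hxy
        · exact Or.inl rfl
        · exact Or.inr rfl
        · exact absurd rfl hxy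
    have hZpsymm : ∀ p q, Zp p q = Zp q p := by
      intro p q
      by_cases h : D.SegRel p q
      · obtain ⟨v, w, h, i, hi, rfl, rfl⟩ := h
        rw [hZp v w i h hi, hZpr v w i h hi]
      · have h' : ¬ D.SegRel q p := fun h' => h h'.symm
        simp only [Zp]
        rw [dif_neg, dif_neg]
        · rintro ⟨x, hx⟩; exact h' ⟨x.1, x.2, hx⟩
        · rintro ⟨x, hx⟩; exact h ⟨x.1, x.2, hx⟩
    have hZpeven : ∀ p, ((rot p).map (Zp p)).sum = 0 := by
      intro p
      by_cases hp : ∃ q, D.SegRel p q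
      · obtain ⟨q, v, w, h, i, hi, rfl, rfl⟩ := hp
        rcases Nat.eq_zero_or_pos i with rfl | hi0
        · rw [arc_zero h, hlr, List.map_map]
          have e1 : (l v).map (Zp (D.pos v) ∘ fun w => D.arc v w 1) = (l v).map (Z v) :=
            List.map_congr_left (fun w hw => by
              have h' := (hlm v w).1 hw
              have := hZp v w 0 h' (N_pos _ _)
              rwa [arc_zero h'] at this)
          rw [e1, ← List.sum_toFinset _ (hlnd v), ← hZs v]
          refine Finset.sum_subset (Finset.subset_univ _) ?_
          intro x _ hx
          apply hZ0
          rw [← hlm]; simpa using hx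
        · have e1 := hZp v w i h hi
          have e2 := hZpr v w (i - 1) h (by omega)
          rw [Nat.sub_add_cancel hi0] at e2
          rcases hbend v w i h hi0 hi with hr | hr
          · rw [hr]; simp [e1, e2, CharTwo.add_self_eq_zero]
          · rw [hr]; simp [e1, e2, CharTwo.add_self_eq_zero]
      · have : rot p = [] := by
          rw [List.eq_nil_iff_forall_not_mem]
          intro q hq
          exact hp ⟨q, (hrm _ _).1 hq⟩
        simp [this]
    obtain ⟨C, hC1, hC2⟩ := hrZ Zp hZpsymm hZpeven
    have hconst : ∀ v w i, G.Adj v w → i < D.N v w →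
        C (D.arc v w i) (D.arc v w (i + 1)) = C (D.pos v) (D.arc v w 1) := by
      intro v w i h hi
      induction i with
      | zero => rw [arc_zero h]
      | succ i ih =>
        rw [← ih (by omega)]
        obtain ⟨a, ha⟩ := hC2 (D.arc v w (i + 1))
        have hb := hbend v w (i + 1) h (by omega) hi
        rw [Nat.add_sub_cancel] at hb
        rcases hb with hr | hr
        · rw [hr] at ha; exact ha.2.1
        · rw [hr] at ha
          exact ha.1.trans ha.2.2.symm
    have hrev : ∀ v w, G.Adj v w →
        C (D.arc v w 1) (D.pos v) = C (D.pos w) (D.arc w v 1) := by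
      intro v w h
      have hN := N_pos (D := D) v w
      rw [← hconst w v (D.N v w - 1) h.symm (by rw [N_comm w v]; omega),
        arc_symm h (by omega), arc_symm h (by omega)]
      have e1 : D.N v w - (D.N v w - 1) = 1 := by omega
      have e2 : D.N v w - (D.N v w - 1 + 1) = 0 := by omega
      rw [e1, e2, arc_zero h]
    refine ⟨fun v w => C (D.pos v) (D.arc v w 1), fun v w h => ⟨?_, ?_⟩⟩
    · have h1 := hZp v w 0 h (N_pos _ _)
      simp only
      rw [← hrev v w h, ← h1, arc_zero h]
      exact hC1 _ _ ((segRel_pos hD _).2 ⟨w, h, rfl⟩)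
    · obtain ⟨a, ha⟩ := hC2 (D.pos v)
      rw [hlr] at ha
      exact CS.formPerm (C := fun v w => C (D.pos v) (D.arc v w 1)) (hlnd v)
        (CS.of_map ha (fun w hw => ⟨rfl, hrev v w ((hlm v w).1 hw)⟩)) w ((hlm v w).2 h)

end PolyDrawing

lemma GraphPlanar.cert {V : Type*} [Fintype V] {G : SimpleGraph V} (h : GraphPlanar G) :
    Cert G := by
  obtain ⟨D, hD⟩ := h
  exact D.exists_cert hD

lemma GraphPlanar.induce {V : Type*} {G : SimpleGraph V} (h : GraphPlanar G) (S : Set V) :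
    GraphPlanar (G.induce S) := by
  obtain ⟨D, h1, h2, h3⟩ := h
  have hmap : ∀ e : Sym2 S, e ∈ (G.induce S).edgeSet → e.map Subtype.val ∈ G.edgeSet := by
    intro e
    induction e using Sym2.ind with
    | _ x y => intro h; exact h
  refine ⟨⟨fun v => D.pos v, D.inj.comp Subtype.val_injective,
    fun e => D.poly (e.map Subtype.val), fun u v h => D.ends u v h,
    fun e he => D.proper _ (hmap e he)⟩, fun e he => h1 _ (hmap e he), ?_, ?_⟩
  · intro u v h
    have := h2 u v h
    refine Set.Subset.antisymm ?_ ?_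
    · rintro z ⟨hz, w, rfl⟩
      rw [← this]
      exact ⟨hz, w, rfl⟩
    · intro z hz
      have h' := hz
      rw [← this] at h'
      refine ⟨h'.1, ?_⟩
      rcases hz with rfl | rfl
      · exact ⟨u, rfl⟩
      · exact ⟨v, rfl⟩
  · intro e he e' he' hne z hz
    obtain ⟨w, ⟨hw, hw'⟩, rfl⟩ := h3 _ (hmap e he) _ (hmap e' he')
      (fun h => hne (Sym2.map.injective Subtype.val_injective h)) hz
    obtain ⟨x, hx, rfl⟩ := Sym2.mem_map.1 hw
    obtain ⟨y, hy, hxy⟩ := Sym2.mem_map.1 hw'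
    obtain rfl := Subtype.ext hxy
    exact ⟨y, ⟨hx, hy⟩, rfl⟩

/-! ### Euler's inequality -/

section Euler

variable {V : Type*} (G : SimpleGraph V) (h : V → ℕ)

/-- The edges of `G`, directed upwards with respect to the heights `h`. -/
abbrev UpEdge := {p : V × V // G.Adj p.1 p.2 ∧ h p.1 < h p.2}

open Classical in
/-- A function on edges, viewed as a symmetric function on pairs of vertices. -/
noncomputable def symFun (x : UpEdge G h → ZMod 2) (v w : V) : ZMod 2 :=
  (if H : G.Adj v w ∧ h v < h w then x ⟨(v, w), H⟩ else 0) +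
    (if H : G.Adj w v ∧ h w < h v then x ⟨(w, v), H⟩ else 0)

variable {G h}

lemma symFun_comm (x : UpEdge G h → ZMod 2) (v w : V) : symFun G h x v w = symFun G h x w v :=
  add_comm _ _

lemma symFun_of_not_adj (x : UpEdge G h → ZMod 2) (v w : V) (hvw : ¬ G.Adj v w) :
    symFun G h x v w = 0 := by
  have : ¬ G.Adj w v := fun H => hvw H.symm
  simp [symFun, hvw, this]

lemma symFun_self (x : UpEdge G h → ZMod 2) (v : V) : symFun G h x v v = 0 :=
  symFun_of_not_adj x v v (G.irrefl)

lemma symFun_edge (x : UpEdge G h → ZMod 2) (e : UpEdge G h) :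
    symFun G h x e.1.1 e.1.2 = x e := by
  have h1 := e.2
  have h2 : ¬ h e.1.2 < h e.1.1 := by omega
  simp [symFun, h1, h2]

variable [Fintype V]

variable (G h) in
/-- The boundary map: the sum of a function over the edges at a vertex. -/
noncomputable def bdry : (UpEdge G h → ZMod 2) →ₗ[ZMod 2] (V → ZMod 2) where
  toFun x v := ∑ w, symFun G h x v w
  map_add' x y := by
    funext v
    simp only [Pi.add_apply, ← Finset.sum_add_distrib]
    refine Finset.sum_congr rfl fun w _ => ?_
    unfold symFun
    split_ifs <;> simp [add_add_add_comm]
  map_smul' a x := by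
    funext v
    simp only [Pi.smul_apply, RingHom.id_apply, Finset.smul_sum]
    refine Finset.sum_congr rfl fun w _ => ?_
    unfold symFun
    split_ifs <;> simp [mul_add]

lemma bdry_sum (x : UpEdge G h → ZMod 2) : ∑ v, bdry G h x v = 0 := by
  simp only [bdry, LinearMap.coe_mk, AddHom.coe_mk]
  rw [← Finset.sum_product' (f := fun v w => symFun G h x v w)]
  refine Finset.sum_involution (fun p _ => p.swap) ?_ ?_ ?_ ?_
  · intro p _
    simp only [Prod.fst_swap, Prod.snd_swap]
    rw [symFun_comm, CharTwo.add_self_eq_zero]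
  · intro p _ hp hs
    have : p.2 = p.1 := congrArg Prod.fst hs
    rw [this, symFun_self] at hp
    exact hp rfl
  · intro p _; simp
  · intro p _; simp

/-- If every even set of edges separates the faces of a rotation system, then there are at least
`m - n + 2` faces. Here `fl` and `fr` are the faces to the left and right of an edge. The cycle
space, of dimension at least `m - n + 1`, is contained in the image of the space of functions on
faces, where constants are mapped to `0`. -/
lemma euler [Nonempty V] {F : Type*} [Fintype F] [Nonempty F] (fl fr : UpEdge G h → F)
    (hZ : ∀ x : UpEdge G h → ZMod 2, bdry G h x = 0 → ∃ g : F → ZMod 2,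
      ∀ e, g (fl e) + g (fr e) = x e) :
    Nat.card (UpEdge G h) + 2 ≤ Fintype.card V + Fintype.card F := by
  classical
  let Ψ : (F → ZMod 2) →ₗ[ZMod 2] (UpEdge G h → ZMod 2) :=
    { toFun := fun g e => g (fl e) + g (fr e)
      map_add' := by intro x y; funext e; simp [add_add_add_comm]
      map_smul' := by intro a x; funext e; simp [mul_add] }
  have h1 := LinearMap.finrank_range_add_finrank_ker (bdry G h)
  have h2 := LinearMap.finrank_range_add_finrank_ker Ψ
  rw [Module.finrank_fintype_fun_eq_card] at h1 h2
  have h3 : Module.finrank (ZMod 2) (LinearMap.range (bdry G h)) < Fintype.card V := by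
    rw [← Module.finrank_fintype_fun_eq_card (ZMod 2) (η := V)]
    refine Submodule.finrank_lt ?_
    intro htop
    obtain ⟨v⟩ := ‹Nonempty V›
    have hm : (Pi.single v 1 : V → ZMod 2) ∈ LinearMap.range (bdry G h) := by
      rw [htop]; exact Submodule.mem_top
    obtain ⟨x, hx⟩ := hm
    have := bdry_sum x
    rw [hx, Finset.sum_pi_single'] at this
    simp at this
  have h4 : 0 < Module.finrank (ZMod 2) (LinearMap.ker Ψ) := by
    have hm : (fun _ => 1 : F → ZMod 2) ∈ LinearMap.ker Ψ := by
      rw [LinearMap.mem_ker]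
      funext e
      exact CharTwo.add_self_eq_zero _
    rw [Module.finrank_pos_iff_exists_ne_zero]
    refine ⟨⟨_, hm⟩, ?_⟩
    intro h0
    have h0' := congrArg Subtype.val h0
    obtain ⟨f⟩ := ‹Nonempty F›
    have := congrFun h0' f
    simp at this
  have h5 : Module.finrank (ZMod 2) (LinearMap.ker (bdry G h)) ≤
      Module.finrank (ZMod 2) (LinearMap.range Ψ) := by
    apply Submodule.finrank_mono
    intro x hx
    obtain ⟨g, hg⟩ := hZ x (LinearMap.mem_ker.1 hx)
    exact ⟨g, funext hg⟩
  rw [Nat.card_eq_fintype_card]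
  omega

end Euler

/-! ### Bipolar orientations of planar rotation systems -/

/-- Injective heights under which `s` and `t` are the lowest and the highest vertex and every other
vertex has a lower and a higher neighbour. -/
structure Bipolar {V : Type*} (G : SimpleGraph V) (h : V → ℕ) (s t : V) : Prop where
  inj : Function.Injective h
  adj : G.Adj s t
  bot : ∀ v, v ≠ s → h s < h v
  top : ∀ v, v ≠ t → h v < h t
  low : ∀ v, v ≠ s → v ≠ t → ∃ u, G.Adj v u ∧ h u < h v
  high : ∀ v, v ≠ s → v ≠ t → ∃ u, G.Adj v u ∧ h v < h u

section Faces

variable {V : Type*}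

/-- The face permutation of a rotation system, on directed edges: it turns left at the end of a
directed edge. -/
def phi (σ : V → Equiv.Perm V) : Equiv.Perm (V × V) where
  toFun p := (p.2, σ p.2 p.1)
  invFun q := ((σ q.1).symm q.2, q.1)
  left_inv p := by simp
  right_inv q := by simp

/-- The face to the left of a directed edge. -/
def fc (σ : V → Equiv.Perm V) (p : V × V) : Quotient (Equiv.Perm.SameCycle.setoid (phi σ)) :=
  Quotient.mk _ p

variable {σ : V → Equiv.Perm V} {G : SimpleGraph V} {h : V → ℕ} {s t : V}

lemma fc_eq_iff {p q : V × V} : fc σ p = fc σ q ↔ (phi σ).SameCycle p q := Quotient.eq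

lemma fc_pow (p : V × V) (j : ℕ) : fc σ ((phi σ ^ j) p) = fc σ p :=
  (fc_eq_iff.2 ((Equiv.Perm.SameCycle.refl _ p).pow_right (n := j))).symm

lemma fc_next (v w : V) : fc σ (v, σ v w) = fc σ (w, v) := fc_pow (σ := σ) (w, v) 1

lemma adj_next (hσ : ∀ v, (σ v).IsCycleOn (G.neighborSet v))
    {v w : V} : G.Adj v (σ v w) ↔ G.Adj v w := (hσ v).apply_mem_iff

lemma adj_phi (hσ : ∀ v, (σ v).IsCycleOn (G.neighborSet v))
    {p : V × V} (hp : G.Adj p.1 p.2) (j : ℕ) :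
    G.Adj ((phi σ ^ j) p).1 ((phi σ ^ j) p).2 := by
  induction j with
  | zero => simpa using hp
  | succ j ih =>
    rw [pow_succ', Equiv.Perm.mul_apply]
    exact (adj_next hσ).2 ih.symm

lemma exists_up (hσ : ∀ v, (σ v).IsCycleOn (G.neighborSet v))
    (hinj : Function.Injective h) : ∀ (N : ℕ) (p : V × V), h p.1 < N → G.Adj p.1 p.2 →
    ∃ j, h ((phi σ ^ j) p).1 < h ((phi σ ^ j) p).2
  | 0, p, hN, hp => by omega
  | N + 1, p, hN, hp => by
    rcases lt_or_gt_of_ne (fun H => hp.ne (hinj H)) with h1 | h1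
    · exact ⟨0, h1⟩
    · obtain ⟨j, hj⟩ := exists_up hσ hinj N (phi σ p) (by change h p.2 < N; omega)
        (adj_phi hσ hp 1)
      exact ⟨j + 1, by rwa [pow_succ, Equiv.Perm.mul_apply]⟩

variable (σ G h) in
/-- Directed edges going up whose successor along the face goes down. -/
def TopDart (p : V × V) : Prop := G.Adj p.1 p.2 ∧ h p.1 < h p.2 ∧ h (σ p.2 p.1) < h p.2

/-- From a directed edge going up, the face goes up until it reaches a top. -/
lemma up_run (hσ : ∀ v, (σ v).IsCycleOn (G.neighborSet v))
    (hinj : Function.Injective h) (M : ℕ) (hM : ∀ v, h v ≤ M) : ∀ (N : ℕ) (p : V × V),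
    M ≤ h p.1 + N → G.Adj p.1 p.2 → h p.1 < h p.2 →
    ∃ j, TopDart σ G h ((phi σ ^ j) p) ∧ ∀ i ≤ j, h ((phi σ ^ i) p).1 < h ((phi σ ^ i) p).2
  | 0, p, hN, hp, hu => by have := hM p.2; omega
  | N + 1, p, hN, hp, hu => by
    have ha : G.Adj (phi σ p).1 (phi σ p).2 := adj_phi hσ hp 1
    rcases lt_or_gt_of_ne (fun H => ha.ne (hinj H)) with h1 | h1
    · obtain ⟨j, hj, hj'⟩ := up_run hσ hinj M hM N (phi σ p) (by change M ≤ h p.2 + N; omega) ha h1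
      refine ⟨j + 1, by rwa [pow_succ, Equiv.Perm.mul_apply], ?_⟩
      intro i hi
      rcases i with _ | i
      · exact hu
      · rw [pow_succ, Equiv.Perm.mul_apply]
        exact hj' i (by omega)
    · refine ⟨0, ⟨hp, hu, h1⟩, ?_⟩
      intro i hi
      obtain rfl : i = 0 := by omega
      exact hu

lemma exists_top (hσ : ∀ v, (σ v).IsCycleOn (G.neighborSet v))
    [Finite V] (hinj : Function.Injective h) {p : V × V} (hp : G.Adj p.1 p.2) :
    ∃ q, TopDart σ G h q ∧ fc σ q = fc σ p := by
  obtain ⟨M, hM⟩ := (Set.finite_range h).bddAbove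
  have hM' : ∀ v, h v ≤ M := fun v => hM ⟨v, rfl⟩
  obtain ⟨i, hi⟩ := exists_up hσ hinj _ p (Nat.lt_succ_self _) hp
  obtain ⟨j, hj, -⟩ := up_run hσ hinj M hM' M _ (by omega) (adj_phi hσ hp i) hi
  exact ⟨_, hj, by rw [fc_pow, fc_pow]⟩

/-- If tops are unique in every face, then a face contains at most one directed edge crossing a
given level upwards. -/
lemma crossing_unique (hσ : ∀ v, (σ v).IsCycleOn (G.neighborSet v))
    [Finite V] (hinj : Function.Injective h)
    (hT : ∀ p q, TopDart σ G h p → TopDart σ G h q → fc σ p = fc σ q → p = q) {k : ℕ}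
    {p q : V × V} (hp : G.Adj p.1 p.2) (hq : G.Adj q.1 q.2) (hp1 : h p.1 ≤ k) (hp2 : k < h p.2)
    (hq1 : h q.1 ≤ k) (hq2 : k < h q.2) (hpq : fc σ p = fc σ q) : p = q := by
  obtain ⟨M, hM⟩ := (Set.finite_range h).bddAbove
  have hM' : ∀ v, h v ≤ M := fun v => hM ⟨v, rfl⟩
  obtain ⟨i, hi, hi'⟩ := up_run hσ hinj M hM' M p (by omega) hp (by omega)
  obtain ⟨j, hj, hj'⟩ := up_run hσ hinj M hM' M q (by omega) hq (by omega)
  have he := hT _ _ hi hj (by rw [fc_pow, fc_pow, hpq])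
  wlog hij : i ≤ j generalizing p q i j
  · exact (this hq hp hq1 hq2 hp1 hp2 hpq.symm j hj hj' i hi hi' he.symm (by omega)).symm
  obtain ⟨r, rfl⟩ := Nat.exists_eq_add_of_le hij
  rw [pow_add, Equiv.Perm.mul_apply] at he
  have he' : p = (phi σ ^ r) q := (phi σ ^ i).injective he
  rcases r with _ | r
  · exact he'
  · exfalso
    have hmono : ∀ l, l ≤ r → k < h ((phi σ ^ l) q).2 := by
      intro l
      induction l with
      | zero => intro _; exact hq2
      | succ l ih =>
        intro hl
        have h1 := ih (by omega)
        have h2 := hj' (l + 1) (by omega)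
        rw [pow_succ', Equiv.Perm.mul_apply] at h2 ⊢
        exact h1.trans h2
    have h1 := hmono r le_rfl
    have h2 : p.1 = ((phi σ ^ r) q).2 := by
      rw [he', pow_succ', Equiv.Perm.mul_apply]; rfl
    rw [h2] at hp1
    omega

variable (σ G h) in
/-- Directed edges going up whose successor in the rotation goes down. -/
def TurnDart (p : V × V) : Prop := G.Adj p.1 p.2 ∧ h p.1 < h p.2 ∧ h (σ p.1 p.2) < h p.1

lemma exists_turn (hσ : ∀ v, (σ v).IsCycleOn (G.neighborSet v))
    [Finite V] (hinj : Function.Injective h) {v u w : V} (hu : G.Adj v u)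
    (hu' : h u < h v) (hw : G.Adj v w) (hw' : h v < h w) : ∃ x, TurnDart σ G h (v, x) := by
  by_contra hcon
  push Not at hcon
  obtain ⟨j, hj⟩ := ((hσ v).2 hw hu).exists_nat_pow_eq
  have key : ∀ i, G.Adj v ((σ v ^ i) w) ∧ h v < h ((σ v ^ i) w) := by
    intro i
    induction i with
    | zero => exact ⟨hw, hw'⟩
    | succ i ih =>
      rw [pow_succ', Equiv.Perm.mul_apply]
      have ha := (adj_next hσ).2 ih.1
      refine ⟨ha, ?_⟩
      rcases lt_or_gt_of_ne (fun H => ha.ne (hinj H)) with h1 | h1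
      · exact h1
      · exact absurd ⟨ih.1, ih.2, h1⟩ (hcon _)
  have := (key j).2
  rw [hj] at this
  omega

open Classical in
/-- Tops and turns together are as many as the edges: both kinds correspond to directed edges whose
successor in the rotation goes down. -/
lemma card_top_add_card_turn (hσ : ∀ v, (σ v).IsCycleOn (G.neighborSet v))
    [Fintype V] (hinj : Function.Injective h) :
    (Finset.univ.filter (TopDart σ G h)).card + (Finset.univ.filter (TurnDart σ G h)).card =
      Nat.card (UpEdge G h) := by
  have hE : Nat.card (UpEdge G h) =
      (Finset.univ.filter (fun p : V × V => G.Adj p.1 p.2 ∧ h p.2 < h p.1)).card := by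
    rw [Nat.card_eq_fintype_card, Fintype.card_subtype]
    refine Finset.card_bij (fun p _ => p.swap) ?_ ?_ ?_
    · intro p hp
      simp only [Finset.mem_filter, Finset.mem_univ, true_and] at hp ⊢
      exact ⟨hp.1.symm, hp.2⟩
    · intro p _ q _ hpq; exact Prod.swap_injective hpq
    · intro p hp
      simp only [Finset.mem_filter, Finset.mem_univ, true_and] at hp
      exact ⟨p.swap, by simpa using ⟨hp.1.symm, hp.2⟩, by simp⟩
  have hD : (Finset.univ.filter (fun p : V × V => G.Adj p.1 p.2 ∧ h p.2 < h p.1)).card =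
      (Finset.univ.filter (fun p : V × V => G.Adj p.1 p.2 ∧ h (σ p.1 p.2) < h p.1)).card := by
    symm
    refine Finset.card_bij (fun p _ => (p.1, σ p.1 p.2)) ?_ ?_ ?_
    · intro p hp
      simp only [Finset.mem_filter, Finset.mem_univ, true_and] at hp ⊢
      exact ⟨(adj_next hσ).2 hp.1, hp.2⟩
    · rintro ⟨a, b⟩ _ ⟨c, d⟩ _ hpq
      simp only [Prod.mk.injEq] at hpq
      obtain ⟨rfl, h2⟩ := hpq
      rw [(σ a).injective h2]
    · rintro ⟨a, b⟩ hp
      simp only [Finset.mem_filter, Finset.mem_univ, true_and] at hp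
      refine ⟨(a, (σ a).symm b), ?_, by simp⟩
      simp only [Finset.mem_filter, Finset.mem_univ, true_and, Equiv.apply_symm_apply]
      refine ⟨?_, hp.2⟩
      rw [← adj_next hσ]; simpa using hp.1
  have hT : (Finset.univ.filter (TopDart σ G h)).card =
      (Finset.univ.filter (fun p : V × V => (G.Adj p.1 p.2 ∧ h p.2 < h p.1) ∧
        h (σ p.1 p.2) < h p.1)).card := by
    refine Finset.card_bij (fun p _ => p.swap) ?_ ?_ ?_
    · intro p hp
      simp only [Finset.mem_filter, Finset.mem_univ, true_and] at hp ⊢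
      exact ⟨⟨hp.1.symm, hp.2.1⟩, hp.2.2⟩
    · intro p _ q _ hpq; exact Prod.swap_injective hpq
    · intro p hp
      simp only [Finset.mem_filter, Finset.mem_univ, true_and] at hp
      exact ⟨p.swap, by
        simp only [Finset.mem_filter, Finset.mem_univ, true_and]
        exact ⟨hp.1.1.symm, hp.1.2, hp.2⟩, by simp⟩
  rw [hE, hD, hT, ← Finset.card_union_of_disjoint]
  · congr 1
    ext p
    simp only [Finset.mem_union, Finset.mem_filter, Finset.mem_univ, true_and, TurnDart]
    constructor
    · rintro (h1 | h1)
      · exact ⟨h1.1.1, h1.2⟩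
      · exact ⟨h1.1, h1.2.2⟩
    · rintro ⟨h1, h2⟩
      rcases lt_or_gt_of_ne (fun H => h1.ne (hinj H)) with h3 | h3
      · exact Or.inr ⟨h1, h3, h2⟩
      · exact Or.inl ⟨⟨h1, h3⟩, h2⟩
  · rw [Finset.disjoint_left]
    intro p hp hp'
    simp only [Finset.mem_filter, Finset.mem_univ, true_and] at hp hp'
    have := hp'.2.1
    omega

open Classical in
/-- In a planar rotation system with bipolar heights, every face has a single top, and the edges
entering a vertex are consecutive in its rotation. -/
theorem bipolar_unique (hσ : ∀ v, (σ v).IsCycleOn (G.neighborSet v))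
    [Fintype V] (hb : Bipolar G h s t)
    (hZ : ∀ Z : V → V → ZMod 2, (∀ v w, Z v w = Z w v) → (∀ v w, ¬ G.Adj v w → Z v w = 0) →
      (∀ v, ∑ w, Z v w = 0) → ∃ c : V → V → ZMod 2, ∀ v w, G.Adj v w →
        c v w + c w v = Z v w ∧ c v (σ v w) = c w v) :
    (∀ p q, TopDart σ G h p → TopDart σ G h q → fc σ p = fc σ q → p = q) ∧
    (∀ p q, TurnDart σ G h p → TurnDart σ G h q → p.1 = q.1 → p = q) ∧
    Nat.card (UpEdge G h) + 2 = Fintype.card V +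
      ((Finset.univ.filter (TopDart σ G h)).image (fc σ)).card := by
  set T := Finset.univ.filter (TopDart σ G h) with hTdef
  set R := Finset.univ.filter (TurnDart σ G h) with hRdef
  have hmem : ∀ p : V × V, G.Adj p.1 p.2 → fc σ p ∈ T.image (fc σ) := by
    intro p hp
    obtain ⟨q, hq, hqp⟩ := exists_top hσ hb.inj hp
    exact Finset.mem_image.2 ⟨q, by simpa [hTdef] using hq, hqp⟩
  have hst : s ≠ t := hb.adj.ne
  have : Nonempty V := ⟨s⟩
  have : Nonempty (T.image (fc σ)) := ⟨⟨_, hmem (s, t) hb.adj⟩⟩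
  have heuler := euler (G := G) (h := h) (F := T.image (fc σ))
    (fun e => ⟨fc σ e.1, hmem _ e.2.1⟩) (fun e => ⟨fc σ e.1.swap, hmem _ e.2.1.symm⟩) (by
      intro x hx
      obtain ⟨c, hc⟩ := hZ (symFun G h x) (symFun_comm x) (symFun_of_not_adj x)
        (fun v => congrFun hx v)
      have hconst : ∀ p q : V × V, G.Adj p.1 p.2 → fc σ p = fc σ q → c p.1 p.2 = c q.1 q.2 := by
        intro p q hp hpq
        obtain ⟨j, rfl⟩ := (fc_eq_iff.1 hpq).exists_nat_pow_eq
        clear hpq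
        induction j with
        | zero => rfl
        | succ j ih =>
          rw [ih, pow_succ', Equiv.Perm.mul_apply]
          exact ((hc _ _ (adj_phi hσ hp j).symm).2).symm
      have hch : ∀ q : T.image (fc σ), ∃ p : V × V, G.Adj p.1 p.2 ∧ fc σ p = q.1 := by
        rintro ⟨q, hq⟩
        obtain ⟨p, hp, rfl⟩ := Finset.mem_image.1 hq
        exact ⟨p, (Finset.mem_filter.1 hp).2.1, rfl⟩
      choose rep hrep using hch
      refine ⟨fun q => c (rep q).1 (rep q).2, ?_⟩
      intro e
      beta_reduce
      rw [hconst _ e.1 (hrep _).1 (hrep _).2, hconst _ e.1.swap (hrep _).1 (hrep _).2]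
      exact ((hc _ _ e.2.1).1).trans (symFun_edge x e))
  rw [Fintype.card_coe] at heuler
  have hcard := card_top_add_card_turn hσ hb.inj
  rw [← hTdef, ← hRdef] at hcard
  have hR : (R.image Prod.fst).card + 2 = Fintype.card V := by
    have : R.image Prod.fst = Finset.univ \ {s, t} := by
      ext v
      simp only [Finset.mem_image, hRdef, Finset.mem_filter, Finset.mem_univ, true_and,
        Finset.mem_sdiff, Finset.mem_insert, Finset.mem_singleton, not_or]
      constructor
      · rintro ⟨p, hp, rfl⟩
        constructor
        · intro h1
          have h2 := hp.2.2
          rw [h1] at h2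
          have h3 : σ s p.2 ≠ s := by intro H; rw [H] at h2; omega
          have := hb.bot _ h3
          omega
        · intro h1
          have h2 := hp.2.1
          rw [h1] at h2
          have h3 : p.2 ≠ t := by intro H; rw [H] at h2; omega
          have := hb.top _ h3
          omega
      · rintro ⟨h1, h2⟩
        obtain ⟨u, hu, hu'⟩ := hb.low v h1 h2
        obtain ⟨w, hw, hw'⟩ := hb.high v h1 h2
        obtain ⟨x, hx⟩ := exists_turn hσ hb.inj hu hu' hw hw'
        exact ⟨_, hx, rfl⟩
    rw [this, Finset.card_sdiff_of_subset (Finset.subset_univ _), Finset.card_pair hst,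
      Finset.card_univ]
    have : 2 ≤ Fintype.card V := by
      rw [← Finset.card_pair hst]; exact Finset.card_le_univ _
    omega
  have hR' := Finset.card_image_le (s := R) (f := Prod.fst)
  have hT' := Finset.card_image_le (s := T) (f := fc σ)
  refine ⟨?_, ?_, by omega⟩
  · have := Finset.card_image_iff.1 (by omega : (T.image (fc σ)).card = T.card)
    intro p q hp hq hpq
    exact this (by simpa [hTdef] using hp) (by simpa [hTdef] using hq) hpq
  · have := Finset.card_image_iff.1 (by omega : (R.image Prod.fst).card = R.card)
    intro p q hp hq hpq
    exact this (by simpa [hRdef] using hp) (by simpa [hRdef] using hq) hpq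

open Classical in
/-- The edge bound for planar graphs with bipolar heights and minimum degree at least two: every
face has at least three edges. -/
theorem edge_bound [Fintype V] (hc : Cert G) (hb : Bipolar G h s t)
    (hdeg : ∀ v, (G.neighborSet v).Nontrivial) :
    ∑ v, (G.neighborSet v).ncard + 12 ≤ 6 * Fintype.card V := by
  have hS : ∑ v, (G.neighborSet v).ncard =
      (Finset.univ.filter (fun p : V × V => G.Adj p.1 p.2)).card := by
    rw [Finset.card_filter, Fintype.sum_prod_type]
    refine Finset.sum_congr rfl fun v _ => ?_
    rw [← Finset.card_filter, ← Set.ncard_coe_finset]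
    congr 1
    ext w
    simp
  obtain ⟨σ, hσ, hZ⟩ := hc
  obtain ⟨-, -, h1⟩ := bipolar_unique hσ hb hZ
  have hE : (Finset.univ.filter (fun p : V × V => G.Adj p.1 p.2)).card =
      2 * Nat.card (UpEdge G h) := by
    have e1 : Nat.card (UpEdge G h) =
      (Finset.univ.filter (fun p : V × V => G.Adj p.1 p.2 ∧ h p.1 < h p.2)).card := by
      rw [Nat.card_eq_fintype_card, Fintype.card_subtype]
    have e2 : (Finset.univ.filter (fun p : V × V => G.Adj p.1 p.2 ∧ h p.1 < h p.2)).card =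
      (Finset.univ.filter (fun p : V × V => G.Adj p.1 p.2 ∧ ¬ h p.1 < h p.2)).card := by
      refine Finset.card_bij (fun p _ => p.swap) ?_ ?_ ?_
      · intro p hp
        simp only [Finset.mem_filter, Finset.mem_univ, true_and] at hp ⊢
        exact ⟨hp.1.symm, by simp only [Prod.fst_swap, Prod.snd_swap]; omega⟩
      · intro p _ q _ hpq; exact Prod.swap_injective hpq
      · intro p hp
        simp only [Finset.mem_filter, Finset.mem_univ, true_and] at hp
        have : h p.1 ≠ h p.2 := fun H => hp.1.ne (hb.inj H)
        refine ⟨p.swap, ?_, by simp⟩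
        simp only [Finset.mem_filter, Finset.mem_univ, true_and, Prod.fst_swap, Prod.snd_swap]
        exact ⟨hp.1.symm, by omega⟩
    have e3 := Finset.card_filter_add_card_filter_not
      (s := Finset.univ.filter (fun p : V × V => G.Adj p.1 p.2)) (fun p => h p.1 < h p.2)
    rw [Finset.filter_filter, Finset.filter_filter] at e3
    omega
  have h3 := Finset.mul_card_image_le_card_of_maps_to (f := fc σ)
    (s := Finset.univ.filter (fun p : V × V => G.Adj p.1 p.2))
    (t := (Finset.univ.filter (TopDart σ G h)).image (fc σ)) (by
      intro p hp
      simp only [Finset.mem_filter, Finset.mem_univ, true_and] at hp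
      obtain ⟨q, hq, hqp⟩ := exists_top hσ hb.inj hp
      exact Finset.mem_image.2 ⟨q, by simpa using hq, hqp⟩) 3 (by
      intro q hq
      obtain ⟨p, hp, rfl⟩ := Finset.mem_image.1 hq
      have hp' : G.Adj p.1 p.2 := (Finset.mem_filter.1 hp).2.1
      obtain ⟨v, w⟩ := p
      have a1 : G.Adj w (σ w v) := (adj_next hσ).2 hp'.symm
      have n1 : σ w v ≠ v := (hσ w).apply_ne (hdeg w) hp'.symm
      have hsub : ({(v, w), phi σ (v, w), (phi σ ^ 2) (v, w)} : Finset (V × V)) ⊆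
          (Finset.univ.filter (fun p : V × V => G.Adj p.1 p.2)).filter
            (fun p => fc σ p = fc σ (v, w)) := by
        intro x hx
        simp only [Finset.mem_insert, Finset.mem_singleton] at hx
        simp only [Finset.mem_filter, Finset.mem_univ, true_and]
        rcases hx with rfl | rfl | rfl
        · exact ⟨hp', rfl⟩
        · exact ⟨adj_phi hσ hp' 1, fc_pow _ 1⟩
        · exact ⟨adj_phi hσ hp' 2, fc_pow _ 2⟩
      refine le_trans (le_of_eq ?_) (Finset.card_le_card hsub)
      symm
      have e1 : ((phi σ (v, w)).1 : V) = w := rfl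
      have e2 : (((phi σ ^ 2) (v, w)).1 : V) = σ w v := rfl
      have hvw : v ≠ w := hp'.ne
      rw [Finset.card_eq_three]
      refine ⟨_, _, _, ?_, ?_, ?_, rfl⟩
      · intro H; exact hvw (by rw [← e1, ← H])
      · intro H; exact n1 (by rw [← e2, ← H])
      · intro H; exact a1.ne (congrArg Prod.fst H))
  omega

end Faces

/-! ### From bipolar heights to a sweep -/

section Sweep

variable {V : Type*} {σ : V → Equiv.Perm V} {G : SimpleGraph V} {h : V → ℕ} {s t : V}

variable (σ) in
/-- `FC σ a b L`: crossing the directed edges of `L` one after the other from left to right leads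
from the face `a` to the face `b`. -/
def FC (a b : Quotient (Equiv.Perm.SameCycle.setoid (phi σ))) : List (V × V) → Prop
  | [] => a = b
  | d :: L => fc σ d = a ∧ FC (fc σ d.swap) b L

lemma FC_append {a b : Quotient (Equiv.Perm.SameCycle.setoid (phi σ))} {L M : List (V × V)} :
    FC σ a b (L ++ M) ↔ ∃ c, FC σ a c L ∧ FC σ c b M := by
  induction L generalizing a with
  | nil => simp [FC]
  | cons d L ih =>
    simp only [List.cons_append, FC, ih]
    tauto

lemma FC_reverse {a b : Quotient (Equiv.Perm.SameCycle.setoid (phi σ))} {L : List (V × V)}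
    (hL : FC σ a b L) : FC σ b a (L.map Prod.swap).reverse := by
  induction L generalizing a with
  | nil => exact hL.symm
  | cons d L ih =>
    simp only [List.map_cons, List.reverse_cons]
    exact FC_append.2 ⟨_, ih hL.2, rfl, hL.1⟩

lemma FC_range (v y : V) (n : ℕ) : FC σ (fc σ (v, y)) (fc σ (v, (σ v ^ n) y))
    ((List.range n).map (fun i => (v, (σ v ^ i) y))) := by
  induction n with
  | zero => rfl
  | succ n ih =>
    rw [List.range_succ, List.map_append]
    refine FC_append.2 ⟨_, ih, rfl, ?_⟩
    rw [pow_succ', Equiv.Perm.mul_apply, fc_next]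
    rfl

/-- The neighbours of `v` in rotation order, starting from `y`. -/
lemma exists_rotation (hσ : ∀ v, (σ v).IsCycleOn (G.neighborSet v))
    [Finite V] {v y : V} (hy : G.Adj v y) : ∃ n : ℕ, 0 < n ∧
    (∀ i j, i < n → j < n → (σ v ^ i) y = (σ v ^ j) y → i = j) ∧
    (∀ w, G.Adj v w ↔ ∃ i < n, (σ v ^ i) y = w) ∧ (σ v ^ n) y = y := by
  classical
  have := Fintype.ofFinite V
  have hc : (σ v).IsCycleOn (G.neighborFinset v : Set V) := by
    rw [SimpleGraph.coe_neighborFinset]; exact hσ v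
  have hy' : y ∈ G.neighborFinset v := by simpa using hy
  refine ⟨(G.neighborFinset v).card, Finset.card_pos.2 ⟨y, hy'⟩, ?_, ?_, hc.pow_card_apply hy'⟩
  · intro i j hi hj hij
    exact Nat.ModEq.eq_of_lt_of_lt ((hc.pow_apply_eq_pow_apply hy').1 hij) hi hj
  · intro w
    constructor
    · intro hw
      exact hc.exists_pow_eq hy' (by simpa using hw)
    · rintro ⟨i, hi, rfl⟩
      have := (hc.1.iterate i).mapsTo hy'
      rw [← Equiv.Perm.coe_pow] at this
      simpa using this

lemma exists_split {α : Type*} {P : α → Prop} {l : List α} (hl : l.Pairwise (fun a b => P a → P b)) :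
    ∃ D O, l = D ++ O ∧ (∀ a ∈ D, ¬ P a) ∧ ∀ a ∈ O, P a := by
  induction l with
  | nil => exact ⟨[], [], by simp⟩
  | cons a l ih =>
    rw [List.pairwise_cons] at hl
    by_cases ha : P a
    · refine ⟨[], a :: l, rfl, by simp, ?_⟩
      intro b hb
      rcases List.mem_cons.1 hb with rfl | hb
      · exact ha
      · exact hl.1 b hb ha
    · obtain ⟨D, O, rfl, hD, hO⟩ := ih hl.2
      refine ⟨a :: D, O, rfl, ?_, hO⟩
      intro b hb
      rcases List.mem_cons.1 hb with rfl | hb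
      · exact ha
      · exact hD b hb

/-- The rotation at an inner vertex consists of the edges going down followed by the edges
going up. -/
lemma exists_down_up (hσ : ∀ v, (σ v).IsCycleOn (G.neighborSet v))
    [Finite V] (hinj : Function.Injective h)
    (hR : ∀ p q, TurnDart σ G h p → TurnDart σ G h q → p.1 = q.1 → p = q) {v : V}
    (hlow : ∃ u, G.Adj v u ∧ h u < h v) (hhigh : ∃ u, G.Adj v u ∧ h v < h u) :
    ∃ D O : List V, (D ++ O).Nodup ∧ D ≠ [] ∧ (∀ w, w ∈ D ↔ G.Adj v w ∧ h w < h v) ∧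
      (∀ w, w ∈ O ↔ G.Adj v w ∧ h v < h w) ∧
      ∃ a b, FC σ b a (D.map (fun w => (v, w))) ∧ FC σ a b (O.map (fun w => (v, w))) := by
  obtain ⟨u, hu, hu'⟩ := hlow
  obtain ⟨w, hw, hw'⟩ := hhigh
  obtain ⟨x, hx⟩ := exists_turn hσ hinj hu hu' hw hw'
  have hy : G.Adj v (σ v x) := (adj_next hσ).2 hx.1
  obtain ⟨n, hn, hni, hmem, hpow⟩ := exists_rotation hσ hy
  set y := σ v x with hydef
  have hstep : ∀ i, i + 1 < n → h v < h ((σ v ^ i) y) → h v < h ((σ v ^ (i + 1)) y) := by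
    intro i hi hup
    by_contra hcon
    have hai := (hmem _).2 ⟨i, by omega, rfl⟩
    have hai' := (hmem _).2 ⟨i + 1, by omega, rfl⟩
    have hne : h v ≠ h ((σ v ^ (i + 1)) y) := fun H => hai'.ne (hinj H)
    have h1 : TurnDart σ G h (v, (σ v ^ i) y) := by
      refine ⟨hai, hup, ?_⟩
      change h (σ v ((σ v ^ i) y)) < h v
      rw [← Equiv.Perm.mul_apply, ← pow_succ']
      omega
    have h2 := congrArg Prod.snd (hR _ _ h1 hx rfl)
    simp only at h2
    have h3 : (σ v ^ (i + 1)) y = (σ v ^ 0) y := by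
      rw [pow_succ', Equiv.Perm.mul_apply, h2]; rfl
    have := hni _ _ hi hn h3
    omega
  have hmono : ∀ i j, i ≤ j → j < n → h v < h ((σ v ^ i) y) → h v < h ((σ v ^ j) y) := by
    intro i j hij
    induction j, hij using Nat.le_induction with
    | base => intro _ H; exact H
    | succ j hj ih => intro h1 h2; exact hstep j h1 (ih (by omega) h2)
  have hpw : ((List.range n).map (fun i => (σ v ^ i) y)).Pairwise
      (fun a b => h v < h a → h v < h b) := by
    rw [List.pairwise_map]
    refine List.Pairwise.imp_of_mem ?_ List.pairwise_lt_range
    intro i j hi hj hij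
    exact hmono i j hij.le (List.mem_range.1 hj)
  have hnd : ((List.range n).map (fun i => (σ v ^ i) y)).Nodup := by
    refine List.Nodup.map_on ?_ List.nodup_range
    intro i hi j hj hij
    exact hni i j (List.mem_range.1 hi) (List.mem_range.1 hj) hij
  have hml : ∀ w, w ∈ (List.range n).map (fun i => (σ v ^ i) y) ↔ G.Adj v w := by
    intro w
    rw [hmem]
    simp
  obtain ⟨D, O, hDO, hD, hO⟩ := exists_split hpw
  have hF := FC_range (σ := σ) v y n
  have e : (List.range n).map (fun i => (v, (σ v ^ i) y)) =
      ((List.range n).map (fun i => (σ v ^ i) y)).map (fun w => (v, w)) := by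
    rw [List.map_map]; rfl
  rw [hpow, e, hDO, List.map_append] at hF
  obtain ⟨a, hF1, hF2⟩ := FC_append.1 hF
  rw [hDO] at hnd hml
  have hmD : ∀ w, w ∈ D ↔ G.Adj v w ∧ h w < h v := by
    intro w
    constructor
    · intro hw
      have h1 := (hml w).1 (List.mem_append_left _ hw)
      have h2 := hD w hw
      have h3 : h v ≠ h w := fun H => h1.ne (hinj H)
      exact ⟨h1, by omega⟩
    · rintro ⟨h1, h2⟩
      rcases List.mem_append.1 ((hml w).2 h1) with h3 | h3
      · exact h3
      · have := hO w h3
        omega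
  refine ⟨D, O, hnd, ?_, hmD, ?_, a, _, hF1, hF2⟩
  · exact List.ne_nil_of_mem ((hmD u).2 ⟨hu, hu'⟩)
  · intro w
    constructor
    · intro hw
      exact ⟨(hml w).1 (List.mem_append_right _ hw), hO w hw⟩
    · rintro ⟨h1, h2⟩
      rcases List.mem_append.1 ((hml w).2 h1) with h3 | h3
      · have := (hmD w).1 h3
        omega
      · exact h3

variable (G h) in
/-- The directed edge `d` crosses the level `k` upwards. -/
def Crosses (k : ℕ) (d : V × V) : Prop := G.Adj d.1 d.2 ∧ h d.1 ≤ k ∧ k < h d.2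

/-- Two sequences of edges crossing the same level from the same face agree as long as the first
one does not arrive at the face of an edge which is avoided by the second one. -/
lemma agree_of_FC (hσ : ∀ v, (σ v).IsCycleOn (G.neighborSet v))
    [Finite V] (hinj : Function.Injective h)
    (hT : ∀ p q, TopDart σ G h p → TopDart σ G h q → fc σ p = fc σ q → p = q) {k : ℕ}
    {e : V × V} (he : Crosses G h k e) {b : Quotient (Equiv.Perm.SameCycle.setoid (phi σ))}
    (I : List (V × V)) : ∀ (a : Quotient (Equiv.Perm.SameCycle.setoid (phi σ))) (L : List (V × V)),
    (∀ d ∈ I, Crosses G h k d) → (∀ d ∈ L, Crosses G h k d) → e ∉ I →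
    FC σ a b I → FC σ a (fc σ e) L → ∃ B, L = I ++ B ∧ FC σ b (fc σ e) B := by
  have huniq : ∀ p q, Crosses G h k p → Crosses G h k q → fc σ p = fc σ q → p = q :=
    fun p q hp hq => crossing_unique hσ hinj hT hp.1 hq.1 hp.2.1 hp.2.2 hq.2.1 hq.2.2
  induction I with
  | nil =>
    intro a L _ _ _ h1 h2
    obtain rfl : a = b := h1
    exact ⟨L, rfl, h2⟩
  | cons i I ih =>
    intro a L hI hL heI h1 h2
    rcases L with _ | ⟨l, L⟩
    · exfalso
      have h3 : a = fc σ e := h2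
      have := huniq i e (hI i (by simp)) he (h1.1.trans h3)
      exact heI (by simp [this])
    · obtain rfl : l = i := huniq _ _ (hL l (by simp)) (hI i (by simp)) (h2.1.trans h1.1.symm)
      obtain ⟨B, rfl, hB⟩ := ih _ L (fun d hd => hI d (by simp [hd])) (fun d hd => hL d (by simp [hd]))
        (fun hd => heI (by simp [hd])) h1.2 h2.2
      exact ⟨B, rfl, hB⟩

/-- The sweep is constructed level by level: the edges crossing the level `k` form a sequence `L`
leading from the outer face, on the left of `st`, once around to itself. -/
lemma run_aux (hσ : ∀ v, (σ v).IsCycleOn (G.neighborSet v))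
    [Finite V] (hb : Bipolar G h s t)
    (hT : ∀ p q, TopDart σ G h p → TopDart σ G h q → fc σ p = fc σ q → p = q)
    (hR : ∀ p q, TurnDart σ G h p → TurnDart σ G h q → p.1 = q.1 → p = q)
    (Q : List V) : ∀ (k : ℕ) (L : List (V × V)), Q.Pairwise (fun a b => h a < h b) →
    (∀ w, w ∈ Q ↔ k < h w) → L.Nodup → (∀ d, d ∈ L ↔ Crosses G h k d) → h s ≤ k →
    FC σ (fc σ (s, t)) (fc σ (s, t)) L → Run G.Adj L Q := by
  induction Q with
  | nil =>
    intro k L _ hQ _ hL _ _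
    refine List.eq_nil_iff_forall_not_mem.2 fun d hd => ?_
    have := (hQ d.2).2 ((hL d).1 hd).2.2
    simp at this
  | cons v Q ih =>
    intro k L hpw hQ hnd hL hk hF
    rw [List.pairwise_cons] at hpw
    have hkv : k < h v := (hQ v).1 (by simp)
    have hle : ∀ w, h w ≤ h v ↔ h w ≤ k ∨ w = v := by
      intro w
      constructor
      · intro hw
        by_contra hcon
        push Not at hcon
        rcases List.mem_cons.1 ((hQ w).2 hcon.1) with h1 | h1
        · exact hcon.2 h1
        · have := hpw.1 w h1
          omega
      · rintro (hw | rfl) <;> omega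
    have hQ' : ∀ w, w ∈ Q ↔ h v < h w := by
      intro w
      constructor
      · exact hpw.1 w
      · intro hw
        rcases List.mem_cons.1 ((hQ w).2 (by omega)) with rfl | h1
        · omega
        · exact h1
    have hvs : v ≠ s := by rintro rfl; omega
    by_cases hvt : v = t
    · subst hvt
      have hnil : Q = [] := by
        refine List.eq_nil_iff_forall_not_mem.2 fun w hw => ?_
        have h1 := (hQ' w).1 hw
        have := hb.top w (by rintro rfl; omega)
        omega
      subst hnil
      refine ⟨[], L, [], [], by simp, ?_, by simp, by simp, by simp, by simp, by simp, rfl⟩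
      intro d hd
      have := (hQ d.2).2 ((hL d).1 hd).2.2
      simpa using this
    · obtain ⟨D, O, hndDO, hDne, hmD, hmO, a, b, hFD, hFO⟩ :=
        exists_down_up hσ hb.inj hR (hb.low v hvs hvt) (hb.high v hvs hvt)
      set I := ((D.map (fun w => (v, w))).map Prod.swap).reverse with hI
      have hFI : FC σ a b I := FC_reverse hFD
      have hmI : ∀ d, d ∈ I ↔ d.2 = v ∧ G.Adj v d.1 ∧ h d.1 < h v := by
        rintro ⟨x, y⟩
        simp only [hI, List.mem_reverse, List.mem_map, Prod.exists, Prod.swap_prod_mk,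
          Prod.mk.injEq, ← hmD]
        constructor
        · rintro ⟨_, _, ⟨w, hw, rfl, rfl⟩, rfl, rfl⟩
          exact ⟨rfl, hw⟩
        · rintro ⟨rfl, hx⟩
          exact ⟨_, _, ⟨x, hx, rfl, rfl⟩, rfl, rfl⟩
      have hIc : ∀ d ∈ I, Crosses G h k d := by
        intro d hd
        obtain ⟨h1, h2, h3⟩ := (hmI d).1 hd
        refine ⟨by rw [h1]; exact h2.symm, ?_, by rw [h1]; exact hkv⟩
        rcases (hle d.1).1 h3.le with h4 | h4
        · exact h4
        · exact absurd h4.symm h2.ne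
      have hLI : ∀ d ∈ L, d.2 = v → d ∈ I := by
        intro d hd hdv
        have h1 := (hL d).1 hd
        refine (hmI d).2 ⟨hdv, by rw [← hdv]; exact h1.1.symm, ?_⟩
        have := h1.2.1
        omega
      have hst : (s, t) ∉ I := fun H => hvt ((hmI _).1 H).1.symm
      have hIne : I ≠ [] := by simpa [hI] using hDne
      obtain ⟨i, I', hI'⟩ := List.exists_cons_of_ne_nil hIne
      have hi : i ∈ L := (hL i).2 (hIc i (by simp [hI']))
      obtain ⟨A, L2, rfl⟩ := List.append_of_mem hi
      obtain ⟨a', hFA, hFL⟩ := FC_append.1 hF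
      obtain rfl : a = a' := by
        rw [hI'] at hFI
        exact hFI.1.symm.trans hFL.1
      have hcst : Crosses G h k (s, t) := by
        refine ⟨hb.adj, hk, ?_⟩
        have := hb.top v hvt
        change k < h t
        omega
      obtain ⟨B, hLB, hFB⟩ := agree_of_FC hσ hb.inj hT hcst I a _ hIc
        (fun d hd => (hL d).1 (List.mem_append_right _ hd)) hst hFI hFL
      rw [hLB] at hnd hL hLI hF
      have hdisj := List.nodup_append.1 hnd
      have hdisj2 := List.nodup_append.1 hdisj.2.1
      have hOn : (O.map (fun w => (v, w))).Nodup :=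
        (List.nodup_append.1 hndDO).2.1.map (fun x y hxy => (Prod.mk.inj hxy).2)
      have hOm : ∀ d, d ∈ O.map (fun w => (v, w)) ↔ d.1 = v ∧ G.Adj v d.2 ∧ h v < h d.2 := by
        rintro ⟨x, y⟩
        simp only [List.mem_map, Prod.mk.injEq, ← hmO]
        constructor
        · rintro ⟨w, hw, rfl, rfl⟩; exact ⟨rfl, hw⟩
        · rintro ⟨rfl, hy⟩; exact ⟨y, hy, rfl, rfl⟩
      have hAv : ∀ d ∈ A, d.2 ≠ v := by
        intro d hd hdv
        have h1 := hLI d (by simp [hd]) hdv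
        exact hdisj.2.2 d hd d (by simp [h1]) rfl
      have hBv : ∀ d ∈ B, d.2 ≠ v := by
        intro d hd hdv
        have h1 := hLI d (by simp [hd]) hdv
        exact hdisj2.2.2 d h1 d hd rfl
      refine ⟨A, I, O.map (fun w => (v, w)), B, by rw [hLB, List.append_assoc],
        fun d hd => ((hmI d).1 hd).1, hAv, hBv, fun d hd => ((hOm d).1 hd).1, hOn, ?_, ?_⟩
      · intro w
        rw [hOm, hQ']
        simp
      · have hm : ∀ d, d ∈ A ++ O.map (fun w => (v, w)) ++ B ↔ Crosses G h (h v) d := by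
          intro d
          rw [List.mem_append, List.mem_append, hOm]
          constructor
          · rintro ((hd | hd) | hd)
            · have h1 := (hL d).1 (by simp [hd])
              have h3 := mt (hle d.2).1 (not_or.2 ⟨not_le.2 h1.2.2, hAv d hd⟩)
              exact ⟨h1.1, by have := h1.2.1; omega, by omega⟩
            · exact ⟨by rw [hd.1]; exact hd.2.1, by rw [hd.1], hd.2.2⟩
            · have h1 := (hL d).1 (by simp [hd])
              have h3 := mt (hle d.2).1 (not_or.2 ⟨not_le.2 h1.2.2, hBv d hd⟩)
              exact ⟨h1.1, by have := h1.2.1; omega, by omega⟩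
          · rintro ⟨h1, h2, h3⟩
            rcases (hle d.1).1 h2 with h4 | h4
            · have h5 := (hL d).2 ⟨h1, h4, by omega⟩
              rcases List.mem_append.1 h5 with h6 | h6
              · exact Or.inl (Or.inl h6)
              · rcases List.mem_append.1 h6 with h7 | h7
                · have := ((hmI d).1 h7).1
                  rw [this] at h3
                  omega
                · exact Or.inr h7
            · exact Or.inl (Or.inr ⟨h4, by rw [← h4]; exact h1, h3⟩)
        refine ih (h v) _ hpw.2 hQ' ?_ hm (by omega) ?_
        · have hO1 : ∀ d ∈ O.map (fun w => (v, w)), ¬ Crosses G h k d := by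
            intro d hd hc
            have := hc.2.1
            rw [((hOm d).1 hd).1] at this
            omega
          rw [List.append_assoc, List.nodup_append, List.nodup_append]
          refine ⟨hdisj.1, ⟨hOn, hdisj2.2.1, ?_⟩, ?_⟩
          · rintro x hx y hy rfl
            exact hO1 x hx ((hL x).1 (by simp [hy]))
          · rintro x hx y hy rfl
            rcases List.mem_append.1 hy with hy | hy
            · exact hO1 x hy ((hL x).1 (by simp [hx]))
            · exact hdisj.2.2 x hx x (by simp [hy]) rfl
        · exact FC_append.2 ⟨b, FC_append.2 ⟨a, hFA, hFO⟩, hFB⟩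

/-- A planar graph can be swept in the order of bipolar heights. -/
theorem Bipolar.run [Fintype V] (hc : Cert G) (hb : Bipolar G h s t) {Q : List V}
    (hpw : (s :: Q).Pairwise (fun a b => h a < h b)) (hall : ∀ v, v ∈ s :: Q) :
    Run G.Adj [] (s :: Q) := by
  obtain ⟨σ, hσ, hZ⟩ := hc
  obtain ⟨hT, hR, -⟩ := bipolar_unique hσ hb hZ
  obtain ⟨n, hn, hni, hmem, hpow⟩ := exists_rotation hσ hb.adj
  rw [List.pairwise_cons] at hpw
  have hQ : ∀ w, w ∈ Q ↔ h s < h w := by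
    intro w
    refine ⟨hpw.1 w, fun hw => ?_⟩
    rcases List.mem_cons.1 (hall w) with rfl | h1
    · omega
    · exact h1
  have hF := FC_range (σ := σ) s t n
  rw [hpow] at hF
  have hnd : ((List.range n).map (fun i => (s, (σ s ^ i) t))).Nodup := by
    refine List.Nodup.map_on ?_ List.nodup_range
    intro i hi j hj hij
    exact hni i j (List.mem_range.1 hi) (List.mem_range.1 hj) (Prod.mk.inj hij).2
  have hm : ∀ d, d ∈ (List.range n).map (fun i => (s, (σ s ^ i) t)) ↔ d.1 = s ∧ G.Adj s d.2 := by
    rintro ⟨x, y⟩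
    simp only [List.mem_map, List.mem_range, Prod.mk.injEq, hmem]
    constructor
    · rintro ⟨i, hi, rfl, rfl⟩; exact ⟨rfl, i, hi, rfl⟩
    · rintro ⟨rfl, i, hi, rfl⟩; exact ⟨i, hi, rfl, rfl⟩
  have hbot : ∀ w, G.Adj s w → h s < h w := fun w hw => hb.bot w hw.ne'
  refine ⟨[], [], (List.range n).map (fun i => (s, (σ s ^ i) t)), [], rfl, by simp, by simp,
    by simp, fun d hd => ((hm d).1 hd).1, hnd, ?_, ?_⟩
  · intro w
    rw [hm, hQ]
    exact ⟨fun H => ⟨H.2, hbot w H.2⟩, fun H => ⟨rfl, H.1⟩⟩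
  · rw [List.nil_append, List.append_nil]
    refine run_aux hσ hb hT hR Q (h s) _ hpw.2 hQ hnd ?_ le_rfl hF
    intro d
    rw [hm]
    constructor
    · rintro ⟨h1, h2⟩
      exact ⟨by rw [h1]; exact h2, by rw [h1], hbot _ h2⟩
    · rintro ⟨h1, h2, h3⟩
      have : d.1 = s := by
        by_contra H
        have := hb.bot _ H
        omega
      exact ⟨this, by rw [← this]; exact h1⟩

end Sweep

/-! ### Orders with a single source and a single sink -/

section STOrder

variable {V : Type*} {G : SimpleGraph V} {s t : V}

variable (G) in
/-- No vertex separates the graph: for every vertex `x` and every proper nonempty set `K` of other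
vertices, some edge leaves `K` and avoids `x`. -/
def TwoConn : Prop := ∀ (x : V) (K : Set V), x ∉ K → K.Nonempty → (∃ y, y ≠ x ∧ y ∉ K) →
  ∃ u ∈ K, ∃ w, w ∉ K ∧ w ≠ x ∧ G.Adj u w

variable (G s t) in
/-- A list from `s` to `t` in which every vertex but `s` has an earlier neighbour and every vertex
but `t` has a later neighbour. -/
structure STList (l : List V) : Prop where
  nodup : l.Nodup
  head : l.head? = some s
  last : l.getLast? = some t
  low : ∀ v ∈ l, v ≠ s → ∃ u, G.Adj v u ∧ Bef l u v
  high : ∀ v ∈ l, v ≠ t → ∃ u, G.Adj v u ∧ Bef l v u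

lemma STList.insert {l p : List V} (hl : STList G s t l) {a b : V} (hab : Bef l a b)
    (hp : (a :: (p ++ [b])).IsChain G.Adj) (hnd : p.Nodup) (hd : ∀ x ∈ p, x ∉ l) (hne : p ≠ []) :
    ∃ l', STList G s t l' ∧ l.length < l'.length := by
  have ha : a ∈ l := hab.subset (by simp)
  obtain ⟨l1, l2, rfl⟩ := List.append_of_mem ha
  have hb : b ∈ l2 := (sub_iff_right hl.nodup rfl).1 hab
  have hsub : (l1 ++ a :: l2).Sublist (l1 ++ a :: (p ++ l2)) :=
    (List.Sublist.refl l1).append (((List.sublist_append_right p l2)).cons_cons a)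
  have hsub2 : (a :: (p ++ [b])).Sublist (l1 ++ a :: (p ++ l2)) :=
    (((List.Sublist.refl p).append (List.singleton_sublist.2 hb)).cons_cons a).trans
      (List.sublist_append_right _ _)
  have hmid : ∀ x ∈ p, (∃ u, G.Adj x u ∧ Bef (l1 ++ a :: (p ++ l2)) u x) ∧
      ∃ u, G.Adj x u ∧ Bef (l1 ++ a :: (p ++ l2)) x u := by
    intro x hx
    obtain ⟨p1, p2, rfl⟩ := List.append_of_mem hx
    obtain ⟨q, u, hq⟩ : ∃ q u, a :: p1 = q ++ [u] :=
      ⟨_, _, (List.dropLast_append_getLast (List.cons_ne_nil a p1)).symm⟩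
    obtain ⟨v, r, hr⟩ := List.exists_cons_of_ne_nil (l := p2 ++ [b]) (by simp)
    have e : a :: (p1 ++ x :: p2 ++ [b]) = q ++ ([u, x, v] ++ r) := by
      calc a :: (p1 ++ x :: p2 ++ [b]) = (a :: p1) ++ x :: (p2 ++ [b]) := by simp
        _ = _ := by rw [hq, hr]; simp
    rw [e] at hp hsub2
    have h3 := hp.right_of_append.left_of_append
    have hs3 : [u, x, v].Sublist (l1 ++ a :: (p1 ++ x :: p2 ++ l2)) :=
      ((List.sublist_append_left _ _).trans (List.sublist_append_right _ _)).trans hsub2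
    simp only [List.isChain_cons_cons, List.isChain_singleton, and_true] at h3
    refine ⟨⟨u, h3.1.symm, ?_⟩, v, h3.2, ?_⟩
    · exact (List.Sublist.trans (by simp) hs3)
    · exact (List.Sublist.trans (by simp) hs3)
  have hmem : ∀ v ∈ l1 ++ a :: (p ++ l2), v ∈ p ∨ v ∈ l1 ++ a :: l2 := by
    intro v hv
    simp only [List.mem_append, List.mem_cons] at hv ⊢
    tauto
  have hl2 : l2 ≠ [] := List.ne_nil_of_mem hb
  refine ⟨l1 ++ a :: (p ++ l2), ⟨?_, ?_, ?_, ?_, ?_⟩, ?_⟩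
  · have h1 := hl.nodup
    have : (l1 ++ a :: (p ++ l2)).Perm (p ++ (l1 ++ a :: l2)) := by
      have h2 : (l1 ++ a :: (p ++ l2)) = (l1 ++ [a]) ++ p ++ l2 := by simp
      have h3 : (p ++ (l1 ++ a :: l2)) = (p ++ (l1 ++ [a])) ++ l2 := by simp
      rw [h2, h3]
      exact List.perm_append_comm.append_right l2
    rw [this.nodup_iff, List.nodup_append]
    refine ⟨hnd, h1, ?_⟩
    rintro x hx y hy rfl
    exact hd x hx hy
  · have := hl.head
    cases l1 <;> simpa using this
  · have := hl.last
    obtain ⟨q, z, rfl⟩ : ∃ q z, l2 = q ++ [z] :=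
      ⟨_, _, (List.dropLast_append_getLast hl2).symm⟩
    have e1 : l1 ++ a :: (q ++ [z]) = (l1 ++ a :: q) ++ [z] := by simp
    have e2 : l1 ++ a :: (p ++ (q ++ [z])) = (l1 ++ a :: (p ++ q)) ++ [z] := by simp
    rw [e1, List.getLast?_concat] at this
    rw [e2, List.getLast?_concat, this]
  · intro v hv hvs
    rcases hmem v hv with h1 | h1
    · exact (hmid v h1).1
    · obtain ⟨u, hu, hu'⟩ := hl.low v h1 hvs
      exact ⟨u, hu, hu'.trans hsub⟩
  · intro v hv hvs
    rcases hmem v hv with h1 | h1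
    · exact (hmid v h1).2
    · obtain ⟨u, hu, hu'⟩ := hl.high v h1 hvs
      exact ⟨u, hu, hu'.trans hsub⟩
  · have := List.length_pos_iff.2 hne
    simp only [List.length_append, List.length_cons]
    omega

lemma bef_total {l : List V} {a b : V} (ha : a ∈ l) (hb : b ∈ l) (hab : a ≠ b) :
    Bef l a b ∨ Bef l b a := by
  obtain ⟨l1, l2, rfl⟩ := List.append_of_mem ha
  simp only [List.mem_append, List.mem_cons] at hb
  rcases hb with hb | hb | hb
  · exact Or.inr ((List.singleton_sublist.2 hb).append (List.singleton_sublist.2 (by simp)))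
  · exact absurd hb.symm hab
  · exact Or.inl (((List.singleton_sublist.2 hb).cons_cons a).trans (List.sublist_append_right _ _))

/-- Without separating vertices, a list missing a vertex can be extended by an ear. -/
lemma STList.extend (h2 : TwoConn G) {l : List V} (hl : STList G s t l) (hst : s ≠ t) {z : V}
    (hz : z ∉ l) : ∃ l', STList G s t l' ∧ l.length < l'.length := by
  have hs : s ∈ l := List.mem_of_mem_head? hl.head
  have ht : t ∈ l := List.mem_of_getLast? hl.last
  obtain ⟨w, hw, a, ha, -, haw⟩ := h2 s {x | x ∉ l} (by simpa using hs) ⟨z, hz⟩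
    ⟨t, hst.symm, by simpa using ht⟩
  have ha' : a ∈ l := by simpa using ha
  let K : Set V := {u | ∃ p : List V, (a :: (p ++ [u])).IsChain G.Adj ∧ (p ++ [u]).Nodup ∧
    ∀ x ∈ p ++ [u], x ∉ l}
  have hK : ∀ u ∈ K, u ∉ l := by
    rintro u ⟨p, -, -, h3⟩
    exact h3 u (by simp)
  obtain ⟨y, hy, hya⟩ : ∃ y ∈ l, y ≠ a := by
    by_cases h : s = a
    · exact ⟨t, ht, by rw [← h]; exact hst.symm⟩
    · exact ⟨s, hs, h⟩
  obtain ⟨u, ⟨p, hp1, hp2, hp3⟩, b, hbK, hba, hub⟩ := h2 a K (fun h => hK a h ha')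
    ⟨w, [], by simpa using haw.symm, by simp, by simpa using hw⟩ ⟨y, hya, fun h => hK y h hy⟩
  have hch : (a :: (p ++ [u] ++ [b])).IsChain G.Adj := by
    have e : a :: (p ++ [u] ++ [b]) = (a :: p) ++ u :: [b] := by simp
    rw [e]
    refine List.isChain_split.2 ⟨by simpa using hp1, by simpa using hub⟩
  have hbl : b ∈ l := by
    by_contra hbl
    apply hbK
    by_cases hbp : b ∈ p ++ [u]
    · obtain ⟨p1, p2, hpp⟩ := List.append_of_mem hbp
      have e : p ++ [u] = (p1 ++ [b]) ++ p2 := by rw [hpp]; simp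
      rw [e] at hp1 hp2 hp3
      refine ⟨p1, ?_, hp2.of_append_left, fun x hx => hp3 x (List.mem_append_left _ hx)⟩
      rw [← List.cons_append] at hp1
      exact hp1.left_of_append
    · refine ⟨p ++ [u], hch, ?_, ?_⟩
      · rw [List.nodup_append]
        refine ⟨hp2, by simp, ?_⟩
        rintro x hx y hy rfl
        rw [List.mem_singleton.1 hy] at hx
        exact hbp hx
      · intro x hx
        rcases List.mem_append.1 hx with h | h
        · exact hp3 x h
        · rw [List.mem_singleton.1 h]; exact hbl
  rcases bef_total ha' hbl hba.symm with hab | hab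
  · exact hl.insert hab hch hp2 hp3 (by simp)
  · refine hl.insert (p := (p ++ [u]).reverse) hab ?_ (List.nodup_reverse.2 hp2)
      (fun x hx => hp3 x (List.mem_reverse.1 hx)) (by simp)
    have e : b :: ((p ++ [u]).reverse ++ [a]) = (a :: (p ++ [u] ++ [b])).reverse := by simp
    rw [e, List.isChain_reverse]
    exact hch.imp fun _ _ h => h.symm

open Classical in
/-- Every edge `st` of a graph without separating vertices is the base of bipolar heights. -/
theorem TwoConn.exists_bipolar [Fintype V] (h2 : TwoConn G) (hst : G.Adj s t) :
    ∃ m : List V, (s :: (m ++ [t])).Nodup ∧ (∀ v, v ∈ s :: (m ++ [t])) ∧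
      (s :: (m ++ [t])).Pairwise
        (fun a b => (s :: (m ++ [t])).idxOf a < (s :: (m ++ [t])).idxOf b) ∧
      Bipolar G (fun v => (s :: (m ++ [t])).idxOf v) s t := by
  have key : ∀ n : ℕ, ∃ l, STList G s t l ∧ (n ≤ l.length ∨ ∀ v, v ∈ l) := by
    intro n
    induction n with
    | zero =>
      refine ⟨[s, t], ⟨by simpa using hst.ne, rfl, rfl, ?_, ?_⟩, Or.inl (by simp)⟩
      · intro v hv hvs
        simp only [List.mem_cons, List.not_mem_nil, or_false] at hv
        rcases hv with rfl | rfl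
        · exact absurd rfl hvs
        · exact ⟨s, hst.symm, List.Sublist.refl _⟩
      · intro v hv hvs
        simp only [List.mem_cons, List.not_mem_nil, or_false] at hv
        rcases hv with rfl | rfl
        · exact ⟨t, hst, List.Sublist.refl _⟩
        · exact absurd rfl hvs
    | succ n ih =>
      obtain ⟨l, hl, h | h⟩ := ih
      · by_cases hall : ∀ v, v ∈ l
        · exact ⟨l, hl, Or.inr hall⟩
        · push Not at hall
          obtain ⟨z, hz⟩ := hall
          obtain ⟨l', hl', hlt⟩ := hl.extend h2 hst.ne hz
          exact ⟨l', hl', Or.inl (by omega)⟩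
      · exact ⟨l, hl, Or.inr h⟩
  obtain ⟨l, hl, hall⟩ := key (Fintype.card V + 1)
  have hall : ∀ v, v ∈ l := by
    rcases hall with h | h
    · have := hl.nodup.length_le_card
      omega
    · exact h
  obtain ⟨m, rfl⟩ : ∃ m, l = s :: (m ++ [t]) := by
    have h1 := hl.head
    have h2 := hl.last
    rcases l with _ | ⟨x, l⟩
    · simp at h1
    · obtain rfl : x = s := by simpa using h1
      rcases List.eq_nil_or_concat l with rfl | ⟨m, y, rfl⟩
      · exact absurd (by simpa using h2) hst.ne
      · refine ⟨m, ?_⟩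
        rw [List.concat_eq_append, ← List.cons_append, List.getLast?_concat] at h2
        obtain rfl : y = t := by simpa using h2
        simp
  have hb : ∀ a b, Bef (s :: (m ++ [t])) a b ↔
      (s :: (m ++ [t])).idxOf a < (s :: (m ++ [t])).idxOf b :=
    fun a b => sub_iff_idxOf hl.nodup (hall b)
  refine ⟨m, hl.nodup, hall, ?_, ?_, hst, ?_, ?_, ?_, ?_⟩
  · rw [List.pairwise_iff_forall_sublist]
    intro a b hab
    exact (hb a b).1 hab
  · intro a b hab
    exact (List.idxOf_inj (hall a)).1 hab
  · intro v hv
    refine (hb s v).1 ((sub_iff_right (P := []) hl.nodup rfl).2 ?_)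
    have := hall v
    rw [List.mem_cons] at this
    exact this.resolve_left hv
  · intro v hv
    refine (hb v t).1 ((sub_iff_left (P := s :: m) (Q := []) hl.nodup (by simp)).2 ?_)
    have := hall v
    rw [← List.cons_append, List.mem_append, List.mem_singleton] at this
    exact this.resolve_right hv
  · intro v hvs _
    obtain ⟨u, hu, hu'⟩ := hl.low v (hall v) hvs
    exact ⟨u, hu, (hb _ _).1 hu'⟩
  · intro v _ hvt
    obtain ⟨u, hu, hu'⟩ := hl.high v (hall v) hvt
    exact ⟨u, hu, (hb _ _).1 hu'⟩

lemma TwoConn.nontrivial [Fintype V] (h2 : TwoConn G) (hn : 3 ≤ Fintype.card V) (v : V) :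
    (G.neighborSet v).Nontrivial := by
  classical
  obtain ⟨a, ha⟩ : ∃ a, a ≠ v := Fintype.exists_ne_of_one_lt_card (by omega) v
  obtain ⟨b, hb⟩ : ∃ b, b ∉ ({v, a} : Finset V) := by
    by_contra H
    push Not at H
    have h1 := Finset.card_le_card (fun x _ => H x : (Finset.univ : Finset V) ⊆ {v, a})
    have h2 := Finset.card_le_two (a := v) (b := a)
    rw [Finset.card_univ] at h1
    omega
  simp only [Finset.mem_insert, Finset.mem_singleton, not_or] at hb
  obtain ⟨u, hu, w, hw, -, huw⟩ := h2 a {v} (by simpa using ha) ⟨v, rfl⟩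
    ⟨b, hb.2, by simpa using hb.1⟩
  obtain rfl : u = v := hu
  obtain ⟨c, hcv, hcw⟩ : ∃ c, c ≠ u ∧ c ≠ w := by
    by_cases haw : a = w
    · exact ⟨b, hb.1, by rw [← haw]; exact hb.2⟩
    · exact ⟨a, ha, haw⟩
  obtain ⟨u', hu', w', hw', hne, huw'⟩ := h2 w {u} (by simpa using hw) ⟨u, rfl⟩
    ⟨c, hcw, by simpa using hcv⟩
  obtain rfl : u' = u := hu'
  exact ⟨w, huw, w', huw', hne.symm⟩

end STOrder

/-! ### Graphs without separating vertices -/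

section TwoConnected

variable {V : Type*} {G : SimpleGraph V} {s t : V}

/-- Deleting edges from a sweep. -/
lemma Run.filter {R R' : V → V → Prop} (p : V × V → Bool) (hR : ∀ v w, R' v w ↔ R v w ∧ p (v, w))
    (Q : List V) : ∀ L, Run R L Q → Run R' (L.filter p) Q := by
  induction Q with
  | nil =>
    intro L hL
    obtain rfl : L = [] := hL
    rfl
  | cons v Q ih =>
    rintro L ⟨A, I, O, B, rfl, hI, hA, hB, hO, hnd, hmem, hrun⟩
    refine ⟨A.filter p, I.filter p, O.filter p, B.filter p, by simp,
      fun e he => hI e (List.mem_of_mem_filter he), fun e he => hA e (List.mem_of_mem_filter he),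
      fun e he => hB e (List.mem_of_mem_filter he), fun e he => hO e (List.mem_of_mem_filter he),
      hnd.filter _, ?_, ?_⟩
    · intro w
      rw [List.mem_filter, hmem, hR]
      tauto
    · have := ih _ hrun
      simpa using this

lemma Bipolar.iD_pos [Finite V] {h : V → ℕ} (hb : Bipolar G h s t) {ord : List V}
    (hbef : ∀ a b, Bef ord a b ↔ h a < h b) {v : V} (hs : v ≠ s) (ht : v ≠ t) :
    0 < iD G ord v ∧ 0 < oD G ord v := by
  obtain ⟨a, ha, ha'⟩ := hb.low v hs ht
  obtain ⟨b, hb1, hb'⟩ := hb.high v hs ht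
  refine ⟨(Set.ncard_pos (Set.toFinite _)).2 ⟨a, ha, (hbef _ _).2 ha'⟩,
    (Set.ncard_pos (Set.toFinite _)).2 ⟨b, hb1, (hbef _ _).2 hb'⟩⟩

lemma sum_add_two_mul [Fintype V] (hst : s ≠ t) (f g : V → ℕ) (c : ℕ)
    (hf : ∀ v, v ≠ s → v ≠ t → f v + 2 ≤ g v) (hs : f s + c ≤ g s) (ht : f t + c ≤ g t) :
    ∑ v, f v + 2 * Fintype.card V + 2 * c ≤ ∑ v, g v + 4 := by
  classical
  have key : ∑ v, (f v + 2 + (if v = s then c else 0) + (if v = t then c else 0)) ≤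
      ∑ v, (g v + (if v = s then 2 else 0) + (if v = t then 2 else 0)) := by
    refine Finset.sum_le_sum fun v _ => ?_
    by_cases h1 : v = s
    · subst h1
      rw [if_pos rfl, if_neg hst, if_pos rfl, if_neg hst]
      omega
    · by_cases h2 : v = t
      · subst h2
        rw [if_neg h1, if_pos rfl, if_neg h1, if_pos rfl]
        omega
      · have := hf v h1 h2
        rw [if_neg h1, if_neg h2, if_neg h1, if_neg h2]
        omega
  simp only [Finset.sum_add_distrib, Finset.sum_ite_eq', Finset.mem_univ, if_true,
    Finset.sum_const, Finset.card_univ, smul_eq_mul] at key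
  omega

/-- A planar graph without separating vertices can be swept from any vertex at cost `4n - 8`. -/
theorem TwoConn.exists_run [Fintype V] (hc : Cert G) (h2 : TwoConn G) (hn : 3 ≤ Fintype.card V)
    (s : V) : ∃ Q : List V, (s :: Q).Nodup ∧ (∀ v, v ∈ s :: Q) ∧ Run G.Adj [] (s :: Q) ∧
      ∑ v, cst (iD G (s :: Q) v) (oD G (s :: Q) v) + 8 ≤ 4 * Fintype.card V := by
  classical
  obtain ⟨t, hst, -⟩ := h2.nontrivial hn s
  have hst : G.Adj s t := hst
  obtain ⟨m, hnd, hall, hpw, hb⟩ := h2.exists_bipolar hst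
  refine ⟨m ++ [t], hnd, hall, hb.run hc hpw hall, ?_⟩
  have hE := edge_bound hc hb (h2.nontrivial hn)
  have hbef : ∀ a b, Bef (s :: (m ++ [t])) a b ↔
      (s :: (m ++ [t])).idxOf a < (s :: (m ++ [t])).idxOf b :=
    fun a b => sub_iff_idxOf hnd (hall b)
  have hd := iD_add_oD G _ hnd hall
  have hc0 : ∀ v, 0 < (G.neighborSet v).ncard := fun v =>
    (Set.ncard_pos (Set.toFinite _)).2 (h2.nontrivial hn v).nonempty
  have his : iD G (s :: (m ++ [t])) s = 0 := by
    rw [iD, Set.ncard_eq_zero]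
    ext a
    simp [sub_iff_left hnd (P := []) (Q := m ++ [t]) rfl]
  have hot : oD G (s :: (m ++ [t])) t = 0 := by
    rw [oD, Set.ncard_eq_zero]
    ext a
    simp [sub_iff_right hnd (show s :: (m ++ [t]) = (s :: m) ++ t :: [] by simp)]
  have := sum_add_two_mul hst.ne (fun v => cst (iD G (s :: (m ++ [t])) v) (oD G (s :: (m ++ [t])) v))
    (fun v => (G.neighborSet v).ncard) 0 (by
      intro v hvs hvt
      have h1 := hb.iD_pos hbef hvs hvt
      have h3 := hd v
      simp only [cst]
      rw [if_neg (by omega)]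
      omega) (by
      have h3 := hd s
      have h4 := hc0 s
      simp only [cst]
      split_ifs <;> omega) (by
      have h3 := hd t
      have h4 := hc0 t
      simp only [cst]
      split_ifs <;> omega)
  omega

/-- For graphs without separating vertices two bends are saved with respect to
`TwoConn.exists_run`. There is a vertex `s` of degree at most five; an edge `st` is removed from a
sweep from `s` to `t` and drawn around everything else. This uses the ports of `s` to the west and
of `t` to the north: the former is free since the other edges at `s`, at most four, fit on its right
and top, the latter since `t` has at most seven other edges. -/
theorem TwoConn.exists_drawing [Fintype V] (hc : Cert G) (h2 : TwoConn G)
    (hn : 3 ≤ Fintype.card V) (hd8 : MaxDegLE G 8) :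
    ∃ D : OctiDrawing G, D.IsPlanar ∧ D.totalBends ≤ 4 * Fintype.card V - 10 := by
  classical
  have hc2 : ∀ v, 2 ≤ (G.neighborSet v).ncard := fun v =>
    (Set.one_lt_ncard (Set.toFinite _)).2 (h2.nontrivial hn v)
  obtain ⟨s, hs5⟩ : ∃ s, (G.neighborSet s).ncard ≤ 5 := by
    have hne : Nonempty V := Fintype.card_pos_iff.1 (by omega)
    obtain ⟨x⟩ := hne
    obtain ⟨y, hxy, -⟩ := h2.nontrivial hn x
    obtain ⟨m, hnd, hall, hpw, hb⟩ := h2.exists_bipolar (show G.Adj x y from hxy)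
    have hE := edge_bound hc hb (h2.nontrivial hn)
    by_contra H
    push Not at H
    have := Finset.card_nsmul_le_sum Finset.univ (fun v => (G.neighborSet v).ncard) 6
      (fun v _ => H v)
    rw [Finset.card_univ, smul_eq_mul] at this
    omega
  obtain ⟨t, hst, -⟩ := h2.nontrivial hn s
  have hst : G.Adj s t := hst
  obtain ⟨m, hnd, hall, hpw, hb⟩ := h2.exists_bipolar hst
  have hE := edge_bound hc hb (h2.nontrivial hn)
  have hbef : ∀ a b, Bef (s :: (m ++ [t])) a b ↔
      (s :: (m ++ [t])).idxOf a < (s :: (m ++ [t])).idxOf b :=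
    fun a b => sub_iff_idxOf hnd (hall b)
  obtain ⟨H, hH⟩ : ∃ H, H = G.deleteEdges {s(s, t)} := ⟨_, rfl⟩
  have hHadj : ∀ v w, H.Adj v w ↔ G.Adj v w ∧ s(v, w) ≠ s(s, t) := by
    intro v w
    rw [hH, SimpleGraph.deleteEdges_adj, Set.mem_singleton_iff]
  have hrun : Run H.Adj [] (s :: (m ++ [t])) :=
    Run.filter (fun d => decide (s(d.1, d.2) ≠ s(s, t))) (by intro v w; rw [hHadj, decide_eq_true_iff]) _ _
      (hb.run hc hpw hall)
  have hHn : ∀ v, v ≠ s → v ≠ t → ∀ w, H.Adj v w ↔ G.Adj v w := by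
    intro v hvs hvt w
    rw [hHadj, and_iff_left]
    intro H
    have : v ∈ s(s, t) := by rw [← H]; simp
    rcases Sym2.mem_iff.1 this with h | h
    · exact hvs h
    · exact hvt h
  have hHs : (H.neighborSet s).ncard + 1 = (G.neighborSet s).ncard := by
    have : H.neighborSet s = G.neighborSet s \ {t} := by
      ext w
      simp only [SimpleGraph.mem_neighborSet, hHadj, Set.mem_sdiff, Set.mem_singleton_iff]
      have := hst.ne
      simp only [ne_eq, Sym2.eq_iff]
      grind
    rw [this, Set.ncard_sdiff_singleton_add_one (show t ∈ G.neighborSet s from hst)]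
  have hHt : (H.neighborSet t).ncard + 1 = (G.neighborSet t).ncard := by
    have : H.neighborSet t = G.neighborSet t \ {s} := by
      ext w
      simp only [SimpleGraph.mem_neighborSet, hHadj, Set.mem_sdiff, Set.mem_singleton_iff]
      have := hst.ne
      simp only [ne_eq, Sym2.eq_iff]
      grind
    rw [this, Set.ncard_sdiff_singleton_add_one (show s ∈ G.neighborSet t from hst.symm)]
  have hd := iD_add_oD H _ hnd hall
  have hle : ∀ v, (H.neighborSet v).ncard ≤ (G.neighborSet v).ncard := fun v =>
    Set.ncard_le_ncard (fun w hw => ((hHadj v w).1 hw).1) (Set.toFinite _)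
  have h8 : ∀ v, (G.neighborSet v).ncard ≤ 8 := hd8
  obtain ⟨D, hD, hDb⟩ := Run.exists_drawing_special G hst H hH _ m rfl hnd hall hrun
    (fun v => by have := hd v; have := hle v; have := h8 v; omega) (by omega)
    (by have := h8 t; omega)
  refine ⟨D, hD, ?_⟩
  have his : iD H (s :: (m ++ [t])) s = 0 := by
    rw [iD, Set.ncard_eq_zero]
    ext a
    simp [sub_iff_left hnd (P := []) (Q := m ++ [t]) rfl]
  have hot : oD H (s :: (m ++ [t])) t = 0 := by
    rw [oD, Set.ncard_eq_zero]
    ext a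
    simp [sub_iff_right hnd (show s :: (m ++ [t]) = (s :: m) ++ t :: [] by simp)]
  have := sum_add_two_mul hst.ne (fun v => cst (iD H (s :: (m ++ [t])) v) (oD H (s :: (m ++ [t])) v))
    (fun v => (G.neighborSet v).ncard) 2 (by
      intro v hvs hvt
      have h1 := hb.iD_pos hbef hvs hvt
      have e1 : iD H (s :: (m ++ [t])) v = iD G (s :: (m ++ [t])) v := by
        simp only [iD, hHn v hvs hvt]
      have e2 : oD H (s :: (m ++ [t])) v = oD G (s :: (m ++ [t])) v := by
        simp only [oD, hHn v hvs hvt]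
      have h3 := iD_add_oD G _ hnd hall v
      simp only [cst]
      rw [if_neg (by omega)]
      omega) (by
      have h3 := hd s
      have h4 := hc2 s
      simp only [cst]
      rw [if_neg (by omega)]
      omega) (by
      have h3 := hd t
      have h4 := hc2 t
      have := h8 t
      simp only [cst]
      rw [if_neg (by omega)]
      omega)
  omega

end TwoConnected

/-! ### Gluing sweeps at a separating vertex -/

section Glue

variable {V : Type*} {G : SimpleGraph V}

lemma Run.mem_snd {R : V → V → Prop} (Q : List V) : ∀ L, Run R L Q → ∀ d ∈ L, d.2 ∈ Q := by
  induction Q with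
  | nil =>
    intro L hL
    obtain rfl : L = [] := hL
    simp
  | cons v Q ih =>
    rintro L ⟨A, I, O, B, rfl, hI, hA, hB, hO, hnd, hmem, hrun⟩ d hd
    have := ih _ hrun d
    simp only [List.mem_append] at hd this
    rcases hd with (hd | hd) | hd
    · exact List.mem_cons_of_mem _ (this (by simp [hd]))
    · simp [hI d hd]
    · exact List.mem_cons_of_mem _ (this (by simp [hd]))

/-- A sweep can be carried out between waiting edges. -/
lemma Run.context {R : V → V → Prop} {C D : List (V × V)} {Q' : List V} (hrun' : Run R (C ++ D) Q')
    (Q : List V) : ∀ L, Run R L Q → (∀ d ∈ C, d.2 ∉ Q) → (∀ d ∈ D, d.2 ∉ Q) →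
    (∀ v ∈ Q, ∀ w ∈ Q', ¬ R v w) → Run R (C ++ L ++ D) (Q ++ Q') := by
  induction Q with
  | nil =>
    intro L hL _ _ _
    obtain rfl : L = [] := hL
    simpa using hrun'
  | cons v Q ih =>
    rintro L ⟨A, I, O, B, rfl, hI, hA, hB, hO, hnd, hmem, hrun⟩ hC hD hR
    rw [List.cons_append]
    refine ⟨C ++ A, I, O, B ++ D, by simp, hI, ?_, ?_, hO, hnd, ?_, ?_⟩
    · intro d hd
      rcases List.mem_append.1 hd with h | h
      · intro H; exact hC d h (by simp [H])
      · exact hA d h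
    · intro d hd
      rcases List.mem_append.1 hd with h | h
      · exact hB d h
      · intro H; exact hD d h (by simp [H])
    · intro w
      rw [hmem, List.mem_append]
      have := hR v (by simp) w
      tauto
    · have := ih _ hrun (fun d hd H => hC d hd (by simp [H])) (fun d hd H => hD d hd (by simp [H]))
        (fun v hv => hR v (by simp [hv]))
      simpa using this

/-- The sweep of the part behind a separating vertex `x` is inserted right after `x`. -/
lemma Run.glue {R : V → V → Prop} {x : V} {Q₁ Q₂ : List V} (h2 : Run R [] (x :: Q₂))
    (hdisj : ∀ w ∈ Q₂, w ∉ Q₁) (h21 : ∀ v ∈ Q₂, ∀ w ∈ Q₁, ¬ R v w)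
    (P : List V) : ∀ L, Run R L (P ++ x :: Q₁) → (∀ v ∈ P, ∀ w ∈ Q₂, ¬ R v w) →
    Run R L (P ++ x :: (Q₂ ++ Q₁)) := by
  induction P with
  | nil =>
    rintro L ⟨A, I, O, B, rfl, hI, hA, hB, hO, hnd, hmem, hrun⟩ -
    obtain ⟨A', I', O', B', hL', hI', hA', hB', hO', hnd', hmem', hrun'⟩ := h2
    have hA'' : A' = [] := by
      rw [eq_comm, List.append_eq_nil_iff, List.append_eq_nil_iff] at hL'
      exact hL'.1.1
    have hB'' : B' = [] := by
      rw [eq_comm, List.append_eq_nil_iff] at hL'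
      exact hL'.2
    subst hA'' hB''
    rw [List.nil_append, List.append_nil] at hrun'
    have hsnd := Run.mem_snd _ _ hrun
    refine ⟨A, I, O ++ O', B, rfl, hI, hA, hB, ?_, ?_, ?_, ?_⟩
    · intro d hd
      rcases List.mem_append.1 hd with h | h
      · exact hO d h
      · exact hO' d h
    · rw [List.nodup_append]
      refine ⟨hnd, hnd', ?_⟩
      rintro d hd e he rfl
      have h1 : d = (x, d.2) := Prod.ext (hO d hd) rfl
      rw [h1] at hd he
      exact hdisj _ ((hmem' _).1 he).2 ((hmem _).1 hd).2
    · intro w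
      rw [List.mem_append, hmem, hmem', List.mem_append]
      tauto
    · have := Run.context (C := A ++ O) (D := B) hrun Q₂ O' hrun'
        (fun d hd H => hdisj _ H (hsnd d (List.mem_append_left _ hd)))
        (fun d hd H => hdisj _ H (hsnd d (List.mem_append_right _ hd))) h21
      simpa using this
  | cons p P ih =>
    rintro L ⟨A, I, O, B, rfl, hI, hA, hB, hO, hnd, hmem, hrun⟩ hP
    rw [List.cons_append]
    refine ⟨A, I, O, B, rfl, hI, hA, hB, hO, hnd, ?_,
      ih _ hrun (fun v hv => hP v (by simp [hv]))⟩
    intro w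
    have := hP p (by simp) w
    rw [hmem w, List.append_eq, List.mem_append, List.mem_cons, List.mem_append, List.mem_cons,
      List.mem_append]
    tauto

/-- Relabelling the vertices of a sweep. -/
lemma Run.map {W : Type*} {R : V → V → Prop} {R' : W → W → Prop} (f : W → V)
    (hf : Function.Injective f) (hR : ∀ v w, R (f v) (f w) ↔ R' v w) (Q : List W) :
    ∀ L, Run R' L Q → Run R (L.map (Prod.map f f)) (Q.map f) := by
  induction Q with
  | nil =>
    intro L hL
    obtain rfl : L = [] := hL
    rfl
  | cons v Q ih =>
    rintro L ⟨A, I, O, B, rfl, hI, hA, hB, hO, hnd, hmem, hrun⟩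
    refine ⟨A.map (Prod.map f f), I.map (Prod.map f f), O.map (Prod.map f f), B.map (Prod.map f f),
      by simp, ?_, ?_, ?_, ?_, hnd.map (hf.prodMap hf), ?_, ?_⟩
    · simp only [List.mem_map]
      rintro _ ⟨d, hd, rfl⟩
      exact congrArg f (hI d hd)
    · simp only [List.mem_map]
      rintro _ ⟨d, hd, rfl⟩ H
      exact hA d hd (hf H)
    · simp only [List.mem_map]
      rintro _ ⟨d, hd, rfl⟩ H
      exact hB d hd (hf H)
    · simp only [List.mem_map]
      rintro _ ⟨d, hd, rfl⟩
      exact congrArg f (hO d hd)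
    · intro w
      simp only [List.mem_map]
      constructor
      · rintro ⟨d, hd, hdw⟩
        obtain ⟨h1, h2⟩ := Prod.mk.inj hdw
        have h3 : d = (v, d.2) := Prod.ext (hO d hd) rfl
        rw [h3] at hd
        obtain ⟨h4, h5⟩ := (hmem _).1 hd
        subst h2
        exact ⟨(hR _ _).2 h4, d.2, h5, rfl⟩
      · rintro ⟨h1, u, hu, rfl⟩
        exact ⟨(v, u), (hmem u).2 ⟨(hR _ _).1 h1, hu⟩, rfl⟩
    · simpa using ih _ hrun

variable (G) in
/-- The cost of a vertex in a sweep order. -/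
noncomputable def vcost (ord : List V) (v : V) : ℕ := cst (iD G ord v) (oD G ord v)

lemma bef_of_sublist {l l' : List V} (hs : l'.Sublist l) (hnd : l.Nodup) {a b : V} (ha : a ∈ l')
    (hb : b ∈ l') : Bef l a b ↔ Bef l' a b := by
  classical
  refine ⟨fun h => ?_, fun h => h.trans hs⟩
  have h1 := (sub_iff_idxOf hnd (hs.subset hb)).1 h
  have hab : a ≠ b := by rintro rfl; omega
  rcases bef_total ha hb hab with h2 | h2
  · exact h2
  · have h3 := (sub_iff_idxOf hnd (hs.subset ha)).1 (h2.trans hs)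
    omega

lemma Bef.mem_left {l : List V} {a b : V} (h : Bef l a b) : a ∈ l := h.subset (by simp)

lemma Bef.mem_right {l : List V} {a b : V} (h : Bef l a b) : b ∈ l := h.subset (by simp)

/-- The cost of a vertex only depends on the order of its neighbours. -/
lemma vcost_of_sublist {l l' : List V} (hs : l'.Sublist l) (hnd : l.Nodup) {v : V} (hv : v ∈ l')
    (hN : ∀ w ∈ l, G.Adj v w → w ∈ l') : vcost G l v = vcost G l' v := by
  have e1 : iD G l v = iD G l' v := by
    rw [iD, iD]
    congr 1
    ext a
    constructor
    · rintro ⟨h1, h2⟩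
      exact ⟨h1, (bef_of_sublist hs hnd (hN a h2.mem_left h1) hv).1 h2⟩
    · rintro ⟨h1, h2⟩
      exact ⟨h1, h2.trans hs⟩
  have e2 : oD G l v = oD G l' v := by
    rw [oD, oD]
    congr 1
    ext a
    constructor
    · rintro ⟨h1, h2⟩
      exact ⟨h1, (bef_of_sublist hs hnd hv (hN a h2.mem_right h1)).1 h2⟩
    · rintro ⟨h1, h2⟩
      exact ⟨h1, h2.trans hs⟩
  rw [vcost, vcost, e1, e2]

lemma sum_vcost_glue [Finite V] {P Q₁ Q₂ : List V} {x : V}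
    (hnd : (P ++ x :: (Q₂ ++ Q₁)).Nodup)
    (h12 : ∀ v, v ∈ P ∨ v ∈ Q₁ → ∀ w ∈ Q₂, ¬ G.Adj v w) :
    ((P ++ x :: (Q₂ ++ Q₁)).map (vcost G (P ++ x :: (Q₂ ++ Q₁)))).sum ≤
      ((P ++ x :: Q₁).map (vcost G (P ++ x :: Q₁))).sum +
      ((x :: Q₂).map (vcost G (x :: Q₂))).sum + 2 := by
  have hs1 : (P ++ x :: Q₁).Sublist (P ++ x :: (Q₂ ++ Q₁)) :=
    (List.Sublist.refl P).append ((List.sublist_append_right Q₂ Q₁).cons_cons x)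
  have hs2 : (x :: Q₂).Sublist (P ++ x :: (Q₂ ++ Q₁)) :=
    ((List.sublist_append_left Q₂ Q₁).cons_cons x).trans (List.sublist_append_right _ _)
  have hnd1 := hnd.sublist hs1
  have hnd2 := hnd.sublist hs2
  have c1 : ∀ v, v ∈ P ∨ v ∈ Q₁ → vcost G (P ++ x :: (Q₂ ++ Q₁)) v = vcost G (P ++ x :: Q₁) v := by
    intro v hv
    refine vcost_of_sublist hs1 hnd ?_ ?_
    · simp only [List.mem_append, List.mem_cons]; tauto
    · intro w hw hvw
      have := h12 v hv w
      simp only [List.mem_append, List.mem_cons] at hw ⊢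
      tauto
  have c2 : ∀ v ∈ Q₂, vcost G (P ++ x :: (Q₂ ++ Q₁)) v = vcost G (x :: Q₂) v := by
    intro v hv
    refine vcost_of_sublist hs2 hnd (by simp [hv]) ?_
    intro w hw hvw
    have h1 : w ∉ P := fun H => h12 w (Or.inl H) v hv hvw.symm
    have h2 : w ∉ Q₁ := fun H => h12 w (Or.inr H) v hv hvw.symm
    simp only [List.mem_append, List.mem_cons] at hw ⊢
    tauto
  have cx : vcost G (P ++ x :: (Q₂ ++ Q₁)) x ≤ vcost G (P ++ x :: Q₁) x + vcost G (x :: Q₂) x + 2 := by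
    have ei : iD G (P ++ x :: (Q₂ ++ Q₁)) x = iD G (P ++ x :: Q₁) x := by
      simp only [iD, sub_iff_left hnd rfl, sub_iff_left hnd1 rfl]
    have eo : oD G (P ++ x :: (Q₂ ++ Q₁)) x ≤ oD G (P ++ x :: Q₁) x + oD G (x :: Q₂) x := by
      refine le_trans (Set.ncard_le_ncard ?_ (Set.toFinite _)) (Set.ncard_union_le _ _)
      rintro a ⟨h1, h2⟩
      rw [sub_iff_right hnd rfl] at h2
      rcases List.mem_append.1 h2 with h3 | h3
      · exact Or.inr ⟨h1, (sub_iff_right (P := []) hnd2 rfl).2 h3⟩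
      · exact Or.inl ⟨h1, (sub_iff_right hnd1 rfl).2 h3⟩
    simp only [vcost, cst, ei]
    split_ifs <;> omega
  have e1 : P.map (vcost G (P ++ x :: (Q₂ ++ Q₁))) = P.map (vcost G (P ++ x :: Q₁)) :=
    List.map_congr_left fun v hv => c1 v (Or.inl hv)
  have e2 : Q₁.map (vcost G (P ++ x :: (Q₂ ++ Q₁))) = Q₁.map (vcost G (P ++ x :: Q₁)) :=
    List.map_congr_left fun v hv => c1 v (Or.inr hv)
  have e3 : Q₂.map (vcost G (P ++ x :: (Q₂ ++ Q₁))) = Q₂.map (vcost G (x :: Q₂)) :=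
    List.map_congr_left c2
  simp only [List.map_append, List.map_cons, List.sum_append, List.sum_cons] at *
  rw [e1, e2, e3]
  omega

end Glue

/-! ### Sweeping all planar graphs -/

section Induction

variable {V : Type*} {G : SimpleGraph V}

variable (G) in
/-- The subgraph induced by `S` can be swept from the vertex `v` at cost at most `c`. -/
def HasSweep (S : Finset V) (v : V) (c : ℕ) : Prop :=
  ∃ ord : List V, ord.head? = some v ∧ ord.Nodup ∧ (∀ w, w ∈ ord ↔ w ∈ S) ∧
    Run G.Adj [] ord ∧ (ord.map (vcost G ord)).sum ≤ c

variable (G) in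
/-- The vertex `x` separates the subgraph induced by `S` into `S₁` and `S₂`, both containing `x`. -/
structure Separ (S S₁ S₂ : Finset V) (x : V) : Prop where
  mem : ∀ w, w ∈ S ↔ w ∈ S₁ ∨ w ∈ S₂
  inter : ∀ w, w ∈ S₁ ∧ w ∈ S₂ ↔ w = x
  no_edge : ∀ v ∈ S₁, ∀ w ∈ S₂, v ≠ x → w ≠ x → ¬ G.Adj v w

lemma Separ.symm {S S₁ S₂ : Finset V} {x : V} (h : Separ G S S₁ S₂ x) : Separ G S S₂ S₁ x :=
  ⟨fun w => by rw [h.mem, or_comm], fun w => by rw [← h.inter, and_comm],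
    fun v hv w hw hvx hwx H => h.no_edge w hw v hv hwx hvx H.symm⟩

lemma Separ.card {S S₁ S₂ : Finset V} {x : V} (h : Separ G S S₁ S₂ x) :
    S₁.card + S₂.card = S.card + 1 := by
  classical
  have e1 : S = S₁ ∪ S₂ := by ext w; rw [h.mem, Finset.mem_union]
  have e2 : S₁ ∩ S₂ = {x} := by
    ext w; rw [Finset.mem_inter, h.inter, Finset.mem_singleton]
  have := Finset.card_union_add_card_inter S₁ S₂
  rw [← e1, e2, Finset.card_singleton] at this
  omega

/-- Sweeping `S₂` right after the separating vertex `x` in the sweep of `S₁` costs at most two more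
bends, since all edges at `x` into `S₂` leave upwards. -/
lemma HasSweep.glue [Finite V] {S S₁ S₂ : Finset V} {x v : V} (h : Separ G S S₁ S₂ x) {c₁ c₂ : ℕ}
    (h1 : HasSweep G S₁ v c₁) (h2 : HasSweep G S₂ x c₂) : HasSweep G S v (c₁ + c₂ + 2) := by
  obtain ⟨o1, hh1, hnd1, hm1, hr1, hc1⟩ := h1
  obtain ⟨o2, hh2, hnd2, hm2, hr2, hc2⟩ := h2
  have hx := (h.inter x).2 rfl
  obtain ⟨P, Q₁, rfl⟩ := List.append_of_mem ((hm1 x).2 hx.1)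
  obtain ⟨Q₂, rfl⟩ : ∃ Q₂, o2 = x :: Q₂ := by
    rcases o2 with _ | ⟨y, Q₂⟩
    · simp at hh2
    · exact ⟨Q₂, by simpa using hh2⟩
  have hxQ2 : x ∉ Q₂ := (List.nodup_cons.1 hnd2).1
  have hd1 := List.nodup_append.1 hnd1
  have hxQ1 : x ∉ Q₁ := (List.nodup_cons.1 hd1.2.1).1
  have hxP : x ∉ P := fun H => hd1.2.2 x H x (by simp) rfl
  have m2 : ∀ w ∈ Q₂, w ∈ S₂ ∧ w ≠ x := fun w hw =>
    ⟨(hm2 w).1 (by simp [hw]), by rintro rfl; exact hxQ2 hw⟩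
  have m1 : ∀ w, w ∈ P ∨ w ∈ Q₁ → w ∈ S₁ ∧ w ≠ x := fun w hw =>
    ⟨(hm1 w).1 (by simp only [List.mem_append, List.mem_cons]; tauto), by
      rintro rfl; rcases hw with hw | hw
      · exact hxP hw
      · exact hxQ1 hw⟩
  have hdisj : ∀ w, w ∈ P ∨ w ∈ Q₁ → w ∉ Q₂ := by
    intro w hw hw'
    exact (m1 w hw).2 ((h.inter w).1 ⟨(m1 w hw).1, (m2 w hw').1⟩)
  have hno : ∀ v, v ∈ P ∨ v ∈ Q₁ → ∀ w ∈ Q₂, ¬ G.Adj v w := fun v hv w hw =>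
    h.no_edge v (m1 v hv).1 w (m2 w hw).1 (m1 v hv).2 (m2 w hw).2
  have hnd : (P ++ x :: (Q₂ ++ Q₁)).Nodup := by
    have hp : (P ++ x :: (Q₂ ++ Q₁)).Perm (Q₂ ++ (P ++ x :: Q₁)) := by
      have e2 : P ++ x :: (Q₂ ++ Q₁) = (P ++ [x]) ++ Q₂ ++ Q₁ := by simp
      have e3 : Q₂ ++ (P ++ x :: Q₁) = (Q₂ ++ (P ++ [x])) ++ Q₁ := by simp
      rw [e2, e3]
      exact List.perm_append_comm.append_right Q₁
    rw [hp.nodup_iff, List.nodup_append]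
    refine ⟨(List.nodup_cons.1 hnd2).2, hnd1, ?_⟩
    rintro a ha b hb rfl
    simp only [List.mem_append, List.mem_cons] at hb
    rcases hb with hb | hb | hb
    · exact hdisj a (Or.inl hb) ha
    · exact (m2 a ha).2 hb
    · exact hdisj a (Or.inr hb) ha
  refine ⟨P ++ x :: (Q₂ ++ Q₁), ?_, hnd, ?_, ?_, ?_⟩
  · cases P <;> simpa using hh1
  · intro w
    rw [h.mem, ← hm1, ← hm2]
    simp only [List.mem_append, List.mem_cons]
    tauto
  · exact Run.glue hr2 (fun w hw hw' => hdisj w (Or.inr hw') hw)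
      (fun a ha b hb H => hno b (Or.inr hb) a ha H.symm) P [] hr1
      (fun a ha b hb => hno a (Or.inl ha) b hb)
  · have := sum_vcost_glue hnd hno
    omega

lemma exists_sep {S : Finset V} (h : ¬ TwoConn (G.induce (S : Set V))) :
    ∃ x S₁ S₂, Separ G S S₁ S₂ x ∧ 2 ≤ S₁.card ∧ 2 ≤ S₂.card := by
  classical
  unfold TwoConn at h
  push Not at h
  obtain ⟨x, K, hx, ⟨k, hk⟩, ⟨y, hyx, hyK⟩, hno⟩ := h
  have hxS : x.1 ∈ S := x.2
  have hkS : k.1 ∈ S := k.2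
  have hyS : y.1 ∈ S := y.2
  let K' : Set V := Subtype.val '' K
  have hK' : ∀ z : (S : Set V), z.1 ∈ K' ↔ z ∈ K := fun z => Subtype.val_injective.mem_set_image
  have hKS : ∀ z ∈ K', z ∈ S := by
    rintro _ ⟨z, -, rfl⟩
    exact z.2
  refine ⟨x.1, S.filter (fun z => z = x.1 ∨ z ∈ K'), S.filter (fun z => z ∉ K'),
    ⟨?_, ?_, ?_⟩, ?_, ?_⟩
  · intro w
    simp only [Finset.mem_filter]
    tauto
  · intro w
    simp only [Finset.mem_filter]
    constructor
    · rintro ⟨⟨_, h1⟩, _, h2⟩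
      exact h1.resolve_right h2
    · rintro rfl
      exact ⟨⟨hxS, Or.inl rfl⟩, hxS, by rwa [hK']⟩
  · intro v hv w hw hvx hwx
    simp only [Finset.mem_filter] at hv hw
    obtain ⟨v', hv', rfl⟩ := hv.2.resolve_left hvx
    have hw' : (⟨w, hw.1⟩ : (S : Set V)) ∉ K := fun H => hw.2 ((hK' _).2 H)
    exact hno v' hv' ⟨w, hw.1⟩ hw' (fun H => hwx (congrArg Subtype.val H))
  · have hne : x.1 ≠ k.1 := fun H => hx (by rw [Subtype.ext H]; exact hk)
    rw [← Finset.card_pair hne]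
    refine Finset.card_le_card ?_
    intro z hz
    simp only [Finset.mem_insert, Finset.mem_singleton] at hz
    rcases hz with rfl | rfl
    · simp [hxS]
    · exact Finset.mem_filter.2 ⟨hkS, Or.inr ((hK' k).2 hk)⟩
  · have hne : x.1 ≠ y.1 := fun H => hyx (Subtype.ext H.symm)
    rw [← Finset.card_pair hne]
    refine Finset.card_le_card ?_
    intro z hz
    simp only [Finset.mem_insert, Finset.mem_singleton] at hz
    rcases hz with rfl | rfl
    · exact Finset.mem_filter.2 ⟨hxS, by rwa [hK']⟩
    · exact Finset.mem_filter.2 ⟨hyS, by rwa [hK']⟩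

lemma hasSweep_pair {v w : V} (hvw : v ≠ w) {S : Finset V} (hS : ∀ x, x ∈ S ↔ x = v ∨ x = w) :
    HasSweep G S v 0 := by
  classical
  have hnd : [v, w].Nodup := by simpa using hvw
  refine ⟨[v, w], rfl, hnd, by simp [hS], ?_, ?_⟩
  · refine ⟨[], [], if G.Adj v w then [(v, w)] else [], [], rfl, by simp, by simp, by simp, ?_, ?_,
      ?_, ?_⟩
    · split_ifs <;> simp
    · split_ifs <;> simp
    · intro x
      split_ifs with h <;> simp only [List.mem_singleton, Prod.mk.injEq, true_and,
        List.not_mem_nil, false_iff] <;> grind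
    · refine ⟨[], if G.Adj v w then [(v, w)] else [], [], [], by simp, ?_, by simp, by simp,
        by simp, by simp, by simp, rfl⟩
      split_ifs <;> simp
  · have a1 : iD G [v, w] v = 0 := by
      simp [iD, sub_iff_left (P := []) (Q := [w]) hnd rfl]
    have a2 : oD G [v, w] w = 0 := by
      simp [oD, sub_iff_right (P := [v]) (Q := []) hnd rfl]
    have a3 : oD G [v, w] v ≤ 1 := by
      refine le_trans (Set.ncard_le_ncard (t := {w}) ?_ (Set.toFinite _)) (by simp)
      rintro a ⟨-, ha⟩
      simpa using (sub_iff_right (P := []) (Q := [w]) hnd rfl).1 ha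
    have a4 : iD G [v, w] w ≤ 1 := by
      refine le_trans (Set.ncard_le_ncard (t := {v}) ?_ (Set.toFinite _)) (by simp)
      rintro a ⟨-, ha⟩
      simpa using (sub_iff_left (P := [v]) (Q := []) hnd rfl).1 ha
    simp only [List.map_cons, List.map_nil, List.sum_cons, List.sum_nil, vcost, cst]
    rw [if_neg (by omega), if_neg (by omega)]
    omega

lemma iD_map {W : Type*} (f : W → V) (hf : Function.Injective f) (ord : List W) (v : W) :
    iD G (ord.map f) (f v) = iD (G.comap f) ord v := by
  rw [iD, iD, ← Set.ncard_image_of_injective _ hf]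
  congr 1
  ext a
  constructor
  · rintro ⟨h1, h2⟩
    obtain ⟨b, -, rfl⟩ := List.mem_map.1 h2.mem_left
    have h3 : ([b, v].map f).Sublist (ord.map f) := h2
    obtain ⟨l, hl, he⟩ := List.sublist_map_iff.1 h3
    rw [← List.map_injective_iff.2 hf he] at hl
    exact ⟨b, ⟨h1, hl⟩, rfl⟩
  · rintro ⟨b, ⟨h1, h2⟩, rfl⟩
    exact ⟨h1, h2.map f⟩

lemma oD_map {W : Type*} (f : W → V) (hf : Function.Injective f) (ord : List W) (v : W) :
    oD G (ord.map f) (f v) = oD (G.comap f) ord v := by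
  rw [oD, oD, ← Set.ncard_image_of_injective _ hf]
  congr 1
  ext a
  constructor
  · rintro ⟨h1, h2⟩
    obtain ⟨b, -, rfl⟩ := List.mem_map.1 h2.mem_right
    have h3 : ([v, b].map f).Sublist (ord.map f) := h2
    obtain ⟨l, hl, he⟩ := List.sublist_map_iff.1 h3
    rw [← List.map_injective_iff.2 hf he] at hl
    exact ⟨b, ⟨h1, hl⟩, rfl⟩
  · rintro ⟨b, ⟨h1, h2⟩, rfl⟩
    exact ⟨h1, h2.map f⟩

lemma sum_map_eq_sum_univ [Fintype V] {ord : List V} (hnd : ord.Nodup) (hall : ∀ v, v ∈ ord)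
    (f : V → ℕ) : (ord.map f).sum = ∑ v, f v := by
  classical
  rw [← List.sum_toFinset f hnd]
  congr 1
  ext v
  simpa using hall v

lemma hasSweep_of_twoConn {S : Finset V} (hp : GraphPlanar G)
    (h : TwoConn (G.induce (S : Set V))) (hS : 3 ≤ S.card) {v : V} (hv : v ∈ S) :
    HasSweep G S v (4 * S.card - 8) := by
  have hcard : Fintype.card (S : Set V) = S.card := by simp
  obtain ⟨Q, hnd, hall, hrun, hsum⟩ := TwoConn.exists_run (hp.induce (S : Set V)).cert h
    (by rw [hcard]; exact hS) ⟨v, hv⟩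
  refine ⟨(⟨v, hv⟩ :: Q).map Subtype.val, rfl, hnd.map Subtype.val_injective, ?_, ?_, ?_⟩
  · intro w
    rw [List.mem_map]
    constructor
    · rintro ⟨u, -, rfl⟩; exact u.2
    · intro hw; exact ⟨⟨w, hw⟩, hall _, rfl⟩
  · exact Run.map (R' := (G.induce (S : Set V)).Adj) Subtype.val Subtype.val_injective
      (fun _ _ => Iff.rfl) _ [] hrun
  · rw [List.map_map]
    have e : (vcost G ((⟨v, hv⟩ :: Q).map Subtype.val)) ∘ Subtype.val =
        vcost (G.induce (S : Set V)) (⟨v, hv⟩ :: Q) := by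
      funext u
      simp only [Function.comp, vcost]
      rw [iD_map _ Subtype.val_injective, oD_map _ Subtype.val_injective]
      rfl
    rw [e, sum_map_eq_sum_univ hnd hall]
    simp only [vcost]
    omega

/-- Every planar graph can be swept from any given vertex at cost `4n - 8`. Gluing two parts at a
separating vertex, where `n₁ + n₂ = n + 1`, even gives `(4n₁ - 8) + (4n₂ - 8) + 2 = 4n - 10`. -/
theorem hasSweep [Finite V] (hp : GraphPlanar G) : ∀ (n : ℕ) (S : Finset V), S.card = n →
    2 ≤ n → ∀ v ∈ S, HasSweep G S v (4 * n - 8) := by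
  intro n
  induction n using Nat.strong_induction_on with
  | _ n ih =>
    intro S hS hn v hv
    by_cases h3 : 3 ≤ n
    · by_cases h : TwoConn (G.induce (S : Set V))
      · have := hasSweep_of_twoConn hp h (by omega) hv
        rwa [hS] at this
      · obtain ⟨x, S₁, S₂, hsep, h1, h2⟩ := exists_sep h
        have key : ∀ S₁ S₂ : Finset V, Separ G S S₁ S₂ x → 2 ≤ S₁.card → 2 ≤ S₂.card → v ∈ S₁ →
            HasSweep G S v (4 * n - 8) := by
          intro S₁ S₂ hsep h1 h2 hv
          have hc := hsep.card
          obtain ⟨o, a1, a2, a3, a4, a5⟩ := HasSweep.glue hsep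
            (ih S₁.card (by omega) S₁ rfl h1 v hv)
            (ih S₂.card (by omega) S₂ rfl h2 x ((hsep.inter x).2 rfl).2)
          exact ⟨o, a1, a2, a3, a4, by omega⟩
        rcases (hsep.mem v).1 hv with h4 | h4
        · exact key S₁ S₂ hsep h1 h2 h4
        · exact key S₂ S₁ hsep.symm h2 h1 h4
    · classical
      obtain rfl : n = 2 := by omega
      obtain ⟨w, hw⟩ := Finset.card_eq_one.1 (show (S.erase v).card = 1 by
        rw [Finset.card_erase_of_mem hv, hS])
      have hw' : ∀ x, x ∈ S ↔ x = v ∨ x = w := by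
        intro x
        rw [← Finset.insert_erase hv, hw]
        simp
      have hvw : v ≠ w := by
        rintro rfl
        have : v ∈ S.erase v := by rw [hw]; simp
        simp at this
      exact hasSweep_pair hvw hw'

end Induction

lemma TwoConn.of_induce_univ {V : Type*} [Fintype V] {G : SimpleGraph V}
    (h : TwoConn (G.induce ((Finset.univ : Finset V) : Set V))) : TwoConn G := by
  intro x K hx hK hy
  obtain ⟨k, hk⟩ := hK
  obtain ⟨y, hy⟩ := hy
  obtain ⟨a, ha, b, hb⟩ := h ⟨x, by simp⟩ (Subtype.val ⁻¹' K) hx ⟨⟨k, by simp⟩, hk⟩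
    ⟨⟨y, by simp⟩, fun H => hy.1 (congrArg Subtype.val H), hy.2⟩
  exact ⟨a.1, ha, b.1, hb.1, fun H => hb.2.1 (Subtype.ext H), hb.2.2⟩

theorem octilinear_bends_le_of_deg8 {V : Type*} [Fintype V] (G : SimpleGraph V)
    (hn : 3 ≤ Fintype.card V) (hp : GraphPlanar G) (hd : MaxDegLE G 8) :
    ∃ D : OctiDrawing G, D.IsPlanar ∧ D.totalBends ≤ 4 * Fintype.card V - 10 := by
  by_cases h : TwoConn (G.induce ((Finset.univ : Finset V) : Set V))
  · exact TwoConn.exists_drawing hp.cert h.of_induce_univ hn hd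
  · obtain ⟨x, S₁, S₂, hsep, h1, h2⟩ := exists_sep h
    have hx := (hsep.inter x).2 rfl
    obtain ⟨ord, -, hnd, hmem, hrun, hcost⟩ := HasSweep.glue hsep
      (hasSweep hp _ S₁ rfl h1 x hx.1) (hasSweep hp _ S₂ rfl h2 x hx.2)
    have hall : ∀ v, v ∈ ord := fun v => (hmem v).2 (Finset.mem_univ v)
    obtain ⟨D, hD, hb⟩ := Run.exists_drawing G ord hnd hall hrun
      (fun v => by rw [iD_add_oD G ord hnd hall v]; exact hd v)
    refine ⟨D, hD, ?_⟩
    rw [sum_map_eq_sum_univ hnd hall] at hcost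
    simp only [vcost] at hcost
    have hc := hsep.card
    rw [Finset.card_univ] at hc
    omega
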